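/- (Topological Noetherianity) Let M = (M_0, M_1, M_2, …) be an increasing sequence of positive real numbers with M_0 = 1 that is logarithmically convex, satisfies ∑_{k≥0} M_k/((k+1)M_{k+1}) = ∞, and satisfies sup_{j≥1} (M_{j+1}/M_j)^{1/j} < ∞. Let U ⊆ ℂ^n be a connected open set, and for each j ≥ 1 let I_j be a finitely generated ideal of the ring C_M(U), with the corresponding zero sets forming a decreasing sequence V(I_1) ⊇ V(I_2) ⊇ ⋯ in U. Then for every compact set K ⊆ U the sequence stabilizes in a neighborhood of K: there exist an open neighborhood W of K in U and an index k such that V(I_j) ∩ W = V(I_k) ∩ W for all j ≥ k. -/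

import Mathlib

/-- The `i`-th partial derivative of a function on Euclidean space. -/
noncomputable def pd {ι : Type} [Fintype ι] [DecidableEq ι] {W : Type} [NormedAddCommGroup W]
    [NormedSpace ℝ W] (i : ι) (f : EuclideanSpace ℝ ι → W) : EuclideanSpace ℝ ι → W :=
  fun x => fderiv ℝ f x (EuclideanSpace.single i 1)

/-- The multi-index derivative `D^α f`. -/
noncomputable def mderiv {ι : Type} [Fintype ι] [DecidableEq ι] {W : Type} [NormedAddCommGroup W]
    [NormedSpace ℝ W] (α : ι → ℕ) (f : EuclideanSpace ℝ ι → W) : EuclideanSpace ℝ ι → W :=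
  (Finset.univ : Finset ι).toList.foldr (fun i g => (pd i)^[α i] g) f

/-- Membership in the real Denjoy-Carleman class `C^ℝ_M(U)`: `f` is `C^∞` on `U` and on every
compact `K ⊆ U` there are `A, B > 0` with `|(1/α!) D^α f(x)| ≤ A B^{|α|} M_{|α|}`. -/
def CRM {ι : Type} [Fintype ι] [DecidableEq ι] (M : ℕ → ℝ)
    (U : Set (EuclideanSpace ℝ ι)) (f : EuclideanSpace ℝ ι → ℝ) : Prop :=
  ContDiffOn ℝ (⊤ : ℕ∞) f U ∧
  ∀ K : Set (EuclideanSpace ℝ ι), K ⊆ U → IsCompact K →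
    ∃ A B : ℝ, 0 < A ∧ 0 < B ∧ ∀ x ∈ K, ∀ α : ι → ℕ,
      (1 / (∏ i, ((α i).factorial : ℝ))) * |mderiv α f x| ≤
        A * B ^ (∑ i, α i) * M (∑ i, α i)

/-- Membership in the complex-valued Denjoy-Carleman class `C_M(U)`:
`f = g + ih` with `g, h ∈ C^ℝ_M(U)`. -/
def CMc {ι : Type} [Fintype ι] [DecidableEq ι] (M : ℕ → ℝ)
    (U : Set (EuclideanSpace ℝ ι)) (f : EuclideanSpace ℝ ι → ℂ) : Prop :=
  CRM M U (fun x => (f x).re) ∧ CRM M U (fun x => (f x).im)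

/-!
Taking `∑ |f|²` over generators, it suffices to treat decreasing sequences of zero sets of single
functions `g j` of the class, and, by compactness, to work near a point. The argument is an
induction on the dimension. If no `g j` has a nonzero germ at the point, all of them vanish near it.
Otherwise one `g j₀` has a nonzero germ, and a weak form of resolution of singularities (Bierstone,
Milman) covers a neighbourhood by finitely many compact images of maps of the class, in the source
of which `g j₀` is a monomial times a unit. The zeros of such a function lie in finitely many
coordinate hyperplanes, where the induction hypothesis applies to the later `g j`.

The resolution is again an induction on the dimension and, inside it, on the order `d` of vanishing
along a coordinate `y`. This order is finite because a quasianalytic function with a nonzero germ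
has a nonzero derivative in some direction. The implicit function theorem moves the zeros of the
`(d - 1)`-st derivative to `y = 0`, so that `g = ∑ i < d - 1, A i * y ^ i + y ^ d * u` with a
unit `u`. Resolving the product of the `A i`, together with a sum of squares of suitable powers of
them, makes the `A i` monomials, one of which dominates. After a power substitution, blowing up this
monomial against `y` lowers the order.
-/

namespace DenjoyCarleman

open Set Filter Topology
open scoped ContDiff Nat

/-! ### Weight sequences -/

/-- A normalized, increasing, logarithmically convex weight sequence `M`, the parameter of a
Denjoy-Carleman class. -/
class IsWeightSequence (M : ℕ → ℝ) : Prop where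
  zero_eq_one : M 0 = 1
  monotone : Monotone M
  ratio_le_ratio_succ : ∀ j, M (j + 1) / M j ≤ M (j + 2) / M (j + 1)

/-- A weight sequence whose Denjoy-Carleman class is stable under differentiation. -/
class IsDerivationClosed (M : ℕ → ℝ) : Prop extends IsWeightSequence M where
  exists_root_ratio_le : ∃ C : ℝ, ∀ j : ℕ, 1 ≤ j → (M (j + 1) / M j) ^ ((1 : ℝ) / j) ≤ C

/-- A weight sequence satisfying the Denjoy-Carleman condition. With `M k` standing for
`m k / k !`, the general term is `m k / m (k + 1)`. -/
class IsQuasianalytic (M : ℕ → ℝ) : Prop extends IsWeightSequence M where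
  tsum_eq_top : ∑' k : ℕ, ENNReal.ofReal (M k / (((k : ℝ) + 1) * M (k + 1))) = ⊤

section OrderedFinpartition

theorem sum_orderedFinpartition_succ {R : Type*} [AddCommMonoid R] (n : ℕ)
    (w : OrderedFinpartition (n + 1) → R) :
    ∑ c, w c = ∑ c : OrderedFinpartition n, (w c.extendLeft + ∑ i, w (c.extendMiddle i)) := by
  rw [← (OrderedFinpartition.extendEquiv n).sum_comp, Fintype.sum_sigma]
  refine Finset.sum_congr rfl fun c _ => ?_
  rw [Fintype.sum_option]
  rfl

theorem sum_partSize {n : ℕ} (c : OrderedFinpartition n) : ∑ i, (c.partSize i : ℝ) = n := by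
  simpa using c.sum_sigma_eq_sum (fun _ => (1 : ℝ))

/-- The contribution of the ordered partition `c` to the `n`-th derivative of `g ∘ f` in the
Faà di Bruno formula, when `G l` and `F s` bound the `l`-th derivative of `g` and the `s`-th
derivative of `f`. -/
noncomputable def partitionWeight (G F : ℕ → ℝ) {n : ℕ} (c : OrderedFinpartition n) : ℝ :=
  G c.length * ∏ i, F (c.partSize i)

theorem partitionWeight_extendLeft (G F : ℕ → ℝ) {n : ℕ} (c : OrderedFinpartition n) :
    partitionWeight G F c.extendLeft = G (c.length + 1) * F 1 * ∏ i, F (c.partSize i) := by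
  change G (c.length + 1) * ∏ i : Fin (c.length + 1),
    F ((Fin.cons 1 c.partSize : Fin (c.length + 1) → ℕ) i) = _
  rw [Fin.prod_univ_succ]
  simp [mul_assoc]

theorem partitionWeight_extendMiddle (G F : ℕ → ℝ) {n : ℕ} (c : OrderedFinpartition n)
    (k : Fin c.length) :
    partitionWeight G F (c.extendMiddle k) =
      G c.length * (F (c.partSize k + 1) * ∏ i ∈ Finset.univ.erase k, F (c.partSize i)) := by
  change G c.length * ∏ i : Fin c.length,
    F (Function.update c.partSize k (c.partSize k + 1) i) = _
  rw [← Finset.mul_prod_erase _ _ (Finset.mem_univ k), Function.update_self]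
  congr 2
  refine Finset.prod_congr rfl fun i hi => ?_
  rw [Function.update_of_ne (Finset.ne_of_mem_erase hi)]

theorem partitionWeight_eq_mul_erase (G F : ℕ → ℝ) {n : ℕ} (c : OrderedFinpartition n)
    (k : Fin c.length) :
    partitionWeight G F c =
      G c.length * (F (c.partSize k) * ∏ i ∈ Finset.univ.erase k, F (c.partSize i)) := by
  rw [partitionWeight, Finset.mul_prod_erase _ (fun i => F (c.partSize i)) (Finset.mem_univ k)]

theorem partitionWeight_nonneg {G F : ℕ → ℝ} (hG : ∀ l, 0 ≤ G l) (hF : ∀ s, 0 ≤ F s) {n : ℕ}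
    (c : OrderedFinpartition n) : 0 ≤ partitionWeight G F c :=
  mul_nonneg (hG _) (Finset.prod_nonneg fun _ _ => hF _)

theorem sum_partitionWeight_zero (G F : ℕ → ℝ) :
    ∑ c : OrderedFinpartition 0, partitionWeight G F c = G 0 := by
  rw [Fintype.sum_unique]
  change G 0 * ∏ i : Fin 0, _ = _
  simp

theorem sum_partitionWeight_succ_le {G F : ℕ → ℝ} (hG : ∀ l, 0 ≤ G l) (hF : ∀ s, 0 ≤ F s)
    {a b e : ℝ} (hGsucc : ∀ l, G (l + 1) * F 1 ≤ a * (l + 1) * G l)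
    (hFsucc : ∀ s, 1 ≤ s → F (s + 1) ≤ (b * s + e) * F s) (n : ℕ) :
    ∑ c : OrderedFinpartition (n + 1), partitionWeight G F c ≤
      ∑ c : OrderedFinpartition n,
        partitionWeight G F c * (a * (c.length + 1) + b * n + e * c.length) := by
  rw [sum_orderedFinpartition_succ]
  refine Finset.sum_le_sum fun c _ => ?_
  have hleft : partitionWeight G F c.extendLeft ≤ partitionWeight G F c * (a * (c.length + 1)) :=
    calc partitionWeight G F c.extendLeft
        ≤ a * (c.length + 1) * G c.length * ∏ i, F (c.partSize i) := by
          rw [partitionWeight_extendLeft]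
          exact mul_le_mul_of_nonneg_right (hGsucc _) (Finset.prod_nonneg fun _ _ => hF _)
      _ = _ := by rw [partitionWeight]; ring
  have hmiddle (k) : partitionWeight G F (c.extendMiddle k) ≤
      partitionWeight G F c * (b * c.partSize k + e) :=
    calc partitionWeight G F (c.extendMiddle k)
        ≤ G c.length * (((b * c.partSize k + e) * F (c.partSize k)) *
            ∏ i ∈ Finset.univ.erase k, F (c.partSize i)) := by
          rw [partitionWeight_extendMiddle]
          exact mul_le_mul_of_nonneg_left (mul_le_mul_of_nonneg_right
            (hFsucc _ (c.partSize_pos k)) (Finset.prod_nonneg fun _ _ => hF _)) (hG _)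
      _ = _ := by rw [partitionWeight_eq_mul_erase G F c k]; ring
  calc _ ≤ partitionWeight G F c * (a * (c.length + 1)) +
        ∑ k, partitionWeight G F c * (b * c.partSize k + e) :=
        add_le_add hleft (Finset.sum_le_sum fun k _ => hmiddle k)
    _ = _ := by
        rw [← Finset.mul_sum, Finset.sum_add_distrib, ← Finset.mul_sum, sum_partSize,
          Finset.sum_const, Finset.card_univ, Fintype.card_fin, nsmul_eq_mul]
        ring

theorem sum_partitionWeight_pow_mul_factorial_le {X : ℝ} (hX : 0 ≤ X) (n : ℕ) :
    ∑ c : OrderedFinpartition n, partitionWeight (fun l => X ^ l * l !) (fun s => (s ! : ℝ)) c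
      ≤ (X + 2) ^ n * n ! := by
  have hG (l : ℕ) : 0 ≤ X ^ l * (l ! : ℝ) := by positivity
  have hF (s : ℕ) : (0 : ℝ) ≤ s ! := by positivity
  induction n with
  | zero => rw [sum_partitionWeight_zero]; simp
  | succ n ih =>
    refine (sum_partitionWeight_succ_le hG hF (a := X) (b := 1) (e := 1)
      (fun l => ?_) (fun s _ => ?_) n).trans ?_
    · refine le_of_eq ?_
      rw [Nat.factorial_succ]; push_cast; simp only [Nat.factorial_one, Nat.cast_one]; ring
    · rw [Nat.factorial_succ]; push_cast; rw [one_mul]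
    · calc _ ≤ ∑ c : OrderedFinpartition n,
            partitionWeight (fun l => X ^ l * l !) (fun s => (s ! : ℝ)) c *
              ((X + 2) * (n + 1)) := by
            refine Finset.sum_le_sum fun c _ =>
              mul_le_mul_of_nonneg_left ?_ (partitionWeight_nonneg hG hF c)
            have : (c.length : ℝ) ≤ n := mod_cast c.length_le
            nlinarith
        _ ≤ ((X + 2) ^ n * n !) * ((X + 2) * (n + 1)) := by
            rw [← Finset.sum_mul]; gcongr
        _ = _ := by rw [Nat.factorial_succ]; push_cast; ring

/-- For `s ≥ 1`, the `s`-th derivative at `0` of the solution `(1 - √(1 - 2 A B t)) / B` of the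
majorizing equation `y' = A / (1 - B y)`, `y 0 = 0`. -/
noncomputable def odeMajorant (A B : ℝ) (s : ℕ) : ℝ :=
  A * ∏ j ∈ Finset.range (s - 1), (A * B * (2 * j + 1))

theorem odeMajorant_nonneg {A B : ℝ} (hA : 0 ≤ A) (hB : 0 ≤ B) (s : ℕ) :
    0 ≤ odeMajorant A B s :=
  mul_nonneg hA (Finset.prod_nonneg fun _ _ => by positivity)

theorem odeMajorant_succ (A B : ℝ) {s : ℕ} (hs : 1 ≤ s) :
    odeMajorant A B (s + 1) = (A * B * (2 * s - 1)) * odeMajorant A B s := by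
  obtain ⟨s, rfl⟩ := Nat.exists_eq_add_of_le' hs
  simp only [odeMajorant, Nat.add_sub_cancel, Finset.prod_range_succ]
  push_cast; ring

theorem sum_partitionWeight_odeMajorant_le {A B : ℝ} (hA : 0 ≤ A) (hB : 0 ≤ B) (n : ℕ) :
    ∑ c : OrderedFinpartition n, partitionWeight (fun l => A * B ^ l * l !) (odeMajorant A B) c ≤
      odeMajorant A B (n + 1) := by
  have hG (l : ℕ) : 0 ≤ A * B ^ l * (l ! : ℝ) := by positivity
  induction n with
  | zero => rw [sum_partitionWeight_zero]; simp [odeMajorant]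
  | succ n ih =>
    refine (sum_partitionWeight_succ_le hG (odeMajorant_nonneg hA hB) (a := A * B)
      (b := 2 * A * B) (e := -(A * B)) (fun l => ?_) (fun s hs => ?_) n).trans ?_
    · refine le_of_eq ?_
      rw [Nat.factorial_succ]; push_cast
      simp only [odeMajorant, Nat.sub_self, Finset.range_zero, Finset.prod_empty]; ring
    · rw [odeMajorant_succ _ _ hs]; exact le_of_eq (by ring)
    · rw [odeMajorant_succ _ _ (Nat.le_add_left 1 n)]
      calc _ = (A * B * (2 * (n + 1 : ℕ) - 1)) * ∑ c : OrderedFinpartition n,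
            partitionWeight (fun l => A * B ^ l * l !) (odeMajorant A B) c := by
            rw [Finset.mul_sum]
            refine Finset.sum_congr rfl fun c _ => ?_
            push_cast; ring
        _ ≤ _ := mul_le_mul_of_nonneg_left ih
            (mul_nonneg (mul_nonneg hA hB) (by push_cast; linarith [n.cast_nonneg (α := ℝ)]))

theorem odeMajorant_le {A B : ℝ} (hA : 0 ≤ A) (hB : 0 ≤ B) (s : ℕ) :
    odeMajorant A B s ≤ A * (2 * A * B + 1) ^ s * s ! := by
  rcases Nat.eq_zero_or_pos s with rfl | hs
  · simp [odeMajorant]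
  induction s, hs using Nat.le_induction with
  | base =>
    simp only [odeMajorant, Nat.succ_eq_add_one, zero_add, Nat.sub_self, Finset.range_zero,
      Finset.prod_empty, pow_one, Nat.factorial_one, Nat.cast_one, mul_one]
    nlinarith [mul_nonneg (mul_nonneg hA hA) hB]
  | succ s hs ih =>
    have hs1 : (1 : ℝ) ≤ s := mod_cast hs
    have hAB : 0 ≤ A * B := mul_nonneg hA hB
    rw [odeMajorant_succ _ _ hs]
    calc _ ≤ (A * B * (2 * s - 1)) * (A * (2 * A * B + 1) ^ s * s !) :=
          mul_le_mul_of_nonneg_left ih (mul_nonneg hAB (by linarith))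
      _ ≤ ((2 * A * B + 1) * (s + 1)) * (A * (2 * A * B + 1) ^ s * s !) :=
          mul_le_mul_of_nonneg_right (by nlinarith) (by positivity)
      _ = _ := by rw [Nat.factorial_succ s]; push_cast; ring

end OrderedFinpartition

namespace IsWeightSequence
variable {M : ℕ → ℝ} [IsWeightSequence M]

theorem pos (k : ℕ) : 0 < M k :=
  one_pos.trans_le ((zero_eq_one (M := M)).symm.trans_le (monotone (Nat.zero_le k)))

theorem ratio_monotone : Monotone fun j => M (j + 1) / M j :=
  monotone_nat_of_le_succ ratio_le_ratio_succ

theorem succ_mul_le {k n : ℕ} (h : k ≤ n) : M (k + 1) * M n ≤ M (n + 1) * M k :=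
  (div_le_div_iff₀ (pos k) (pos n)).1 (ratio_monotone h)

theorem partitionWeight_extendLeft_le {n : ℕ} {c : OrderedFinpartition n} {X : ℝ}
    (hc : partitionWeight M M c ≤ X * M n) :
    partitionWeight M M c.extendLeft ≤ X * M 1 * M (n + 1) := by
  have hP : 0 ≤ ∏ i, M (c.partSize i) := Finset.prod_nonneg fun _ _ => (pos _).le
  rw [partitionWeight_extendLeft]
  refine le_of_mul_le_mul_right ?_ (pos (M := M) n)
  calc M (c.length + 1) * M 1 * (∏ i, M (c.partSize i)) * M n
      = M 1 * (M (c.length + 1) * M n) * ∏ i, M (c.partSize i) := by ring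
    _ ≤ M 1 * (M (n + 1) * M c.length) * ∏ i, M (c.partSize i) :=
        mul_le_mul_of_nonneg_right
          (mul_le_mul_of_nonneg_left (succ_mul_le c.length_le) (pos 1).le) hP
    _ = M 1 * M (n + 1) * partitionWeight M M c := by rw [partitionWeight]; ring
    _ ≤ M 1 * M (n + 1) * (X * M n) :=
        mul_le_mul_of_nonneg_left hc (mul_pos (pos 1) (pos _)).le
    _ = _ := by ring

theorem partitionWeight_extendMiddle_le {n : ℕ} {c : OrderedFinpartition n} {X : ℝ}
    (hc : partitionWeight M M c ≤ X * M n) (k : Fin c.length) :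
    partitionWeight M M (c.extendMiddle k) ≤ X * M (n + 1) := by
  have hP : 0 ≤ ∏ i ∈ Finset.univ.erase k, M (c.partSize i) :=
    Finset.prod_nonneg fun _ _ => (pos _).le
  have hlen := pos (M := M) c.length
  rw [partitionWeight_extendMiddle]
  refine le_of_mul_le_mul_right ?_ (pos (M := M) n)
  calc _ = (M (c.partSize k + 1) * M n) *
          (M c.length * ∏ i ∈ Finset.univ.erase k, M (c.partSize i)) := by ring
    _ ≤ (M (n + 1) * M (c.partSize k)) *
          (M c.length * ∏ i ∈ Finset.univ.erase k, M (c.partSize i)) :=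
        mul_le_mul_of_nonneg_right (succ_mul_le (c.partSize_le k)) (mul_nonneg hlen.le hP)
    _ = M (n + 1) * partitionWeight M M c := by rw [partitionWeight_eq_mul_erase M M c k]; ring
    _ ≤ M (n + 1) * (X * M n) := mul_le_mul_of_nonneg_left hc (pos _).le
    _ = _ := by ring

theorem partitionWeight_le {n : ℕ} (c : OrderedFinpartition n) :
    partitionWeight M M c ≤ M 1 ^ c.length * M n := by
  induction n with
  | zero =>
    obtain rfl : c = default := Subsingleton.elim _ _
    change M 0 * ∏ i : Fin 0, _ ≤ M 1 ^ 0 * M 0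
    simp
  | succ n ih =>
    obtain ⟨⟨c, o⟩, rfl⟩ := (OrderedFinpartition.extendEquiv n).surjective c
    cases o with
    | none => exact partitionWeight_extendLeft_le (ih c)
    | some k => exact partitionWeight_extendMiddle_le (ih c) k

end IsWeightSequence

theorem IsDerivationClosed.exists_succ_le (M : ℕ → ℝ) [IsDerivationClosed M] :
    ∃ C : ℝ, 0 < C ∧ ∀ k, M (k + 1) ≤ C ^ (k + 1) * M k := by
  obtain ⟨C, hC⟩ := exists_root_ratio_le (M := M)
  refine ⟨max (max C 1) (M 1), by positivity, fun k => ?_⟩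
  have hk : 0 < M k := IsWeightSequence.pos k
  rcases Nat.eq_zero_or_pos k with rfl | h
  · simp [IsWeightSequence.zero_eq_one (M := M)]
  have hr : 0 ≤ M (k + 1) / M k := (div_pos (IsWeightSequence.pos _) hk).le
  have hC0 : 0 ≤ C := (Real.rpow_nonneg hr _).trans (hC k h)
  have hratio : M (k + 1) / M k ≤ C ^ k := by
    have := pow_le_pow_left₀ (Real.rpow_nonneg hr _) (hC k h) k
    rwa [one_div, Real.rpow_inv_natCast_pow hr h.ne'] at this
  calc M (k + 1) ≤ C ^ k * M k := (div_le_iff₀ hk).1 hratio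
    _ ≤ max (max C 1) (M 1) ^ k * M k := by gcongr; simp
    _ ≤ max (max C 1) (M 1) ^ (k + 1) * M k := by gcongr <;> simp

/-! ### Germs of maps of Denjoy-Carleman class -/

/-- `CMAt M f a`: the germ of `f` at `a` is of Denjoy-Carleman class `M`. For maps between normed
spaces the multi-index derivatives are replaced by the operator norms of `iteratedFDeriv`. -/
def CMAt (M : ℕ → ℝ) {E F : Type*} [NormedAddCommGroup E] [NormedSpace ℝ E]
    [NormedAddCommGroup F] [NormedSpace ℝ F] (f : E → F) (a : E) : Prop :=
  ∃ A B : ℝ, 0 < A ∧ 0 < B ∧ ∀ᶠ x in 𝓝 a, ContDiffAt ℝ ∞ f x ∧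
    ∀ k : ℕ, ‖iteratedFDeriv ℝ k f x‖ ≤ A * B ^ k * k ! * M k

section Germ
variable {M : ℕ → ℝ} {E F G H : Type*} [NormedAddCommGroup E] [NormedSpace ℝ E]
  [NormedAddCommGroup F] [NormedSpace ℝ F] [NormedAddCommGroup G] [NormedSpace ℝ G]
  [NormedAddCommGroup H] [NormedSpace ℝ H]

namespace CMAt
variable {f : E → F} {a : E}

theorem contDiffAt (h : CMAt M f a) : ContDiffAt ℝ ∞ f a :=
  let ⟨_, _, _, _, h⟩ := h
  h.self_of_nhds.1

theorem continuousAt (h : CMAt M f a) : ContinuousAt f a :=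
  h.contDiffAt.continuousAt

theorem differentiableAt (h : CMAt M f a) : DifferentiableAt ℝ f a :=
  h.contDiffAt.differentiableAt (by simp)

theorem eventually (h : CMAt M f a) : ∀ᶠ x in 𝓝 a, CMAt M f x := by
  obtain ⟨A, B, hA, hB, h⟩ := h
  filter_upwards [h.eventually_nhds] with x hx using ⟨A, B, hA, hB, hx⟩

theorem congr {g : E → F} (h : CMAt M f a) (e : g =ᶠ[𝓝 a] f) : CMAt M g a := by
  obtain ⟨A, B, hA, hB, h⟩ := h
  refine ⟨A, B, hA, hB, ?_⟩
  filter_upwards [h, e.eventuallyEq_nhds] with x hx ex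
  refine ⟨hx.1.congr_of_eventuallyEq ex, fun k => ?_⟩
  rw [(ex.iteratedFDeriv ℝ k).eq_of_nhds]
  exact hx.2 k

end CMAt

theorem norm_iteratedFDeriv_comp_le {g : F → G} {f : E → F} {x : E}
    (hg : ContDiffAt ℝ ∞ g (f x)) (hf : ContDiffAt ℝ ∞ f x) (n : ℕ) :
    ‖iteratedFDeriv ℝ n (g ∘ f) x‖ ≤ ∑ c : OrderedFinpartition n,
      ‖iteratedFDeriv ℝ c.length g (f x)‖ * ∏ i, ‖iteratedFDeriv ℝ (c.partSize i) f x‖ := by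
  rw [iteratedFDeriv_comp hg hf (mod_cast le_top)]
  exact (norm_sum_le _ _).trans (Finset.sum_le_sum fun c _ =>
    c.norm_compAlongOrderedFinpartition_le _ _)

theorem eventually_norm_lt_add_one {X N : Type*} [TopologicalSpace X] [SeminormedAddCommGroup N]
    {f : X → N} {a : X}
    (h : ContinuousAt f a) : ∀ᶠ x in 𝓝 a, ‖f x‖ < ‖f a‖ + 1 :=
  h.norm.eventually_lt continuousAt_const (by simp)

variable [IsWeightSequence M]

theorem norm_iteratedFDeriv_comp_le_sum_partitionWeight {g : F → G} {f : E → F} {x : E}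
    (hg : ContDiffAt ℝ ∞ g (f x)) (hf : ContDiffAt ℝ ∞ f x) {n : ℕ} {P Q : ℕ → ℝ}
    (hP : ∀ l, ‖iteratedFDeriv ℝ l g (f x)‖ ≤ M l * P l)
    (hQ : ∀ s, 1 ≤ s → s ≤ n → ‖iteratedFDeriv ℝ s f x‖ ≤ M s * Q s) (hQ0 : ∀ s, 0 ≤ Q s) :
    ‖iteratedFDeriv ℝ n (g ∘ f) x‖ ≤
      M n * ∑ c : OrderedFinpartition n, partitionWeight (fun l => M 1 ^ l * P l) Q c := by
  have hM : ∀ k, 0 < M k := IsWeightSequence.pos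
  have hP0 (l) : 0 ≤ P l := nonneg_of_mul_nonneg_right ((norm_nonneg _).trans (hP l)) (hM l)
  refine (norm_iteratedFDeriv_comp_le hg hf n).trans ?_
  rw [Finset.mul_sum]
  refine Finset.sum_le_sum fun c _ => ?_
  calc ‖iteratedFDeriv ℝ c.length g (f x)‖ * ∏ i, ‖iteratedFDeriv ℝ (c.partSize i) f x‖
      ≤ (M c.length * P c.length) * ∏ i, (M (c.partSize i) * Q (c.partSize i)) :=
        mul_le_mul (hP _)
          (Finset.prod_le_prod (fun _ _ => norm_nonneg _) fun i _ =>
            hQ _ (c.partSize_pos i) (c.partSize_le i))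
          (Finset.prod_nonneg fun _ _ => norm_nonneg _) (mul_nonneg (hM _).le (hP0 _))
    _ = (P c.length * ∏ i, Q (c.partSize i)) * partitionWeight M M c := by
        rw [Finset.prod_mul_distrib, partitionWeight]; ring
    _ ≤ (P c.length * ∏ i, Q (c.partSize i)) * (M 1 ^ c.length * M n) :=
        mul_le_mul_of_nonneg_left (IsWeightSequence.partitionWeight_le c)
          (mul_nonneg (hP0 _) (Finset.prod_nonneg fun _ _ => hQ0 _))
    _ = _ := by simp only [partitionWeight]; ring

theorem contDiffAt_of_fderiv_eq_comp {f : E → F} {S : F → (E →L[ℝ] F)} {a : E}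
    (hf : ∀ᶠ x in 𝓝 a, DifferentiableAt ℝ f x) (hS : ∀ᶠ y in 𝓝 (f a), ContDiffAt ℝ ∞ S y)
    (he : ∀ᶠ x in 𝓝 a, fderiv ℝ f x = S (f x)) : ContDiffAt ℝ ∞ f a := by
  obtain ⟨V, hV, hVo, haV⟩ := eventually_nhds_iff.1
    (hf.and ((hf.self_of_nhds.continuousAt.eventually hS).and he))
  have hcont (n : ℕ) : ContDiffOn ℝ n f V := by
    induction n with
    | zero =>
      exact contDiffOn_zero.2 fun x hx => (hV x hx).1.continuousAt.continuousWithinAt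
    | succ n ih =>
      push_cast
      refine (contDiffOn_succ_iff_fderiv_of_isOpen hVo).2
        ⟨fun x hx => (hV x hx).1.differentiableWithinAt, by simp, ?_⟩
      have hSf : ContDiffOn ℝ n (S ∘ f) V := fun x hx =>
        ((hV x hx).2.1.of_le (mod_cast le_top)).comp_contDiffWithinAt x (ih x hx)
      exact hSf.congr fun x hx => (hV x hx).2.2
  exact (contDiffOn_infty.2 hcont).contDiffAt (hVo.mem_nhds haV)

namespace CMAt
variable {f : E → F} {a : E}

theorem bound_mono {A A' B B' : ℝ} (hA : 0 ≤ A) (hB : 0 ≤ B) (hA' : A ≤ A') (hB' : B ≤ B')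
    (k : ℕ) : A * B ^ k * k ! * M k ≤ A' * B' ^ k * k ! * M k := by
  have : 0 < M k := IsWeightSequence.pos k
  have : 0 ≤ A' := hA.trans hA'
  gcongr

theorem of_bound (A B : ℝ) (h : ∀ᶠ x in 𝓝 a, ContDiffAt ℝ ∞ f x ∧
    ∀ k : ℕ, ‖iteratedFDeriv ℝ k f x‖ ≤ A * B ^ k * k ! * M k) : CMAt M f a := by
  refine ⟨|A| + 1, |B| + 1, by positivity, by positivity, ?_⟩
  filter_upwards [h] with x hx
  refine ⟨hx.1, fun k => ?_⟩
  have hMk : 0 ≤ M k := (IsWeightSequence.pos k).le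
  calc ‖iteratedFDeriv ℝ k f x‖ ≤ A * B ^ k * k ! * M k := hx.2 k
    _ ≤ |A| * |B| ^ k * k ! * M k := by
        rw [← abs_pow]
        gcongr ?_ * _ * _
        exact (le_abs_self _).trans_eq (abs_mul _ _)
    _ ≤ _ := bound_mono (abs_nonneg A) (abs_nonneg B) (le_add_of_nonneg_right zero_le_one)
        (le_add_of_nonneg_right zero_le_one) k

theorem of_fderiv (hf : ∀ᶠ x in 𝓝 a, ContDiffAt ℝ ∞ f x) (h : CMAt M (_root_.fderiv ℝ f) a) :
    CMAt M f a := by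
  obtain ⟨A, B, hA, hB, h⟩ := h
  refine of_bound (‖f a‖ + 1 + A) (B + 1) ?_
  filter_upwards [h, hf, eventually_norm_lt_add_one hf.self_of_nhds.continuousAt] with x hx hfx hbx
  refine ⟨hfx, fun k => ?_⟩
  rcases k with _ | k
  · rw [norm_iteratedFDeriv_zero, IsWeightSequence.zero_eq_one (M := M)]
    simp only [pow_zero, Nat.factorial_zero, Nat.cast_one, mul_one]
    linarith
  · have hMk : 0 < M k := IsWeightSequence.pos k
    have hfac : (k ! : ℝ) ≤ ((k + 1)! : ℕ) := mod_cast Nat.factorial_le k.le_succ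
    rw [← norm_iteratedFDeriv_fderiv]
    calc _ ≤ A * B ^ k * k ! * M k := hx.2 k
      _ ≤ (‖f a‖ + 1 + A) * (B + 1) ^ (k + 1) * (k + 1)! * M (k + 1) := by
        gcongr ?_ * ?_ * ?_ * ?_
        · linarith [norm_nonneg (f a)]
        · calc B ^ k ≤ (B + 1) ^ k := by gcongr; linarith
            _ ≤ (B + 1) ^ (k + 1) := pow_le_pow_right₀ (by linarith) k.le_succ
        · exact IsWeightSequence.monotone k.le_succ

theorem const (c : F) (a : E) : CMAt M (fun _ : E => c) a := by
  refine of_bound ‖c‖ 1 (Eventually.of_forall fun x => ⟨contDiffAt_const, fun k => ?_⟩)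
  rcases k with _ | k
  · simp [IsWeightSequence.zero_eq_one (M := M)]
  · have : 0 < M (k + 1) := IsWeightSequence.pos _
    rw [iteratedFDeriv_const_of_ne (by omega), Pi.zero_apply, norm_zero]
    positivity

theorem of_clm (L : E →L[ℝ] F) (a : E) : CMAt M (fun x => L x) a := by
  refine of_fderiv (Eventually.of_forall fun x => L.contDiff.contDiffAt) ?_
  have hL : _root_.fderiv ℝ (fun x => L x) = fun _ => L := funext fun _ => L.fderiv
  rw [hL]
  exact const _ _

theorem id (a : E) : CMAt M (fun x : E => x) a := of_clm (ContinuousLinearMap.id ℝ E) a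

theorem comp {g : F → G} (hg : CMAt M g (f a)) (hf : CMAt M f a) :
    CMAt M (fun x => g (f x)) a := by
  have hfc := hf.continuousAt
  obtain ⟨A, B, hA, hB, hg⟩ := hg
  obtain ⟨A', B', hA', hB', hf⟩ := hf
  have hM : ∀ k, 0 < M k := IsWeightSequence.pos
  set X := B * A' * M 1
  have hX : 0 ≤ X := mul_nonneg (mul_pos hB hA').le (hM 1).le
  refine of_bound A (B' * (X + 2)) ?_
  filter_upwards [hf, hfc.eventually hg] with x hfx hgx
  refine ⟨hgx.1.comp x hfx.1, fun n => ?_⟩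
  have hweight (c : OrderedFinpartition n) :
      partitionWeight (fun l => M 1 ^ l * (A * B ^ l * l !)) (fun s => A' * B' ^ s * s !) c =
        A * B' ^ n * partitionWeight (fun l => X ^ l * l !) (fun s => (s ! : ℝ)) c := by
    have hsum : ∑ i, c.partSize i = n := mod_cast sum_partSize c
    simp only [partitionWeight, Finset.prod_mul_distrib, Finset.prod_const, Finset.card_univ,
      Fintype.card_fin, Finset.prod_pow_eq_pow_sum, hsum, X, mul_pow]
    ring
  calc ‖iteratedFDeriv ℝ n (g ∘ f) x‖
      ≤ M n * ∑ c : OrderedFinpartition n,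
          partitionWeight (fun l => M 1 ^ l * (A * B ^ l * l !)) (fun s => A' * B' ^ s * s !) c :=
        norm_iteratedFDeriv_comp_le_sum_partitionWeight hgx.1 hfx.1
          (fun l => (hgx.2 l).trans_eq (mul_comm _ _))
          (fun s _ _ => (hfx.2 s).trans_eq (mul_comm _ _)) (fun s => by positivity)
    _ = M n * (A * B' ^ n * ∑ c : OrderedFinpartition n,
          partitionWeight (fun l => X ^ l * l !) (fun s => (s ! : ℝ)) c) := by
        rw [Finset.sum_congr rfl fun c _ => hweight c, ← Finset.mul_sum]
    _ ≤ M n * (A * B' ^ n * ((X + 2) ^ n * n !)) :=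
        mul_le_mul_of_nonneg_left (mul_le_mul_of_nonneg_left
          (sum_partitionWeight_pow_mul_factorial_le hX n) (by positivity)) (hM n).le
    _ = _ := by rw [mul_pow]; ring

theorem comp_of_eq {g : F → G} {b : F} (hg : CMAt M g b) (hf : CMAt M f a) (hb : f a = b) :
    CMAt M (fun x => g (f x)) a :=
  comp (hb ▸ hg) hf

theorem norm_iteratedFDeriv_le_odeMajorant {S : F → (E →L[ℝ] F)} {x : E} {A B : ℝ}
    (hA : 0 ≤ A) (hB : 0 ≤ B) (hf : ContDiffAt ℝ ∞ f x) (hS : ContDiffAt ℝ ∞ S (f x))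
    (hSx : ∀ k : ℕ, ‖iteratedFDeriv ℝ k S (f x)‖ ≤ A * B ^ k * k ! * M k)
    (he : _root_.fderiv ℝ f =ᶠ[𝓝 x] S ∘ f) {s : ℕ} (hs : 1 ≤ s) :
    ‖iteratedFDeriv ℝ s f x‖ ≤ M s * odeMajorant A (B * M 1) s := by
  have hM : ∀ k, 0 < M k := IsWeightSequence.pos
  have hBM : 0 ≤ B * M 1 := mul_nonneg hB (hM 1).le
  induction s using Nat.strong_induction_on with
  | _ s ih =>
    obtain ⟨n, rfl⟩ := Nat.exists_eq_add_of_le' hs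
    have hweight : (fun l => M 1 ^ l * (A * B ^ l * l !)) =
        fun l : ℕ => A * (B * M 1) ^ l * (l ! : ℝ) := by
      funext l; rw [mul_pow]; ring
    calc ‖iteratedFDeriv ℝ (n + 1) f x‖ = ‖iteratedFDeriv ℝ n (S ∘ f) x‖ := by
          rw [← norm_iteratedFDeriv_fderiv, (he.iteratedFDeriv ℝ n).eq_of_nhds]
      _ ≤ M n * ∑ c : OrderedFinpartition n, partitionWeight
            (fun l => M 1 ^ l * (A * B ^ l * l !)) (odeMajorant A (B * M 1)) c :=
          norm_iteratedFDeriv_comp_le_sum_partitionWeight hS hf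
            (fun l => (hSx l).trans_eq (mul_comm _ _))
            (fun s hs hsn => ih s (Nat.lt_succ_of_le hsn) hs) (odeMajorant_nonneg hA hBM)
      _ ≤ M n * odeMajorant A (B * M 1) (n + 1) := by
          rw [hweight]
          exact mul_le_mul_of_nonneg_left (sum_partitionWeight_odeMajorant_le hA hBM n) (hM n).le
      _ ≤ _ := mul_le_mul_of_nonneg_right (IsWeightSequence.monotone n.le_succ)
          (odeMajorant_nonneg hA hBM _)

theorem of_fderiv_eq_comp {S : F → (E →L[ℝ] F)} (hf : ∀ᶠ x in 𝓝 a, DifferentiableAt ℝ f x)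
    (hS : CMAt M S (f a)) (he : ∀ᶠ x in 𝓝 a, _root_.fderiv ℝ f x = S (f x)) : CMAt M f a := by
  have hfc := hf.self_of_nhds.continuousAt
  have hSsmooth : ∀ᶠ x in 𝓝 a, ContDiffAt ℝ ∞ f x := by
    filter_upwards [hf.eventually_nhds, he.eventually_nhds,
      hfc.eventually hS.eventually.eventually_nhds] with x hfx hex hSx using
      contDiffAt_of_fderiv_eq_comp hfx (hSx.mono fun _ h => h.contDiffAt) hex
  obtain ⟨A, B, hA, hB, hS⟩ := hS
  have hBM : 0 ≤ B * M 1 := mul_nonneg hB.le (IsWeightSequence.pos 1).le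
  refine of_bound (‖f a‖ + 1 + A) (2 * A * (B * M 1) + 1) ?_
  filter_upwards [hSsmooth, hfc.eventually hS, he.eventually_nhds,
    eventually_norm_lt_add_one hfc] with x hfx hSx hex hbx
  refine ⟨hfx, fun k => ?_⟩
  rcases k with _ | k
  · rw [norm_iteratedFDeriv_zero, IsWeightSequence.zero_eq_one (M := M)]
    simp only [pow_zero, Nat.factorial_zero, Nat.cast_one, mul_one]
    linarith
  · calc _ ≤ M (k + 1) * odeMajorant A (B * M 1) (k + 1) :=
          norm_iteratedFDeriv_le_odeMajorant hA.le hB.le hfx hSx.1 hSx.2 hex k.succ_pos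
      _ ≤ M (k + 1) * (A * (2 * A * (B * M 1) + 1) ^ (k + 1) * (k + 1)!) :=
          mul_le_mul_of_nonneg_left (odeMajorant_le hA.le hBM _) (IsWeightSequence.pos _).le
      _ = A * (2 * A * (B * M 1) + 1) ^ (k + 1) * (k + 1)! * M (k + 1) := mul_comm _ _
      _ ≤ _ := bound_mono hA.le (by positivity) (by linarith [norm_nonneg (f a)]) le_rfl _

theorem add {g : E → F} (hf : CMAt M f a) (hg : CMAt M g a) :
    CMAt M (fun x => f x + g x) a := by
  obtain ⟨A, B, hA, hB, hf⟩ := hf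
  obtain ⟨A', B', hA', hB', hg⟩ := hg
  refine of_bound (A + A') (B + B') ?_
  filter_upwards [hf, hg] with x hx hy
  refine ⟨hx.1.add hy.1, fun k => ?_⟩
  have hk : (k : WithTop ℕ∞) ≤ ∞ := mod_cast le_top
  calc ‖iteratedFDeriv ℝ k (f + g) x‖
      = ‖iteratedFDeriv ℝ k f x + iteratedFDeriv ℝ k g x‖ := by
        rw [iteratedFDeriv_add_apply (hx.1.of_le hk) (hy.1.of_le hk)]
    _ ≤ A * (B + B') ^ k * k ! * M k + A' * (B + B') ^ k * k ! * M k :=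
        norm_add_le_of_le
          ((hx.2 k).trans (bound_mono hA.le hB.le le_rfl (le_add_of_nonneg_right hB'.le) k))
          ((hy.2 k).trans (bound_mono hA'.le hB'.le le_rfl (le_add_of_nonneg_left hB.le) k))
    _ = _ := by ring

theorem clm_comp (L : F →L[ℝ] G) (hf : CMAt M f a) : CMAt M (fun x => L (f x)) a :=
  (of_clm L (f a)).comp hf

theorem prodMk {g : E → G} (hf : CMAt M f a) (hg : CMAt M g a) :
    CMAt M (fun x => (f x, g x)) a := by
  simpa using (hf.clm_comp (ContinuousLinearMap.inl ℝ F G)).add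
    (hg.clm_comp (ContinuousLinearMap.inr ℝ F G))

theorem fst {f : E → F × G} (hf : CMAt M f a) : CMAt M (fun x => (f x).1) a :=
  hf.clm_comp (ContinuousLinearMap.fst ℝ F G)

theorem snd {f : E → F × G} (hf : CMAt M f a) : CMAt M (fun x => (f x).2) a :=
  hf.clm_comp (ContinuousLinearMap.snd ℝ F G)

theorem sum {ι : Type*} {s : Finset ι} {f : ι → E → F} (hf : ∀ i ∈ s, CMAt M (f i) a) :
    CMAt M (fun x => ∑ i ∈ s, f i x) a := by
  classical
  induction s using Finset.induction_on with
  | empty => simpa using const _ _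
  | insert i s hi ih =>
    simp only [Finset.sum_insert hi]
    exact (hf i (Finset.mem_insert_self i s)).add
      (ih fun j hj => hf j (Finset.mem_insert_of_mem hj))

theorem pi {ι : Type*} [Fintype ι] {f : E → ι → ℝ} (hf : ∀ i, CMAt M (fun x => f x i) a) :
    CMAt M f a := by
  classical
  have hsum : CMAt M (fun x => ∑ i, ContinuousLinearMap.single ℝ (fun _ : ι => ℝ) i (f x i)) a :=
    sum fun i _ => (hf i).clm_comp (ContinuousLinearMap.single ℝ (fun _ : ι => ℝ) i)
  refine hsum.congr (Eventually.of_forall fun x => ?_)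
  ext j
  simp [Finset.sum_apply, Pi.single_apply]

theorem apply {ι : Type*} [Fintype ι] {f : E → ι → ℝ} (hf : CMAt M f a) (i : ι) :
    CMAt M (fun x => f x i) a :=
  hf.clm_comp (ContinuousLinearMap.proj i : (ι → ℝ) →L[ℝ] ℝ)

theorem coord {ι : Type*} [Fintype ι] (i : ι) (a : ι → ℝ) : CMAt M (fun x : ι → ℝ => x i) a :=
  (id a).apply i

theorem clm_apply₂ (L : F →L[ℝ] G →L[ℝ] H) {g : E → G} (hf : CMAt M f a) (hg : CMAt M g a) :
    CMAt M (fun x => L (f x) (g x)) a := by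
  have hL : IsBoundedBilinearMap ℝ (fun z : F × G => L z.1 z.2) := L.isBoundedBilinearMap
  have hfderiv : _root_.fderiv ℝ (fun z : F × G => L z.1 z.2) = fun z =>
      (ContinuousLinearMap.compL ℝ (F × G) G H).flip (ContinuousLinearMap.snd ℝ F G) (L z.1) +
      (ContinuousLinearMap.compL ℝ (F × G) F H).flip (ContinuousLinearMap.fst ℝ F G)
        (L.flip z.2) := by
    ext1 z
    rw [hL.fderiv]
    ext w <;> simp [add_comm]
  have hLCM : CMAt M (fun z : F × G => L z.1 z.2) (f a, g a) := by
    refine of_fderiv (Eventually.of_forall fun x => hL.contDiff.contDiffAt) ?_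
    rw [hfderiv]
    exact (((id _).fst.clm_comp L).clm_comp _).add (((id _).snd.clm_comp L.flip).clm_comp _)
  exact comp (f := fun x => (f x, g x)) hLCM (hf.prodMk hg)

theorem mul {f g : E → ℝ} (hf : CMAt M f a) (hg : CMAt M g a) : CMAt M (fun x => f x * g x) a :=
  hf.clm_apply₂ (ContinuousLinearMap.mul ℝ ℝ) hg

theorem smul {f : E → ℝ} {g : E → F} (hf : CMAt M f a) (hg : CMAt M g a) :
    CMAt M (fun x => f x • g x) a :=
  hf.clm_apply₂ (ContinuousLinearMap.lsmul ℝ ℝ) hg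

theorem neg (hf : CMAt M f a) : CMAt M (fun x => -f x) a :=
  hf.clm_comp (-(ContinuousLinearMap.id ℝ F))

theorem sub {g : E → F} (hf : CMAt M f a) (hg : CMAt M g a) : CMAt M (fun x => f x - g x) a := by
  simpa only [sub_eq_add_neg] using hf.add hg.neg

theorem pow {f : E → ℝ} (hf : CMAt M f a) (n : ℕ) : CMAt M (fun x => f x ^ n) a := by
  induction n with
  | zero => simpa using const _ _
  | succ n ih => simpa only [pow_succ] using ih.mul hf

theorem prod {ι : Type*} {s : Finset ι} {f : ι → E → ℝ} (hf : ∀ i ∈ s, CMAt M (f i) a) :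
    CMAt M (fun x => ∏ i ∈ s, f i x) a := by
  classical
  induction s using Finset.induction_on with
  | empty => simpa using const _ _
  | insert i s hi ih =>
    simp only [Finset.prod_insert hi]
    exact (hf i (Finset.mem_insert_self i s)).mul
      (ih fun j hj => hf j (Finset.mem_insert_of_mem hj))

-- Inversion solves `y' = -y²`.
theorem inv {f : E → ℝ} (hf : CMAt M f a) (h0 : f a ≠ 0) : CMAt M (fun x => (f x)⁻¹) a := by
  have hinv : CMAt M (fun y : ℝ => y⁻¹) (f a) := by
    refine of_fderiv_eq_comp (S := fun y => (-(y ^ 2)) • ContinuousLinearMap.id ℝ ℝ) ?_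
      (((id _).pow 2).neg.smul (const _ _)) ?_
    · filter_upwards [isOpen_ne.mem_nhds h0] with y hy using differentiableAt_inv hy
    · refine Eventually.of_forall fun y => ?_
      ext
      simp [fderiv_inv]
  exact hinv.comp hf

end CMAt

end Germ

theorem CMAt.fderiv {M : ℕ → ℝ} [IsDerivationClosed M] {E F : Type*} [NormedAddCommGroup E]
    [NormedSpace ℝ E] [NormedAddCommGroup F] [NormedSpace ℝ F] {f : E → F} {a : E}
    (h : CMAt M f a) : CMAt M (fderiv ℝ f) a := by
  obtain ⟨A, B, hA, hB, h⟩ := h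
  obtain ⟨C, hC, hMC⟩ := IsDerivationClosed.exists_succ_le M
  refine ⟨A * (B * C), 2 * B * C, by positivity, by positivity, ?_⟩
  filter_upwards [h] with x hx
  refine ⟨hx.1.fderiv_right (by simp), fun k => ?_⟩
  have hk : (k : ℝ) + 1 ≤ 2 ^ k := mod_cast k.lt_two_pow_self
  have hMk : 0 < M k := IsWeightSequence.pos k
  calc ‖iteratedFDeriv ℝ k (_root_.fderiv ℝ f) x‖
      ≤ A * B ^ (k + 1) * (k + 1)! * M (k + 1) := by
        rw [norm_iteratedFDeriv_fderiv]; exact hx.2 (k + 1)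
    _ ≤ A * B ^ (k + 1) * (k + 1)! * (C ^ (k + 1) * M k) := by gcongr; exact hMC k
    _ = A * B ^ (k + 1) * ((k + 1) * k !) * (C ^ (k + 1) * M k) := by
        rw [Nat.factorial_succ]; push_cast; ring
    _ ≤ A * B ^ (k + 1) * (2 ^ k * k !) * (C ^ (k + 1) * M k) := by gcongr
    _ = _ := by rw [mul_pow, mul_pow]; ring

/-! ### The implicit function theorem -/

section ImplicitFunction
variable {E : Type*} [NormedAddCommGroup E] [NormedSpace ℝ E]

theorem isInvertible_comp_inr {L : E × ℝ →L[ℝ] ℝ} (hL : L (0, 1) ≠ 0) :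
    (L ∘L ContinuousLinearMap.inr ℝ E ℝ).IsInvertible := by
  refine ⟨ContinuousLinearEquiv.unitsEquivAut ℝ (Units.mk0 _ hL), ?_⟩
  ext
  simp

/-- The derivative of `x ↦ (x, p x)` at the point where it takes the value `z`, when the
function `p` is defined implicitly by `h (x, p x) = 0`. -/
noncomputable def implicitGraphField (h : E × ℝ → ℝ) (z : E × ℝ) : E →L[ℝ] E × ℝ :=
  ContinuousLinearMap.inl ℝ E ℝ +
    ContinuousLinearMap.compL ℝ E ℝ (E × ℝ) (ContinuousLinearMap.inr ℝ E ℝ)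
      ((-(fderiv ℝ h z (0, 1))⁻¹) • (ContinuousLinearMap.compL ℝ E (E × ℝ) ℝ).flip
        (ContinuousLinearMap.inl ℝ E ℝ) (fderiv ℝ h z))

theorem fderiv_graph_eq_implicitGraphField {h : E × ℝ → ℝ} {p : E → ℝ} {x : E}
    (hp : DifferentiableAt ℝ p x) (hh : DifferentiableAt ℝ h (x, p x))
    (hy : fderiv ℝ h (x, p x) (0, 1) ≠ 0) (h0 : ∀ᶠ x in 𝓝 x, h (x, p x) = 0) :
    fderiv ℝ (fun x => (x, p x)) x = implicitGraphField h (x, p x) := by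
  have hgraph : HasFDerivAt (fun x => (x, p x))
      ((ContinuousLinearMap.id ℝ E).prod (fderiv ℝ p x)) x :=
    (hasFDerivAt_id x).prodMk hp.hasFDerivAt
  have hzero : fderiv ℝ h (x, p x) ∘L (ContinuousLinearMap.id ℝ E).prod (fderiv ℝ p x) = 0 :=
    (hh.hasFDerivAt.comp x hgraph).unique ((hasFDerivAt_const (0 : ℝ) x).congr_of_eventuallyEq h0)
  have hpw (w : E) : fderiv ℝ p x w =
      -((fderiv ℝ h (x, p x) (0, 1))⁻¹ * fderiv ℝ h (x, p x) (w, 0)) := by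
    have hw : fderiv ℝ h (x, p x) (w, fderiv ℝ p x w) = 0 := congrArg (fun L => L w) hzero
    have hsplit : ((w, fderiv ℝ p x w) : E × ℝ) = (w, 0) + fderiv ℝ p x w • ((0, 1) : E × ℝ) := by
      simp
    rw [hsplit, map_add, map_smul, smul_eq_mul] at hw
    field_simp
    linarith
  rw [hgraph.fderiv]
  ext w <;> simp [implicitGraphField, hpw]

variable {M : ℕ → ℝ} [IsDerivationClosed M]

theorem CMAt.implicitGraphField {h : E × ℝ → ℝ} {z : E × ℝ} (hh : CMAt M h z)
    (hy : _root_.fderiv ℝ h z (0, 1) ≠ 0) : CMAt M (implicitGraphField h) z := by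
  have hy' : CMAt M (fun z => _root_.fderiv ℝ h z (0, 1)) z :=
    hh.fderiv.clm_comp (ContinuousLinearMap.apply ℝ ℝ ((0, 1) : E × ℝ))
  exact (const _ _).add (((hy'.inv hy).neg.smul (hh.fderiv.clm_comp _)).clm_comp _)

-- The graph of the implicit function solves an autonomous differential equation of class `M`.
theorem CMAt.exists_implicitFunction [CompleteSpace E] {h : E × ℝ → ℝ} {a : E} {b : ℝ}
    (hh : CMAt M h (a, b)) (h0 : h (a, b) = 0) (hy : _root_.fderiv ℝ h (a, b) (0, 1) ≠ 0) :
    ∃ p : E → ℝ, CMAt M p a ∧ p a = b ∧ ∀ᶠ x in 𝓝 a, h (x, p x) = 0 := by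
  have hinv := isInvertible_comp_inr hy
  have hne : (∞ : WithTop ℕ∞) ≠ 0 := by simp
  obtain ⟨p, rfl, hpa, hp0⟩ : ∃ p : E → ℝ, p a = b ∧ ContDiffAt ℝ ∞ p a ∧
      ∀ᶠ x in 𝓝 a, h (x, p x) = h (a, b) :=
    ⟨_, hh.contDiffAt.implicitFunction_apply_self hne hinv,
      hh.contDiffAt.contDiffAt_implicitFunction hne hinv,
      hh.contDiffAt.eventually_apply_implicitFunction hne hinv⟩
  simp only [h0] at hp0
  replace hpa : ContDiffAt ℝ 1 p a := hpa.of_le (by simp)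
  have hp : ∀ᶠ x in 𝓝 a, DifferentiableAt ℝ p x :=
    (hpa.eventually (by simp)).mono fun x hx => hx.differentiableAt (by simp)
  have hgraph : ContinuousAt (fun x => (x, p x)) a := continuousAt_id.prodMk hpa.continuousAt
  have hne0 : ∀ᶠ z in 𝓝 (a, p a), _root_.fderiv ℝ h z (0, 1) ≠ 0 :=
    (hh.fderiv.clm_comp (ContinuousLinearMap.apply ℝ ℝ ((0, 1) : E × ℝ))).continuousAt.eventually_ne
      hy
  have hCM : CMAt M (fun x => (x, p x)) a := by
    refine of_fderiv_eq_comp (hp.mono fun x hx => differentiableAt_id.prodMk hx)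
      (hh.implicitGraphField hy) ?_
    filter_upwards [hp, hgraph.eventually hh.eventually, hgraph.eventually hne0,
      hp0.eventually_nhds] with x hpx hhx hyx h0x using
      fderiv_graph_eq_implicitGraphField hpx hhx.differentiableAt hyx h0x
  exact ⟨p, hCM.snd, rfl, hp0⟩

end ImplicitFunction

/-! ### Division by a linear form -/

section ParametricIntegral
universe u
variable {E F : Type u} [NormedAddCommGroup E] [NormedSpace ℝ E] [NormedAddCommGroup F]
  [NormedSpace ℝ F] {U : Set E} {T : ℝ × E → F}

theorem fderiv_slice {t : ℝ} {z : E} (hT : DifferentiableAt ℝ T (t, z)) :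
    fderiv ℝ (fun z => T (t, z)) z = fderiv ℝ T (t, z) ∘L ContinuousLinearMap.inr ℝ ℝ E :=
  (hT.hasFDerivAt.comp z (hasFDerivAt_prodMk_right t z)).fderiv

theorem contDiffAt_fderiv_slice {t : ℝ} {z : E} (hT : ContDiffAt ℝ ∞ T (t, z)) :
    ContDiffAt ℝ ∞ (fun p : ℝ × E => fderiv ℝ (fun z => T (p.1, z)) p.2) (t, z) := by
  have hT' : ContDiffAt ℝ ∞ (fun p => fderiv ℝ T p ∘L ContinuousLinearMap.inr ℝ ℝ E) (t, z) :=
    (hT.fderiv_right (m := ∞) (by simp)).clm_comp contDiffAt_const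
  have hT1 : ContDiffAt ℝ 1 T (t, z) := hT.of_le (by simp)
  refine hT'.congr_of_eventuallyEq ?_
  filter_upwards [hT1.eventually (by simp)] with p hp using
    fderiv_slice (hp.differentiableAt (by simp))

theorem continuousAt_slice {X Y Z : Type*} [TopologicalSpace X] [TopologicalSpace Y]
    [TopologicalSpace Z] {f : X × Y → Z} {x : X} {y : Y} (hf : ContinuousAt f (x, y)) :
    ContinuousAt (fun x => f (x, y)) x :=
  hf.comp (f := fun x => (x, y)) (by fun_prop)

theorem hasFDerivAt_integral_slice (hU : IsOpen U)
    (hT : ∀ t ∈ Icc (0 : ℝ) 1, ∀ z ∈ U, ContDiffAt ℝ ∞ T (t, z)) {C : ℝ}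
    (hC : ∀ t ∈ Icc (0 : ℝ) 1, ∀ z ∈ U, ‖fderiv ℝ (fun z => T (t, z)) z‖ ≤ C)
    {z : E} (hz : z ∈ U) :
    HasFDerivAt (fun z => ∫ t in (0 : ℝ)..1, T (t, z))
      (∫ t in (0 : ℝ)..1, fderiv ℝ (fun z => T (t, z)) z) z := by
  have hI : Set.uIoc (0 : ℝ) 1 = Ioc 0 1 := uIoc_of_le zero_le_one
  have hcont (x) (hx : x ∈ U) : ContinuousOn (fun t => T (t, x)) (Icc 0 1) := fun t ht =>
    (continuousAt_slice (hT t ht x hx).continuousAt).continuousWithinAt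
  have hcont' : ContinuousOn (fun t => fderiv ℝ (fun z => T (t, z)) z) (Icc 0 1) := fun t ht =>
    (continuousAt_slice (contDiffAt_fderiv_slice (hT t ht z hz)).continuousAt).continuousWithinAt
  refine intervalIntegral.hasFDerivAt_integral_of_dominated_of_fderiv_le
    (F := fun z t => T (t, z)) (F' := fun z t => fderiv ℝ (fun z => T (t, z)) z)
    (bound := fun _ => C) (hU.mem_nhds hz) ?_ ?_ ?_ ?_ intervalIntegrable_const ?_
  · filter_upwards [hU.mem_nhds hz] with x hx
    rw [hI]
    exact ((hcont x hx).mono Ioc_subset_Icc_self).aestronglyMeasurable measurableSet_Ioc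
  · exact ContinuousOn.intervalIntegrable (by rw [uIcc_of_le zero_le_one]; exact hcont z hz)
  · rw [hI]
    exact (hcont'.mono Ioc_subset_Icc_self).aestronglyMeasurable measurableSet_Ioc
  · rw [hI]
    exact Eventually.of_forall fun t ht x hx => hC t (Ioc_subset_Icc_self ht) x hx
  · rw [hI]
    refine Eventually.of_forall fun t ht x hx => ?_
    exact ((hT t (Ioc_subset_Icc_self ht) x hx).differentiableAt (by simp)).hasFDerivAt.comp x
      (hasFDerivAt_prodMk_right t x) |>.differentiableAt.hasFDerivAt

theorem contDiffOn_integral_slice_and_norm_iteratedFDeriv_le (hU : IsOpen U)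
    (hT : ∀ t ∈ Icc (0 : ℝ) 1, ∀ z ∈ U, ContDiffAt ℝ ∞ T (t, z)) {C : ℕ → ℝ}
    (hC : ∀ k, ∀ t ∈ Icc (0 : ℝ) 1, ∀ z ∈ U, ‖iteratedFDeriv ℝ k (fun z => T (t, z)) z‖ ≤ C k)
    (n : ℕ) : ContDiffOn ℝ n (fun z => ∫ t in (0 : ℝ)..1, T (t, z)) U ∧
      ∀ z ∈ U, ‖iteratedFDeriv ℝ n (fun z => ∫ t in (0 : ℝ)..1, T (t, z)) z‖ ≤ C n := by
  induction n generalizing F C with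
  | zero =>
    have hderiv (z) (hz : z ∈ U) := hasFDerivAt_integral_slice hU hT
      (fun t ht z hz => by simpa only [norm_iteratedFDeriv_one] using hC 1 t ht z hz) hz
    refine ⟨contDiffOn_zero.2 fun z hz => (hderiv z hz).continuousAt.continuousWithinAt,
      fun z hz => ?_⟩
    rw [norm_iteratedFDeriv_zero]
    refine (intervalIntegral.norm_integral_le_of_norm_le_const (C := C 0) fun t ht => ?_).trans_eq
      (by simp)
    rw [uIoc_of_le zero_le_one] at ht
    simpa only [norm_iteratedFDeriv_zero] using hC 0 t (Ioc_subset_Icc_self ht) z hz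
  | succ n ih =>
    have hderiv (z) (hz : z ∈ U) := hasFDerivAt_integral_slice hU hT
      (fun t ht z hz => by simpa only [norm_iteratedFDeriv_one] using hC 1 t ht z hz) hz
    obtain ⟨hsmooth, hbound⟩ := ih (T := fun p => fderiv ℝ (fun z => T (p.1, z)) p.2)
      (C := fun k => C (k + 1)) (fun t ht z hz => contDiffAt_fderiv_slice (hT t ht z hz))
      (fun k t ht z hz =>
        (norm_iteratedFDeriv_fderiv (f := fun z => T (t, z))).trans_le (hC (k + 1) t ht z hz))
    refine ⟨?_, fun z hz => ?_⟩
    · push_cast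
      exact (contDiffOn_succ_iff_fderiv_of_isOpen hU).2
        ⟨fun z hz => (hderiv z hz).differentiableAt.differentiableWithinAt, by simp,
          hsmooth.congr fun z hz => (hderiv z hz).fderiv⟩
    · have hfderiv : fderiv ℝ (fun z => ∫ t in (0 : ℝ)..1, T (t, z)) =ᶠ[𝓝 z]
          fun z => ∫ t in (0 : ℝ)..1, fderiv ℝ (fun z => T (t, z)) z := by
        filter_upwards [hU.mem_nhds hz] with w hw using (hderiv w hw).fderiv
      rw [← norm_iteratedFDeriv_fderiv, (hfderiv.iteratedFDeriv ℝ n).eq_of_nhds]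
      exact hbound z hz

end ParametricIntegral

theorem norm_iteratedFDeriv_comp_affine_le {E F G : Type*} [NormedAddCommGroup E]
    [NormedSpace ℝ E] [NormedAddCommGroup F] [NormedSpace ℝ F] [NormedAddCommGroup G]
    [NormedSpace ℝ G] {f : F → G} (L : E →L[ℝ] F) (c : F) {x : E}
    (hf : ContDiffAt ℝ ∞ f (L x + c)) (k : ℕ) :
    ‖iteratedFDeriv ℝ k (fun x => f (L x + c)) x‖ ≤
      ‖iteratedFDeriv ℝ k f (L x + c)‖ * ‖L‖ ^ k := by
  have hk : ContDiffAt ℝ k (fun y => f (y + c)) (L x) :=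
    ContDiffAt.comp (f := fun y : F => y + c) (L x) (hf.of_le (mod_cast le_top)) (by fun_prop)
  obtain ⟨s, hs, hso, hxs⟩ := eventually_nhds_iff.1 (hk.eventually (by simp))
  have hcomp := L.iteratedFDerivWithin_comp_right (fun y hy => (hs y hy).contDiffWithinAt)
    hso.uniqueDiffOn (hso.preimage L.continuous).uniqueDiffOn (x := x) hxs (i := k) le_rfl
  rw [iteratedFDerivWithin_of_isOpen _ (hso.preimage L.continuous) hxs,
    iteratedFDerivWithin_of_isOpen _ hso hxs] at hcomp
  calc ‖iteratedFDeriv ℝ k ((fun y => f (y + c)) ∘ L) x‖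
      ≤ ‖iteratedFDeriv ℝ k (fun y => f (y + c)) (L x)‖ * ∏ _ : Fin k, ‖L‖ := by
        rw [hcomp]; exact ContinuousMultilinearMap.norm_compContinuousLinearMap_le _ _
    _ = ‖iteratedFDeriv ℝ k f (L x + c)‖ * ‖L‖ ^ k := by
        rw [iteratedFDeriv_comp_add_right k c (L x)]; simp

section LineProjection
variable {E : Type*} [NormedAddCommGroup E] [NormedSpace ℝ E] (l : E →L[ℝ] ℝ) (v a : E)

/-- For `l v = 1`, the linear homotopy along `v` from the projection onto the hyperplane
`l = l a`, at `t = 0`, to the identity, at `t = 1`. -/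
def projHomotopy (t : ℝ) (z : E) : E :=
  z - ((1 - t) * (l z - l a)) • v

theorem projHomotopy_one (z : E) : projHomotopy l v a 1 z = z := by
  simp [projHomotopy]

theorem projHomotopy_zero (z : E) : projHomotopy l v a 0 z = z - (l z - l a) • v := by
  simp [projHomotopy]

theorem projHomotopy_eq_clm_add (t : ℝ) (z : E) : projHomotopy l v a t z =
    (ContinuousLinearMap.id ℝ E - (1 - t) • l.smulRight v) z + ((1 - t) * l a) • v := by
  simp only [projHomotopy, _root_.sub_apply, _root_.smul_apply,
    ContinuousLinearMap.smulRight_apply, ContinuousLinearMap.id_apply]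
  module

theorem projHomotopy_sub (t : ℝ) (z : E) : projHomotopy l v a t z - a =
    (ContinuousLinearMap.id ℝ E - (1 - t) • l.smulRight v) (z - a) := by
  simp only [projHomotopy, _root_.sub_apply, _root_.smul_apply,
    ContinuousLinearMap.smulRight_apply, ContinuousLinearMap.id_apply, map_sub]
  module

theorem projHomotopy_mem_segment {t : ℝ} (ht : t ∈ Icc (0 : ℝ) 1) (z : E) :
    projHomotopy l v a t z ∈ segment ℝ (projHomotopy l v a 0 z) z := by
  refine ⟨1 - t, t, by linarith [ht.2], ht.1, by ring, ?_⟩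
  simp only [projHomotopy]
  module

theorem norm_id_sub_smul_smulRight_le {t : ℝ} (ht : t ∈ Icc (0 : ℝ) 1) :
    ‖ContinuousLinearMap.id ℝ E - (1 - t) • l.smulRight v‖ ≤ 1 + ‖l‖ * ‖v‖ := by
  refine (norm_sub_le _ _).trans (add_le_add ContinuousLinearMap.norm_id_le ?_)
  rw [norm_smul, ContinuousLinearMap.norm_smulRight_apply, Real.norm_eq_abs,
    abs_of_nonneg (by linarith [ht.2])]
  exact mul_le_of_le_one_left (by positivity) (by linarith [ht.1])

theorem projHomotopy_mem_ball {t R : ℝ} (ht : t ∈ Icc (0 : ℝ) 1) {z : E}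
    (hz : z ∈ Metric.ball a (R / (1 + ‖l‖ * ‖v‖))) :
    projHomotopy l v a t z ∈ Metric.ball a R := by
  rw [mem_ball_iff_norm] at hz ⊢
  rw [projHomotopy_sub]
  calc _ ≤ (1 + ‖l‖ * ‖v‖) * ‖z - a‖ :=
        ContinuousLinearMap.le_of_opNorm_le _ (norm_id_sub_smul_smulRight_le l v ht) _
    _ < R := by rwa [lt_div_iff₀' (by positivity)] at hz

theorem hasDerivAt_projHomotopy (t : ℝ) (z : E) :
    HasDerivAt (fun t => projHomotopy l v a t z) ((l z - l a) • v) t := by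
  have hcoeff : HasDerivAt (fun t : ℝ => (1 - t) * (l z - l a)) (-(l z - l a)) t := by
    simpa using ((hasDerivAt_id t).const_sub 1).mul_const (l z - l a)
  simpa only [projHomotopy, neg_smul, neg_neg] using (hcoeff.smul_const v).const_sub z

end LineProjection

section Division
variable {M : ℕ → ℝ} {E F : Type} [NormedAddCommGroup E] [NormedSpace ℝ E]
  [NormedAddCommGroup F] [NormedSpace ℝ F] {a : E}

theorem CMAt.integral_projHomotopy [IsWeightSequence M] {h : E → F}
    (l : E →L[ℝ] ℝ) (v : E) (hh : CMAt M h a) :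
    CMAt M (fun z => ∫ t in (0 : ℝ)..1, h (projHomotopy l v a t z)) a := by
  obtain ⟨A, B, hA, hB, hh⟩ := hh
  obtain ⟨R, hR, hball⟩ := Metric.eventually_nhds_iff_ball.1 hh
  have hnorm : 0 < 1 + ‖l‖ * ‖v‖ := by positivity
  have hmem (t : ℝ) (ht : t ∈ Icc (0 : ℝ) 1) (z) (hz : z ∈ Metric.ball a (R / (1 + ‖l‖ * ‖v‖))) :=
    hball _ (projHomotopy_mem_ball l v a ht hz)
  have hint := contDiffOn_integral_slice_and_norm_iteratedFDeriv_le Metric.isOpen_ball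
    (T := fun p : ℝ × E => h (projHomotopy l v a p.1 p.2))
    (C := fun n => (A * B ^ n * n ! * M n) * (1 + ‖l‖ * ‖v‖) ^ n)
    (fun t ht z hz => ContDiffAt.comp (f := fun p : ℝ × E => projHomotopy l v a p.1 p.2) (t, z)
      (hmem t ht z hz).1 (by unfold projHomotopy; fun_prop))
    (fun n t ht z hz => by
      have hz' := hmem t ht z hz
      have : 0 < M n := IsWeightSequence.pos n
      simp only [projHomotopy_eq_clm_add] at hz' ⊢
      refine (norm_iteratedFDeriv_comp_affine_le _ _ hz'.1 n).trans ?_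
      gcongr
      · exact hz'.2 n
      · exact norm_id_sub_smul_smulRight_le l v ht)
  refine of_bound A (B * (1 + ‖l‖ * ‖v‖)) ?_
  filter_upwards [Metric.ball_mem_nhds a (div_pos hR hnorm)] with z hz
  refine ⟨?_, fun n => ((hint n).2 z hz).trans_eq (by rw [mul_pow]; ring)⟩
  exact (contDiffOn_infty.2 fun n => (hint n).1).contDiffAt (Metric.isOpen_ball.mem_nhds hz)

theorem eq_add_mul_integral_projHomotopy {f : E → ℝ} {s : Set E} (hs : Convex ℝ s)
    (hf : ∀ x ∈ s, ContDiffAt ℝ 1 f x) (l : E →L[ℝ] ℝ) (v : E) {z : E} (hz : z ∈ s)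
    (hz0 : z - (l z - l a) • v ∈ s) :
    f z = f (z - (l z - l a) • v) +
      (l z - l a) * ∫ t in (0 : ℝ)..1, fderiv ℝ f (projHomotopy l v a t z) v := by
  rw [← projHomotopy_zero] at hz0 ⊢
  have hmem (t : ℝ) (ht : t ∈ uIcc (0 : ℝ) 1) : projHomotopy l v a t z ∈ s :=
    hs.segment_subset hz0 hz
      (projHomotopy_mem_segment l v a (by rwa [uIcc_of_le zero_le_one] at ht) z)
  have hderiv (t : ℝ) (ht : t ∈ uIcc (0 : ℝ) 1) :
      HasDerivAt (fun t => f (projHomotopy l v a t z))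
        ((l z - l a) * fderiv ℝ f (projHomotopy l v a t z) v) t := by
    simpa [Function.comp_def] using
      ((hf _ (hmem t ht)).differentiableAt one_ne_zero).hasFDerivAt.comp_hasDerivAt t
        (hasDerivAt_projHomotopy l v a t z)
  have hcont : ContinuousOn (fun t => (l z - l a) * fderiv ℝ f (projHomotopy l v a t z) v)
      (uIcc 0 1) := by
    refine continuousOn_const.mul (ContinuousOn.clm_apply (fun t ht => ?_) continuousOn_const)
    exact (((hf _ (hmem t ht)).continuousAt_fderiv (by simp)).comp
      (f := fun t => projHomotopy l v a t z)
      (hasDerivAt_projHomotopy l v a t z).continuousAt).continuousWithinAt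
  have hFTC := intervalIntegral.integral_eq_sub_of_hasDerivAt hderiv hcont.intervalIntegrable
  rw [intervalIntegral.integral_const_mul, projHomotopy_one] at hFTC
  linarith

theorem CMAt.exists_eq_add_mul [IsDerivationClosed M] {f : E → ℝ} (l : E →L[ℝ] ℝ) (v : E)
    (hf : CMAt M f a) :
    ∃ q : E → ℝ, CMAt M q a ∧
      ∀ᶠ z in 𝓝 a, f z = f (z - (l z - l a) • v) + (l z - l a) * q z := by
  refine ⟨fun z => ∫ t in (0 : ℝ)..1, _root_.fderiv ℝ f (projHomotopy l v a t z) v,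
    integral_projHomotopy (h := fun z => _root_.fderiv ℝ f z v) l v
      (hf.fderiv.clm_comp (ContinuousLinearMap.apply ℝ ℝ v)), ?_⟩
  obtain ⟨R, hR, hball⟩ := Metric.eventually_nhds_iff_ball.1 hf.eventually
  have hproj : ContinuousAt (fun z => z - (l z - l a) • v) a := by fun_prop
  filter_upwards [hproj.eventually_mem (by simpa using Metric.ball_mem_nhds a hR),
    Metric.ball_mem_nhds a hR] with z hz0 hz using
    eq_add_mul_integral_projHomotopy (convex_ball a R)
      (fun x hx => (hball x hx).contDiffAt.of_le (by simp)) l v hz hz0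

end Division

/-! ### Quasianalyticity -/

theorem hasDerivAt_iteratedDeriv {f : ℝ → ℝ} {x : ℝ} (hf : ContDiffAt ℝ ∞ f x)
    (j : ℕ) : HasDerivAt (iteratedDeriv j f) (iteratedDeriv (j + 1) f x) x := by
  rw [iteratedDeriv_succ, iteratedDeriv_eq_equiv_comp]
  exact ((ContinuousMultilinearMap.piFieldEquiv ℝ (Fin j) ℝ).symm.differentiableAt.comp x
    (hf.differentiableAt_iteratedFDeriv (mod_cast WithTop.coe_lt_top _))).hasDerivAt

/-- The statement that the Bang degree of `f` at `x`, relative to the bounds `m j` on its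
derivatives, is at least `n`. -/
def BangDegreeGE (m : ℕ → ℝ) (f : ℝ → ℝ) (n : ℕ) (x : ℝ) : Prop :=
  ∀ j : ℕ, |iteratedDeriv j f x| ≤ Real.exp (j - n) * m j

section Bang
variable {m : ℕ → ℝ} {f : ℝ → ℝ} (hm : ∀ k, 0 < m k) (hr : Monotone fun k => m (k + 1) / m k)
  (hf : ∀ x ∈ Icc (0 : ℝ) 1, ContDiffAt ℝ ∞ f x)
  (hb : ∀ x ∈ Icc (0 : ℝ) 1, ∀ k, |iteratedDeriv k f x| ≤ m k)
include hm hr hf hb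

theorem BangDegreeGE.abs_iteratedDeriv_le {n : ℕ} {x y : ℝ} (hx : 0 ≤ x) (hy : y ≤ 1)
    (h : BangDegreeGE m f (n + 1) x) {j : ℕ} (hj : j ≤ n + 1) :
    ∀ z ∈ Icc x y, |iteratedDeriv j f z| ≤
      Real.exp (j - (n + 1 : ℕ)) * m j * Real.exp (Real.exp 1 * (m (n + 1) / m n) * (z - x)) := by
  set ρ := m (n + 1) / m n
  have hρ0 : 0 < ρ := div_pos (hm _) (hm _)
  have hsub {z : ℝ} (hz : z ∈ Icc x y) : z ∈ Icc (0 : ℝ) 1 := ⟨hx.trans hz.1, hz.2.trans hy⟩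
  induction hj using Nat.decreasingInduction with
  | self =>
    intro z hz
    have hexp : 1 ≤ Real.exp (Real.exp 1 * ρ * (z - x)) :=
      Real.one_le_exp (mul_nonneg (by positivity) (sub_nonneg.2 hz.1))
    rw [sub_self, Real.exp_zero, one_mul]
    exact (hb z (hsub hz) _).trans (le_mul_of_one_le_right (hm _).le hexp)
  | of_succ j hj ih =>
    have hderiv (w) (hw : w ∈ Icc x y) := hasDerivAt_iteratedDeriv (hf w (hsub hw)) j
    have hρj : m (j + 1) ≤ ρ * m j := (div_le_iff₀ (hm j)).1 (hr (Nat.le_of_lt_succ hj))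
    have hexp : Real.exp ((j + 1 : ℕ) - (n + 1 : ℕ)) =
        Real.exp (j - (n + 1 : ℕ)) * Real.exp 1 := by
      rw [← Real.exp_add]; congr 1; push_cast; ring
    have hBderiv (w : ℝ) : HasDerivAt
        (fun z => Real.exp (j - (n + 1 : ℕ)) * m j * Real.exp (Real.exp 1 * ρ * (z - x)))
        (Real.exp (j - (n + 1 : ℕ)) * m j *
          (Real.exp (Real.exp 1 * ρ * (w - x)) * (Real.exp 1 * ρ))) w := by
      refine HasDerivAt.const_mul _ (HasDerivAt.exp ?_)
      simpa using ((hasDerivAt_id w).sub_const x).const_mul (Real.exp 1 * ρ)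
    refine image_norm_le_of_norm_deriv_right_le_deriv_boundary (E := ℝ)
      (fun w hw => (hderiv w hw).continuousAt.continuousWithinAt)
      (fun w hw => (hderiv w ⟨hw.1, hw.2.le⟩).hasDerivWithinAt)
      (by simpa using h j) hBderiv fun w hw => ?_
    calc |iteratedDeriv (j + 1) f w|
        ≤ Real.exp ((j + 1 : ℕ) - (n + 1 : ℕ)) * m (j + 1) *
            Real.exp (Real.exp 1 * ρ * (w - x)) := ih w ⟨hw.1, hw.2.le⟩
      _ ≤ Real.exp (j - (n + 1 : ℕ)) * Real.exp 1 * (ρ * m j) *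
            Real.exp (Real.exp 1 * ρ * (w - x)) := by rw [hexp]; gcongr
      _ = _ := by ring

theorem BangDegreeGE.of_succ {n : ℕ} {x y : ℝ} (hx : 0 ≤ x) (hxy : x ≤ y) (hy : y ≤ 1)
    (hyx : y ≤ x + m n / (Real.exp 1 * m (n + 1))) (h : BangDegreeGE m f (n + 1) x) :
    BangDegreeGE m f n y := by
  intro j
  have hmn := hm n
  have hmn1 := hm (n + 1)
  rcases Nat.lt_or_ge j (n + 1) with hj | hj
  · have hstep : Real.exp 1 * (m (n + 1) / m n) * (y - x) ≤ 1 := by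
      calc _ ≤ Real.exp 1 * (m (n + 1) / m n) * (m n / (Real.exp 1 * m (n + 1))) := by
            gcongr; linarith
        _ = 1 := by field_simp
    have hexp : Real.exp (j - n) = Real.exp (j - (n + 1 : ℕ)) * Real.exp 1 := by
      rw [← Real.exp_add]; congr 1; push_cast; ring
    have hmj := hm j
    calc |iteratedDeriv j f y|
        ≤ Real.exp (j - (n + 1 : ℕ)) * m j *
            Real.exp (Real.exp 1 * (m (n + 1) / m n) * (y - x)) :=
          abs_iteratedDeriv_le hm hr hf hb hx hy h hj.le y ⟨hxy, le_rfl⟩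
      _ ≤ Real.exp (j - (n + 1 : ℕ)) * m j * Real.exp 1 := by gcongr
      _ = _ := by rw [hexp]; ring
  · have hjn : (n : ℝ) ≤ j := mod_cast n.le_succ.trans hj
    exact (hb y ⟨hx.trans hxy, hy⟩ j).trans
      (le_mul_of_one_le_left (hm j).le (Real.one_le_exp (sub_nonneg.2 hjn)))

theorem bangDegreeGE_of_le_sum (h0 : ∀ k, iteratedDeriv k f 0 = 0) (d k : ℕ) {y : ℝ}
    (hy : y ∈ Icc (0 : ℝ) 1)
    (hyd : y ≤ ∑ i ∈ Finset.range d, m (i + k) / (Real.exp 1 * m (i + k + 1))) :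
    BangDegreeGE m f k y := by
  have hτ (i : ℕ) : 0 ≤ m i / (Real.exp 1 * m (i + 1)) :=
    (div_pos (hm i) (mul_pos (Real.exp_pos 1) (hm _))).le
  induction d generalizing k y with
  | zero =>
    obtain rfl : y = 0 := le_antisymm (by simpa using hyd) hy.1
    intro j
    rw [h0, abs_zero]
    exact mul_nonneg (Real.exp_pos _).le (hm j).le
  | succ d ih =>
    rw [Finset.sum_range_succ', zero_add] at hyd
    simp only [add_assoc, add_comm 1 k] at hyd ih
    set s := ∑ i ∈ Finset.range d, m (i + (k + 1)) / (Real.exp 1 * m (i + (k + 1 + 1)))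
    have hs : 0 ≤ s := Finset.sum_nonneg fun i _ => hτ (i + (k + 1))
    have hmin : 0 ≤ min y s := le_min hy.1 hs
    refine .of_succ hm hr hf hb hmin (min_le_left _ _) hy.2 ?_
      (ih (k + 1) ⟨hmin, (min_le_left _ _).trans hy.2⟩ (min_le_right _ _))
    rcases min_choice y s with h | h <;> rw [h]
    · linarith [hτ k]
    · exact hyd

-- The Bang degree drops by one over a length `m n / (e * m (n + 1))`, so it is infinite everywhere.
theorem eq_zero_of_not_summable (hdiv : ¬ Summable fun k => m k / m (k + 1))
    (h0 : ∀ k, iteratedDeriv k f 0 = 0) {y : ℝ} (hy : y ∈ Icc (0 : ℝ) 1) : f y = 0 := by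
  have hτ (n : ℕ) : m n / (Real.exp 1 * m (n + 1)) = (Real.exp 1)⁻¹ * (m n / m (n + 1)) := by
    ring
  have hle (k : ℕ) : |f y| ≤ Real.exp (-k) * m 0 := by
    have hdivk : ¬ Summable fun i => m (i + k) / (Real.exp 1 * m (i + k + 1)) := by
      simp only [hτ]
      rwa [summable_mul_left_iff (by positivity),
        summable_nat_add_iff (f := fun i => m i / m (i + 1)) k]
    obtain ⟨d, hd⟩ := (((not_summable_iff_tendsto_nat_atTop_of_nonneg fun i =>
      (div_pos (hm _) (mul_pos (Real.exp_pos 1) (hm _))).le).1 hdivk).eventually_ge_atTop y).exists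
    simpa using bangDegreeGE_of_le_sum hm hr hf hb h0 d k hy hd 0
  have hlim : Tendsto (fun k : ℕ => Real.exp (-(k : ℝ)) * m 0) atTop (𝓝 0) := by
    simpa using (Real.tendsto_exp_neg_atTop_nhds_zero.comp tendsto_natCast_atTop_atTop).mul_const
      (m 0)
  exact abs_nonpos_iff.1 (ge_of_tendsto' hlim hle)

end Bang

section Quasianalytic
variable {M : ℕ → ℝ} {E F : Type*} [NormedAddCommGroup E] [NormedSpace ℝ E]
  [NormedAddCommGroup F] [NormedSpace ℝ F]

theorem IsQuasianalytic.not_summable [IsQuasianalytic M] :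
    ¬ Summable fun k : ℕ => M k / (((k : ℝ) + 1) * M (k + 1)) := by
  intro hsum
  have hM : ∀ k, 0 < M k := IsWeightSequence.pos
  have hnonneg (k : ℕ) : 0 ≤ M k / (((k : ℝ) + 1) * M (k + 1)) :=
    (div_pos (hM k) (mul_pos k.cast_add_one_pos (hM _))).le
  have htop := tsum_eq_top (M := M)
  rw [← ENNReal.ofReal_tsum_of_nonneg hnonneg hsum] at htop
  exact ENNReal.ofReal_ne_top htop

theorem eq_zero_of_iteratedDeriv_eq_zero [IsQuasianalytic M] {A B : ℝ} (hA : 0 < A) (hB : 0 < B)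
    {f : ℝ → ℝ} (hf : ∀ x ∈ Icc (0 : ℝ) 1, ContDiffAt ℝ ∞ f x)
    (hb : ∀ x ∈ Icc (0 : ℝ) 1, ∀ k, |iteratedDeriv k f x| ≤ A * B ^ k * k ! * M k)
    (h0 : ∀ k, iteratedDeriv k f 0 = 0) {y : ℝ} (hy : y ∈ Icc (0 : ℝ) 1) : f y = 0 := by
  have hM : ∀ k, 0 < M k := IsWeightSequence.pos
  have hratio (k : ℕ) : A * B ^ (k + 1) * (k + 1)! * M (k + 1) / (A * B ^ k * k ! * M k) =
      B * ((k + 1) * (M (k + 1) / M k)) := by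
    have := hM k
    rw [Nat.factorial_succ, pow_succ]
    push_cast
    field_simp
  refine eq_zero_of_not_summable (m := fun k => A * B ^ k * k ! * M k)
    (fun k => mul_pos (by positivity) (hM k)) ?_ hf hb ?_ h0 hy
  · simp only [hratio]
    intro i j hij
    have hMij := IsWeightSequence.ratio_monotone (M := M) hij
    have := div_pos (hM (i + 1)) (hM i)
    dsimp only at hMij ⊢
    gcongr
  · intro hsum
    refine IsQuasianalytic.not_summable (M := M) ((hsum.mul_left B).congr fun k => ?_)
    rw [← inv_div (A * B ^ (k + 1) * (k + 1)! * M (k + 1)), hratio]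
    have := hM k
    have := hM (k + 1)
    field_simp

theorem CMAt.exists_bound_of_isCompact [IsWeightSequence M] {g : E → F} {K : Set E}
    (hK : IsCompact K) (h : ∀ z ∈ K, CMAt M g z) :
    ∃ A B : ℝ, 0 < A ∧ 0 < B ∧ ∀ z ∈ K, ContDiffAt ℝ ∞ g z ∧
      ∀ k : ℕ, ‖iteratedFDeriv ℝ k g z‖ ≤ A * B ^ k * k ! * M k := by
  refine hK.induction_on ⟨1, 1, one_pos, one_pos, by simp⟩ ?_ ?_ fun x hx => ?_
  · rintro s t hst ⟨A, B, hA, hB, h⟩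
    exact ⟨A, B, hA, hB, fun z hz => h z (hst hz)⟩
  · rintro s t ⟨A, B, hA, hB, h⟩ ⟨A', B', hA', hB', h'⟩
    refine ⟨A + A', B + B', by positivity, by positivity, ?_⟩
    rintro z (hz | hz)
    · exact ⟨(h z hz).1, fun k => ((h z hz).2 k).trans
        (bound_mono hA.le hB.le (by linarith) (by linarith) k)⟩
    · exact ⟨(h' z hz).1, fun k => ((h' z hz).2 k).trans
        (bound_mono hA'.le hB'.le (by linarith) (by linarith) k)⟩
  · obtain ⟨A, B, hA, hB, h⟩ := h x hx
    exact ⟨_, mem_nhdsWithin_of_mem_nhds h, A, B, hA, hB, fun z hz => hz⟩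

namespace CMAt
variable [IsQuasianalytic M]

theorem eq_zero_of_forall_mem_segment {g : E → ℝ} {x y : E} (h : ∀ z ∈ segment ℝ x y, CMAt M g z)
    (h0 : ∀ k, iteratedDeriv k (fun t : ℝ => g (x + t • (y - x))) 0 = 0) : g y = 0 := by
  have hK : IsCompact (segment ℝ x y) := by
    rw [segment_eq_image']
    exact isCompact_Icc.image (by fun_prop)
  obtain ⟨A, B, hA, hB, hb⟩ := exists_bound_of_isCompact hK h
  set L : ℝ →L[ℝ] E := ContinuousLinearMap.toSpanSingleton ℝ (y - x)
  have hL (t : ℝ) : x + t • (y - x) = L t + x := by simp [L, add_comm]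
  have hmem (t : ℝ) (ht : t ∈ Icc (0 : ℝ) 1) : L t + x ∈ segment ℝ x y := by
    rw [segment_eq_image']
    exact ⟨t, ht, hL t⟩
  simp only [hL] at h0
  have hbL (t : ℝ) (ht : t ∈ Icc (0 : ℝ) 1) (k : ℕ) :
      |iteratedDeriv k (fun t => g (L t + x)) t| ≤ A * (B * (‖L‖ + 1)) ^ k * k ! * M k := by
    have : 0 < M k := IsWeightSequence.pos k
    rw [← Real.norm_eq_abs, ← norm_iteratedFDeriv_eq_norm_iteratedDeriv]
    calc _ ≤ ‖iteratedFDeriv ℝ k g (L t + x)‖ * ‖L‖ ^ k :=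
          norm_iteratedFDeriv_comp_affine_le L x (hb _ (hmem t ht)).1 k
      _ ≤ (A * B ^ k * k ! * M k) * (‖L‖ + 1) ^ k := by
          gcongr
          · exact (hb _ (hmem t ht)).2 k
          · linarith
      _ = _ := by rw [mul_pow]; ring
  have hg1 : g (L 1 + x) = 0 :=
    eq_zero_of_iteratedDeriv_eq_zero (f := fun t => g (L t + x)) hA (by positivity)
      (fun t ht => ContDiffAt.comp (f := fun t => L t + x) t (hb _ (hmem t ht)).1 (by fun_prop))
      hbL h0 (right_mem_Icc.2 zero_le_one)
  simpa [← hL] using hg1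

theorem eq_zero_of_eventuallyEq_zero {g : E → ℝ} {s : Set E} (hs : Convex ℝ s)
    (h : ∀ z ∈ s, CMAt M g z) {x y : E} (hx : x ∈ s) (hg : g =ᶠ[𝓝 x] 0) (hy : y ∈ s) :
    g y = 0 := by
  refine eq_zero_of_forall_mem_segment (x := x)
    (fun z hz => h z (hs.segment_subset hx hy hz)) fun k => ?_
  have hline : ContinuousAt (fun t : ℝ => x + t • (y - x)) 0 := by fun_prop
  have hg0 : ∀ᶠ z in 𝓝 (x + (0 : ℝ) • (y - x)), g z = 0 := by
    rwa [zero_smul, add_zero]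
  have hzero : (fun t : ℝ => g (x + t • (y - x))) =ᶠ[𝓝 0] fun _ => 0 := hline.eventually hg0
  simp [hzero.iteratedDeriv_eq k]

theorem eventuallyEq_zero_or_of_mul {f h : E → ℝ} {c : E} (hf : CMAt M f c) (hh : CMAt M h c)
    (hfh : ∀ᶠ x in 𝓝 c, f x * h x = 0) : f =ᶠ[𝓝 c] 0 ∨ h =ᶠ[𝓝 c] 0 := by
  obtain ⟨r, hr, hb⟩ :=
    Metric.eventually_nhds_iff_ball.1 ((hf.eventually.and hh.eventually).and hfh)
  by_cases hf0 : ∀ x ∈ Metric.ball c r, f x = 0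
  · exact Or.inl (eventually_of_mem (Metric.ball_mem_nhds c hr) hf0)
  · push Not at hf0
    obtain ⟨x, hx, hfx⟩ := hf0
    have hhx : h =ᶠ[𝓝 x] 0 := by
      filter_upwards [(hb x hx).1.1.continuousAt.eventually_ne hfx,
        Metric.isOpen_ball.mem_nhds hx] with z hz hz'
      exact (mul_eq_zero.1 (hb z hz').2).resolve_left hz
    refine Or.inr (eventually_of_mem (Metric.ball_mem_nhds c hr) fun y hy => ?_)
    exact eq_zero_of_eventuallyEq_zero (convex_ball c r) (fun z hz => (hb z hz).1.2) hx hhx hy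

theorem exists_iteratedDeriv_ne_zero {g : E → ℝ} {a : E} (h : CMAt M g a)
    (hg : ¬ g =ᶠ[𝓝 a] 0) :
    ∃ (v : E) (d : ℕ), iteratedDeriv d (fun t : ℝ => g (a + t • v)) 0 ≠ 0 := by
  contrapose! hg
  obtain ⟨r, hr, hb⟩ := Metric.eventually_nhds_iff_ball.1 h.eventually
  filter_upwards [Metric.ball_mem_nhds a hr] with y hy
  exact eq_zero_of_forall_mem_segment (x := a) (fun z hz => hb z
    ((convex_ball a r).segment_subset (Metric.mem_ball_self hr) hy hz)) fun k => hg (y - a) k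

end CMAt

end Quasianalytic

/-! ### Normal crossings -/

section Monomial
variable {ι : Type*}

theorem multiIndex_induction [Finite ι] [DecidableEq ι] {P : (ι → ℕ) → Prop} (zero : P 0)
    (single_add : ∀ j β, P β → P (Pi.single j 1 + β)) (α : ι → ℕ) : P α := by
  have := Fintype.ofFinite ι
  induction hn : ∑ i, α i generalizing α with
  | zero => rwa [show α = 0 from funext fun i => by simpa using Finset.sum_eq_zero_iff.1 hn i]
  | succ n ih =>
    obtain ⟨j, -, hj⟩ := Finset.exists_ne_zero_of_sum_ne_zero (hn.trans_ne n.succ_ne_zero)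
    have hle : Pi.single j 1 ≤ α := by
      rw [← Function.update_eq_self j α, Pi.single, update_le_update_iff]
      exact ⟨Nat.one_le_iff_ne_zero.2 hj, fun _ _ => zero_le⟩
    rw [← add_tsub_cancel_of_le hle] at hn ⊢
    refine single_add j _ (ih _ ?_)
    simp only [Pi.add_apply, Finset.sum_add_distrib, Finset.sum_pi_single', Finset.mem_univ,
      if_true] at hn
    omega

variable [Fintype ι]

/-- The monomial `(x - c) ^ α` centered at `c`. -/
def monomialAt (c : ι → ℝ) (α : ι → ℕ) (x : ι → ℝ) : ℝ :=
  ∏ i, (x i - c i) ^ α i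

theorem monomialAt_zero (c x : ι → ℝ) : monomialAt c 0 x = 1 := by
  simp [monomialAt]

theorem monomialAt_add (c : ι → ℝ) (α β : ι → ℕ) (x : ι → ℝ) :
    monomialAt c (α + β) x = monomialAt c α x * monomialAt c β x := by
  simp [monomialAt, pow_add, Finset.prod_mul_distrib]

theorem monomialAt_single [DecidableEq ι] (c : ι → ℝ) (j : ι) (k : ℕ) (x : ι → ℝ) :
    monomialAt c (Pi.single j k) x = (x j - c j) ^ k := by
  rw [monomialAt, Finset.prod_eq_single j (fun i _ hi => by simp [hi]) (by simp), Pi.single_eq_same]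

theorem monomialAt_single_add [DecidableEq ι] (c : ι → ℝ) (j : ι) (β : ι → ℕ) (x : ι → ℝ) :
    monomialAt c (Pi.single j 1 + β) x = (x j - c j) * monomialAt c β x := by
  rw [monomialAt_add, monomialAt_single, pow_one]

theorem monomialAt_smul (c : ι → ℝ) (k : ℕ) (α : ι → ℕ) (x : ι → ℝ) :
    monomialAt c (k • α) x = monomialAt c α x ^ k := by
  simp only [monomialAt, Pi.smul_apply, smul_eq_mul, ← Finset.prod_pow, ← pow_mul, mul_comm k]

theorem monomialAt_self (c : ι → ℝ) {α : ι → ℕ} (h : α ≠ 0) : monomialAt c α c = 0 := by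
  obtain ⟨i, hi⟩ := Function.ne_iff.1 h
  exact Finset.prod_eq_zero (Finset.mem_univ i) (by simpa using hi)

theorem exists_eq_of_monomialAt_eq_zero {c x : ι → ℝ} {α : ι → ℕ} (h : monomialAt c α x = 0) :
    ∃ i, x i = c i ∧ α i ≠ 0 := by
  obtain ⟨i, -, hi⟩ := Finset.prod_eq_zero_iff.1 h
  exact ⟨i, sub_eq_zero.1 (eq_zero_of_pow_eq_zero hi), fun h0 => by simp [h0] at hi⟩

end Monomial

theorem exists_ne_zero_of_eventually_nhds {E : Type*} [NormedAddCommGroup E] [NormedSpace ℝ E]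
    {c : E} {P : E → Prop} (h : ∀ᶠ x in 𝓝 c, P x) (w : E) : ∃ δ : ℝ, δ ≠ 0 ∧ P (c + δ • w) := by
  have hline : Tendsto (fun δ : ℝ => c + δ • w) (𝓝 0) (𝓝 c) := by
    simpa using (by fun_prop : Continuous fun δ : ℝ => c + δ • w).tendsto 0
  obtain ⟨δ, hP, hδ⟩ := (((hline.mono_left nhdsWithin_le_nhds).eventually h).and
    (eventually_mem_nhdsWithin (s := {0}ᶜ))).exists
  exact ⟨δ, hδ, hP⟩

section NormalCrossing
variable {M : ℕ → ℝ} {ι : Type*} [Fintype ι] {c : ι → ℝ}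

/-- `h` has normal crossings at `c`: near `c` it is a monomial centered at `c` times a nowhere
vanishing function of class `C_M`. -/
def NormalCrossingAt (M : ℕ → ℝ) (h : (ι → ℝ) → ℝ) (c : ι → ℝ) : Prop :=
  ∃ (α : ι → ℕ) (u : (ι → ℝ) → ℝ), CMAt M u c ∧ u c ≠ 0 ∧
    ∀ᶠ x in 𝓝 c, h x = monomialAt c α x * u x

theorem NormalCrossingAt.eventually_exists_eq {h : (ι → ℝ) → ℝ} (H : NormalCrossingAt M h c) :
    ∀ᶠ x in 𝓝 c, h x = 0 → ∃ i, x i = c i := by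
  obtain ⟨α, u, hu, hu0, he⟩ := H
  filter_upwards [he, hu.continuousAt.eventually_ne hu0] with x hx hux h0
  obtain ⟨i, hi, -⟩ := exists_eq_of_monomialAt_eq_zero
    ((mul_eq_zero.1 (hx.symm.trans h0)).resolve_right hux)
  exact ⟨i, hi⟩

theorem NormalCrossingAt.congr {h h' : (ι → ℝ) → ℝ} (H : NormalCrossingAt M h c)
    (e : h' =ᶠ[𝓝 c] h) : NormalCrossingAt M h' c := by
  obtain ⟨α, u, hu, hu0, he⟩ := H
  exact ⟨α, u, hu, hu0, e.trans he⟩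

theorem NormalCrossingAt.not_eventuallyEq_zero {h : (ι → ℝ) → ℝ} (H : NormalCrossingAt M h c) :
    ¬ h =ᶠ[𝓝 c] 0 := by
  obtain ⟨α, u, hu, hu0, he⟩ := H
  intro hz
  obtain ⟨δ, hδ, ⟨hmon, hzero⟩, hune⟩ := exists_ne_zero_of_eventually_nhds
    ((he.and hz).and (hu.continuousAt.eventually_ne hu0)) 1
  have hprod : monomialAt c α (c + δ • 1) * u (c + δ • 1) = 0 := hmon.symm.trans hzero
  obtain ⟨i, hi, -⟩ :=
    exists_eq_of_monomialAt_eq_zero ((mul_eq_zero.1 hprod).resolve_right hune)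
  exact hδ (by simpa using hi)

theorem NormalCrossingAt.of_ne_zero {h : (ι → ℝ) → ℝ} (H : CMAt M h c) (h0 : h c ≠ 0) :
    NormalCrossingAt M h c :=
  ⟨0, h, H, h0, by simp [monomialAt_zero]⟩

theorem NormalCrossingAt.exists_eq_zero_of_sum_sq {κ : Type*} {s : Finset κ} {A : κ → ι → ℕ}
    {u : κ → (ι → ℝ) → ℝ} (hu : ∀ i ∈ s, ContinuousAt (u i) c) (hu0 : ∀ i ∈ s, u i c ≠ 0)
    (hA : ∀ j, ∃ i ∈ s, A i j = 0)
    (H : NormalCrossingAt M (fun x => ∑ i ∈ s, (monomialAt c (A i) x * u i x) ^ 2) c) :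
    ∃ i ∈ s, A i = 0 := by
  classical
  obtain ⟨γ, w, -, hw0, he⟩ := H
  obtain rfl : γ = 0 := by
    by_contra hγ
    obtain ⟨j, hj⟩ := Function.ne_iff.1 hγ
    obtain ⟨i, hi, hij⟩ := hA j
    obtain ⟨δ, hδ, hx, hux⟩ := exists_ne_zero_of_eventually_nhds
      (he.and ((hu i hi).eventually_ne (hu0 i hi))) (fun k => if k = j then 0 else 1)
    set x := c + δ • (fun k => if k = j then (0 : ℝ) else 1)
    have hmon : monomialAt c γ x = 0 :=
      Finset.prod_eq_zero (Finset.mem_univ j) (by simpa [x] using hj)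
    rw [hmon, zero_mul, Finset.sum_eq_zero_iff_of_nonneg fun i _ => sq_nonneg _] at hx
    obtain ⟨k, hk, hk'⟩ := exists_eq_of_monomialAt_eq_zero
      ((mul_eq_zero.1 (sq_eq_zero_iff.1 (hx i hi))).resolve_right hux)
    have hkj : k ≠ j := fun h => hk' (h ▸ hij)
    exact hδ (by simpa [x, hkj] using hk)
  have hc := he.self_of_nhds
  rw [monomialAt_zero, one_mul] at hc
  obtain ⟨i, hi, hne⟩ := Finset.exists_ne_zero_of_sum_ne_zero (hc.trans_ne hw0)
  refine ⟨i, hi, by_contra fun h => hne ?_⟩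
  rw [monomialAt_self c h, zero_mul, zero_pow two_ne_zero]

section IsWeightSequence
variable [IsWeightSequence M]

theorem CMAt.monomialAt (c : ι → ℝ) (α : ι → ℕ) (a : ι → ℝ) : CMAt M (monomialAt c α) a :=
  .prod fun i _ => ((CMAt.coord i a).sub (.const _ _)).pow _

namespace NormalCrossingAt
variable {h h' : (ι → ℝ) → ℝ}

theorem cmAt (H : NormalCrossingAt M h c) : CMAt M h c := by
  obtain ⟨α, u, hu, -, he⟩ := H
  exact ((CMAt.monomialAt c α c).mul hu).congr he

theorem mul (H : NormalCrossingAt M h c) (H' : NormalCrossingAt M h' c) :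
    NormalCrossingAt M (fun x => h x * h' x) c := by
  obtain ⟨α, u, hu, hu0, he⟩ := H
  obtain ⟨α', u', hu', hu0', he'⟩ := H'
  refine ⟨α + α', _, hu.mul hu', mul_ne_zero hu0 hu0', ?_⟩
  filter_upwards [he, he'] with x hx hx'
  rw [hx, hx', monomialAt_add]
  ring

theorem monomialAt (c : ι → ℝ) (α : ι → ℕ) : NormalCrossingAt M (monomialAt c α) c :=
  ⟨α, fun _ => 1, .const _ _, one_ne_zero, by simp⟩

theorem eventually (H : NormalCrossingAt M h c) : ∀ᶠ c' in 𝓝 c, NormalCrossingAt M h c' := by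
  classical
  obtain ⟨α, u, hu, hu0, he⟩ := H
  filter_upwards [hu.eventually, hu.continuousAt.eventually_ne hu0, he.eventually_nhds]
    with c' hu' hu0' he'
  refine ⟨fun i => if c' i = c i then α i else 0,
    fun x => (∏ i, if c' i = c i then 1 else (x i - c i) ^ α i) * u x, ?_, ?_, ?_⟩
  · refine CMAt.mul (.prod fun i _ => ?_) hu'
    split_ifs
    exacts [.const _ _, ((CMAt.coord i c').sub (.const _ _)).pow _]
  · refine mul_ne_zero (Finset.prod_ne_zero_iff.2 fun i _ => ?_) hu0'
    split_ifs with hi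
    exacts [one_ne_zero, pow_ne_zero _ (sub_ne_zero.2 hi)]
  · filter_upwards [he'] with x hx
    rw [hx, ← mul_assoc, DenjoyCarleman.monomialAt, DenjoyCarleman.monomialAt,
      ← Finset.prod_mul_distrib]
    congr 1
    refine Finset.prod_congr rfl fun i _ => ?_
    split_ifs with hi <;> simp [hi]

end NormalCrossingAt

end IsWeightSequence

end NormalCrossing

section Factor
variable {M : ℕ → ℝ} {ι : Type} [Fintype ι] {c : ι → ℝ} [IsQuasianalytic M]

theorem CMAt.eventuallyEq_of_coord_sub_mul {j : ι} {f g : (ι → ℝ) → ℝ} (hf : CMAt M f c)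
    (hg : CMAt M g c) (h : ∀ᶠ x in 𝓝 c, (x j - c j) * f x = (x j - c j) * g x) :
    f =ᶠ[𝓝 c] g := by
  have hprod : ∀ᶠ x in 𝓝 c, (x j - c j) * (f x - g x) = 0 :=
    h.mono fun x hx => by rw [mul_sub, hx, sub_self]
  rcases eventuallyEq_zero_or_of_mul ((CMAt.coord j c).sub (.const _ _)) (hf.sub hg) hprod
    with hj | hfg
  · obtain ⟨δ, hδ, hj⟩ := exists_ne_zero_of_eventually_nhds hj 1
    exact absurd (by simpa using hj) hδ
  · exact hfg.mono fun x hx => sub_eq_zero.1 hx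

variable [IsDerivationClosed M]

-- A coordinate is a prime element of the ring of germs: restrict to the hyperplane `x j = c j`,
-- where the product vanishes, and divide the factor that vanishes there.
theorem CMAt.exists_coord_sub_mul_of_mul {j : ι} {f g k : (ι → ℝ) → ℝ} (hf : CMAt M f c)
    (hg : CMAt M g c) (hk : CMAt M k c) (h : ∀ᶠ x in 𝓝 c, f x * g x = (x j - c j) * k x) :
    (∃ q, CMAt M q c ∧ (∀ᶠ x in 𝓝 c, f x = (x j - c j) * q x) ∧ ∀ᶠ x in 𝓝 c, q x * g x = k x) ∨
    ∃ q, CMAt M q c ∧ (∀ᶠ x in 𝓝 c, g x = (x j - c j) * q x) ∧ ∀ᶠ x in 𝓝 c, f x * q x = k x := by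
  classical
  let restr (x : ι → ℝ) : ι → ℝ := x - (x j - c j) • Pi.single j (1 : ℝ)
  have hr : CMAt M restr c :=
    (CMAt.id c).sub (((CMAt.coord j c).sub (.const _ _)).smul (.const _ _))
  have hrc : restr c = c := by simp [restr]
  have hrestr : ∀ᶠ x in 𝓝 c, f (restr x) * g (restr x) = 0 := by
    rw [← hrc] at h
    filter_upwards [hr.continuousAt.eventually h] with x hx
    simpa [restr] using hx
  have divide {f : (ι → ℝ) → ℝ} (hf : CMAt M f c) (hz : (fun x => f (restr x)) =ᶠ[𝓝 c] 0) :
      ∃ q, CMAt M q c ∧ ∀ᶠ x in 𝓝 c, f x = (x j - c j) * q x := by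
    obtain ⟨q, hq, he⟩ := hf.exists_eq_add_mul (ContinuousLinearMap.proj j : (ι → ℝ) →L[ℝ] ℝ)
      (Pi.single j (1 : ℝ))
    refine ⟨q, hq, ?_⟩
    filter_upwards [he, hz] with x hx hzx
    exact hx.trans (add_eq_right.2 hzx)
  rcases eventuallyEq_zero_or_of_mul (hf.comp_of_eq hr hrc) (hg.comp_of_eq hr hrc) hrestr
    with hz | hz
  · obtain ⟨q, hq, he⟩ := divide hf hz
    refine .inl ⟨q, hq, he, (hq.mul hg).eventuallyEq_of_coord_sub_mul hk (j := j) ?_⟩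
    filter_upwards [h, he] with x hx hqx
    rw [← hx, hqx, mul_assoc]
  · obtain ⟨q, hq, he⟩ := divide hg hz
    refine .inr ⟨q, hq, he, (hf.mul hq).eventuallyEq_of_coord_sub_mul hk (j := j) ?_⟩
    filter_upwards [h, he] with x hx hqx
    rw [← hx, hqx, mul_left_comm]

namespace NormalCrossingAt

theorem of_mul {f h : (ι → ℝ) → ℝ} (hf : CMAt M f c) (hh : CMAt M h c)
    (H : NormalCrossingAt M (fun x => f x * h x) c) : NormalCrossingAt M f c := by
  classical
  obtain ⟨α, u, hu, hu0, he⟩ := H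
  induction α using multiIndex_induction generalizing f h with
  | zero =>
    have hc := he.self_of_nhds
    rw [monomialAt_zero, one_mul] at hc
    exact of_ne_zero hf (left_ne_zero_of_mul (hc.trans_ne hu0))
  | single_add j β ih =>
    simp only [monomialAt_single_add, mul_assoc] at he
    rcases hf.exists_coord_sub_mul_of_mul hh ((CMAt.monomialAt c β c).mul hu) he with
      ⟨q, hq, hfq, hqh⟩ | ⟨q, hq, -, hfq⟩
    · refine ((monomialAt c (Pi.single j 1)).mul (ih hq hh hqh)).congr ?_
      filter_upwards [hfq] with x hx
      rw [hx, monomialAt_single, pow_one]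
    · exact ih hf hq hfq

theorem of_mul_right {f h : (ι → ℝ) → ℝ} (hf : CMAt M f c) (hh : CMAt M h c)
    (H : NormalCrossingAt M (fun x => f x * h x) c) : NormalCrossingAt M h c :=
  of_mul hh hf (by simpa only [mul_comm] using H)

theorem of_prod {κ : Type*} {s : Finset κ} {f : κ → (ι → ℝ) → ℝ} (hf : ∀ i ∈ s, CMAt M (f i) c)
    (H : NormalCrossingAt M (fun x => ∏ i ∈ s, f i x) c) {i : κ} (hi : i ∈ s) :
    NormalCrossingAt M (f i) c := by
  classical
  refine of_mul (hf i hi) (h := fun x => ∏ j ∈ s.erase i, f j x)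
    (.prod fun j hj => hf j (Finset.mem_of_mem_erase hj)) ?_
  exact H.congr (.of_forall fun x => Finset.mul_prod_erase s (fun j => f j x) hi)

theorem exists_forall_le_of_sum_sq {κ : Type*} {s : Finset κ} (hs : s.Nonempty)
    {A : κ → ι → ℕ} {u : κ → (ι → ℝ) → ℝ} (hu : ∀ i ∈ s, CMAt M (u i) c)
    (hu0 : ∀ i ∈ s, u i c ≠ 0)
    (H : NormalCrossingAt M
      (fun x => ∑ i ∈ s, (DenjoyCarleman.monomialAt c (A i) x * u i x) ^ 2) c) :
    ∃ i₀ ∈ s, ∀ i ∈ s, A i₀ ≤ A i := by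
  set β : ι → ℕ := fun j => s.inf' hs fun i => A i j
  have hβ (i) (hi : i ∈ s) : β ≤ A i := fun j => Finset.inf'_le (fun i => A i j) hi
  have hsplit (x : ι → ℝ) : ∑ i ∈ s, (DenjoyCarleman.monomialAt c (A i) x * u i x) ^ 2 =
      DenjoyCarleman.monomialAt c (2 • β) x *
        ∑ i ∈ s, (DenjoyCarleman.monomialAt c (A i - β) x * u i x) ^ 2 := by
    rw [Finset.mul_sum]
    refine Finset.sum_congr rfl fun i hi => ?_
    conv_lhs => rw [← add_tsub_cancel_of_le (hβ i hi), monomialAt_add]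
    rw [monomialAt_smul]
    ring
  simp only [hsplit] at H
  obtain ⟨i₀, hi₀, h0⟩ := (of_mul_right (.monomialAt c _ c)
    (.sum fun i hi => ((CMAt.monomialAt c _ c).mul (hu i hi)).pow 2) H).exists_eq_zero_of_sum_sq
    (fun i hi => (hu i hi).continuousAt) hu0 fun j => by
      obtain ⟨i, hi, hij⟩ := Finset.exists_mem_eq_inf' hs fun i => A i j
      exact ⟨i, hi, Nat.sub_eq_zero_of_le hij.ge⟩
  exact ⟨i₀, hi₀, fun i hi => (tsub_eq_zero_iff_le.1 h0).trans (hβ i hi)⟩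

end NormalCrossingAt

end Factor

/-! ### Resolution by charts -/

section ChartCovered
variable {M : ℕ → ℝ} {N : ℕ} {Y Z : Type*} [NormedAddCommGroup Y] [NormedSpace ℝ Y]
  [NormedAddCommGroup Z] [NormedSpace ℝ Z]

/-- A set is `ChartCovered M N g` if it is contained in a finite union of images `f '' K`, where
`K ⊆ ℝᴺ` is compact, `f` is of class `C_M` at the points of `K` and `g ∘ f` has normal crossings
there. The maps `f` are arbitrary: they are not assumed to be local diffeomorphisms. -/
inductive ChartCovered (M : ℕ → ℝ) (N : ℕ) {Y : Type*} [NormedAddCommGroup Y] [NormedSpace ℝ Y]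
    (g : Y → ℝ) : Set Y → Prop
  | chart (f : (Fin N → ℝ) → Y) (K : Set (Fin N → ℝ)) (hK : IsCompact K)
      (h : ∀ c ∈ K, CMAt M f c ∧ NormalCrossingAt M (fun x => g (f x)) c) :
      ChartCovered M N g (f '' K)
  | empty : ChartCovered M N g ∅
  | union (S T : Set Y) (hS : ChartCovered M N g S) (hT : ChartCovered M N g T) :
      ChartCovered M N g (S ∪ T)
  | mono (S T : Set Y) (hST : S ⊆ T) (hT : ChartCovered M N g T) : ChartCovered M N g S

/-- `g` is resolvable at `a`: some neighbourhood of `a` is covered by finitely many compact charts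
in which `g` has normal crossings. This is the weak form of resolution of singularities that the
argument needs. -/
def ResolvableAt (M : ℕ → ℝ) (N : ℕ) (g : Y → ℝ) (a : Y) : Prop :=
  ∃ S ∈ 𝓝 a, ChartCovered M N g S

theorem ResolvableAt.eventually {g : Y → ℝ} {a : Y} (h : ResolvableAt M N g a) :
    ∀ᶠ x in 𝓝 a, ResolvableAt M N g x := by
  obtain ⟨S, hS, hc⟩ := h
  filter_upwards [eventually_mem_nhds_iff.2 hS] with x hx using ⟨S, hx, hc⟩

theorem ChartCovered.induction_inter {g : Y → ℝ} {C : Set Y} (hC : IsClosed C) {P : Set Y → Prop}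
    (chart : ∀ (f : (Fin N → ℝ) → Y) (K : Set (Fin N → ℝ)), IsCompact K →
      (∀ c ∈ K, f c ∈ C ∧ CMAt M f c ∧ NormalCrossingAt M (fun x => g (f x)) c) → P (f '' K))
    (empty : P ∅) (union : ∀ S T, S ⊆ C → T ⊆ C → P S → P T → P (S ∪ T))
    (mono : ∀ S T, S ⊆ T → P T → P S) {S : Set Y} (hS : ChartCovered M N g S) : P (S ∩ C) := by
  induction hS with
  | chart f K hK hf =>
    have hcont : ContinuousOn f K := fun c hc => (hf c hc).1.continuousAt.continuousWithinAt
    rw [← image_inter_preimage]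
    exact chart f _ (hK.of_isClosed_subset (hcont.preimage_isClosed_of_isClosed hK.isClosed hC)
      inter_subset_left) fun c hc => ⟨hc.2, hf c hc.1⟩
  | empty => rwa [empty_inter]
  | union S T _ _ hS hT =>
    rw [union_inter_distrib_right]
    exact union _ _ inter_subset_right inter_subset_right hS hT
  | mono S T hST _ hT => exact mono _ _ (inter_subset_inter_left _ hST) hT

variable [IsWeightSequence M]

theorem ChartCovered.image_inter {h : Z → ℝ} {g : Y → ℝ} {ψ : Z → Y} {C : Set Z} (hC : IsClosed C)
    (hψ : ∀ c ∈ C, CMAt M ψ c ∧ h =ᶠ[𝓝 c] fun z => g (ψ z)) {S : Set Z}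
    (hS : ChartCovered M N h S) : ChartCovered M N g (ψ '' (S ∩ C)) := by
  refine hS.induction_inter (P := fun T => ChartCovered M N g (ψ '' T)) hC ?_ ?_ ?_ ?_
  · intro f K hK hf
    rw [← image_comp]
    refine .chart _ K hK fun c hc => ?_
    obtain ⟨hcC, hfc, hnc⟩ := hf c hc
    obtain ⟨hψc, e⟩ := hψ _ hcC
    exact ⟨hψc.comp hfc, hnc.congr (hfc.continuousAt.eventually (e.mono fun _ => Eq.symm))⟩
  · rw [image_empty]
    exact .empty
  · intro S T _ _ hS hT
    rw [image_union]
    exact .union _ _ hS hT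
  · exact fun S T hST hT => .mono _ _ (image_mono hST) hT

theorem ChartCovered.image_of_isCompact {g : Y → ℝ} {ψ : Z → Y} {K : Set Z} (hK : IsCompact K)
    (h : ∀ c ∈ K, CMAt M ψ c ∧ ResolvableAt M N (fun z => g (ψ z)) c) :
    ChartCovered M N g (ψ '' K) := by
  rw [← inter_self K]
  refine hK.induction_on (p := fun T => ChartCovered M N g (ψ '' (T ∩ K))) ?_ ?_ ?_ ?_
  · simpa using ChartCovered.empty
  · exact fun S T hST hT => .mono _ _ (image_mono (inter_subset_inter_left _ hST)) hT
  · intro S T hS hT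
    rw [union_inter_distrib_right, image_union]
    exact .union _ _ hS hT
  · intro c hc
    obtain ⟨S, hS, hcov⟩ := (h c hc).2
    exact ⟨S, mem_nhdsWithin_of_mem_nhds hS,
      hcov.image_inter hK.isClosed fun c hc => ⟨(h c hc).1, .rfl⟩⟩

theorem ChartCovered.exists_image_mem {g : Y → ℝ} {h : Z → ℝ} {ψ : Z → Y} {c : Z}
    (hψ : CMAt M ψ c) (e : h =ᶠ[𝓝 c] fun z => g (ψ z)) (hr : ResolvableAt M N h c) :
    ∃ S ∈ 𝓝 c, ChartCovered M N g (ψ '' S) := by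
  obtain ⟨S, hS, hcov⟩ := hr
  obtain ⟨C, hC, hclosed, hsub⟩ :=
    exists_mem_nhds_isClosed_subset (hψ.eventually.and e.eventuallyEq_nhds)
  exact ⟨S ∩ C, inter_mem hS hC, hcov.image_inter hclosed fun c hc => hsub hc⟩

namespace ResolvableAt

theorem of_map {g : Y → ℝ} {h : Z → ℝ} {ψ : Z → Y} {c : Z} (hψ : CMAt M ψ c)
    (e : h =ᶠ[𝓝 c] fun z => g (ψ z)) (hr : ResolvableAt M N h c)
    (hmap : 𝓝 (ψ c) ≤ map ψ (𝓝 c)) : ResolvableAt M N g (ψ c) :=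
  let ⟨_, hS, hcov⟩ := ChartCovered.exists_image_mem hψ e hr
  ⟨_, hmap (image_mem_map hS), hcov⟩

theorem congr {g h : Y → ℝ} {c : Y} (hr : ResolvableAt M N h c)
    (e : g =ᶠ[𝓝 c] h) : ResolvableAt M N g c :=
  of_map (CMAt.id c) e.symm hr map_id'.ge

theorem of_equiv {g : Y → ℝ} (L : Z ≃L[ℝ] Y) {c : Z}
    (hr : ResolvableAt M N (fun z => g (L z)) c) : ResolvableAt M N g (L c) :=
  of_map (CMAt.of_clm (L : Z →L[ℝ] Y) c) .rfl hr (L.toHomeomorph.map_nhds_eq c).ge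

theorem of_normalCrossingAt {g : (Fin N → ℝ) → ℝ} {c : Fin N → ℝ} (h : NormalCrossingAt M g c) :
    ResolvableAt M N g c := by
  obtain ⟨C, hC, hsub, hcpt⟩ := local_compact_nhds h.eventually
  have hcov := ChartCovered.chart (g := g) (fun x => x) C hcpt fun c hc => ⟨.id c, hsub hc⟩
  exact ⟨C, hC, by rwa [image_id'] at hcov⟩

theorem of_monomialAt_mul_pow_mul {m : ℕ} {G : (Fin m → ℝ) × ℝ → ℝ} {c : Fin m → ℝ} {y : ℝ}
    {α : Fin m → ℕ} {k : ℕ} {u : (Fin m → ℝ) × ℝ → ℝ} (hu : CMAt M u (c, y)) (hu0 : u (c, y) ≠ 0)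
    (h : ∀ᶠ z in 𝓝 (c, y), G z = monomialAt c α z.1 * (z.2 - y) ^ k * u z) :
    ResolvableAt M (m + 1) G (c, y) := by
  let L : (Fin (m + 1) → ℝ) ≃L[ℝ] (Fin m → ℝ) × ℝ :=
    (Fin.consEquivL ℝ fun _ => ℝ).symm.trans (.prodComm ℝ ℝ _)
  have hL (x) : L x = (Fin.tail x, x 0) := rfl
  have hc : L (Fin.cons y c) = (c, y) := by simp [hL]
  rw [← hc] at h ⊢
  refine of_equiv L (of_normalCrossingAt ⟨Fin.cons k α, fun x => u (L x),
    hu.comp_of_eq (.of_clm (L : (Fin (m + 1) → ℝ) →L[ℝ] (Fin m → ℝ) × ℝ) _) hc,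
    by simpa only [hc], ?_⟩)
  filter_upwards [L.continuous.continuousAt.eventually h] with x hx
  rw [hx, hL, monomialAt, monomialAt, Fin.prod_univ_succ]
  simp only [Fin.cons_zero, Fin.cons_succ, Fin.tail]
  ring

theorem lift {m : ℕ} {P : (Fin m → ℝ) → ℝ} {a : Fin m → ℝ} {b : ℝ} {G : (Fin m → ℝ) × ℝ → ℝ}
    (hP : ResolvableAt M m P a) {V : Set (Fin m → ℝ)} (hV : V ∈ 𝓝 a) {ε : ℝ} (hε : 0 < ε)
    (h : ∀ (f : (Fin m → ℝ) → Fin m → ℝ) c, CMAt M f c → f c ∈ V →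
      NormalCrossingAt M (fun x => P (f x)) c → ∀ y ∈ Icc (b - ε) (b + ε),
        ResolvableAt M (m + 1) (fun z => G (f z.1, z.2)) (c, y)) :
    ResolvableAt M (m + 1) G (a, b) := by
  obtain ⟨S, hS, hcov⟩ := hP
  obtain ⟨C, hC, hsub, hcpt⟩ := local_compact_nhds hV
  refine ⟨_, prod_mem_nhds (inter_mem hS hC)
    (Icc_mem_nhds (sub_lt_self b hε) (lt_add_of_pos_right b hε)), ?_⟩
  refine hcov.induction_inter
    (P := fun T => ChartCovered M (m + 1) G (T ×ˢ Icc (b - ε) (b + ε))) hcpt.isClosed ?_ ?_ ?_ ?_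
  · intro f K hK hf
    have himage := (prodMap_image_prod f id K (Icc (b - ε) (b + ε))).symm
    rw [image_id] at himage
    rw [himage]
    refine .image_of_isCompact (hK.prod isCompact_Icc) ?_
    rintro ⟨c, y⟩ ⟨hc, hy⟩
    obtain ⟨hcC, hfc, hnc⟩ := hf c hc
    exact ⟨.prodMk (hfc.comp (CMAt.id (c, y)).fst) (CMAt.id _).snd, h f c hfc (hsub hcC) hnc y hy⟩
  · rw [empty_prod]
    exact .empty
  · intro S T _ _ hS hT
    rw [union_prod]
    exact .union _ _ hS hT
  · exact fun S T hST hT => .mono _ _ (prod_mono_left hST) hT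

end ResolvableAt

end ChartCovered

/-! ### Taylor expansion along fibres -/

section FiberDeriv
variable {E : Type*} [NormedAddCommGroup E] [NormedSpace ℝ E]

theorem iteratedDeriv_sum_add_mul_pow (n : ℕ) (c : ℕ → ℝ) (C y : ℝ) :
    iteratedDeriv n (fun y => ∑ i ∈ Finset.range n, c i * y ^ i + C * y ^ (n + 1)) y =
      C * (n + 1)! * y := by
  rw [iteratedDeriv_fun_add (by fun_prop) (by fun_prop),
    iteratedDeriv_fun_sum fun _ _ => by fun_prop, Finset.sum_eq_zero, iteratedDeriv_const_mul_field,
    iteratedDeriv_pow, zero_add, Nat.add_sub_cancel_left, pow_one, mul_assoc,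
    ← Nat.factorial_mul_descFactorial n.le_succ]
  · simp only [Nat.succ_eq_add_one, Nat.add_sub_cancel_left, Nat.factorial_one, one_mul]
  · intro i hi
    rw [iteratedDeriv_const_mul_field, iteratedDeriv_pow,
      Nat.descFactorial_of_lt (Finset.mem_range.1 hi), Nat.cast_zero, zero_mul, mul_zero]

theorem iteratedDeriv_zero_eq_of_eventuallyEq_sum {F G : ℝ → ℝ} {c : ℕ → ℝ} {k n : ℕ} (hk : k < n)
    (hG : ContDiffAt ℝ ∞ G 0)
    (h : F =ᶠ[𝓝 0] fun y => ∑ i ∈ Finset.range n, c i * y ^ i + y ^ n * G y) :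
    iteratedDeriv k F 0 = k ! * c k := by
  have hG' : ContDiffAt ℝ k G 0 := hG.of_le (mod_cast le_top)
  have hremainder : iteratedDeriv k (fun y => y ^ n * G y) 0 = 0 := by
    rw [iteratedDeriv_fun_mul (by fun_prop) hG']
    refine Finset.sum_eq_zero fun i hi => ?_
    have hi' : i ≠ n := ((Finset.mem_range_succ_iff.1 hi).trans_lt hk).ne
    rw [iteratedDeriv_fun_pow_zero, if_neg hi', Nat.cast_zero, mul_zero, zero_mul]
  rw [h.iteratedDeriv_eq, iteratedDeriv_fun_add (by fun_prop) (by fun_prop), hremainder,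
    iteratedDeriv_fun_sum fun _ _ => by fun_prop]
  simp only [iteratedDeriv_const_mul_field, iteratedDeriv_fun_pow_zero]
  simp [hk, mul_comm]

theorem injOn_of_hasDerivAt_ne_zero {f f' : ℝ → ℝ} {s : Set ℝ} (hs : s.OrdConnected)
    (hf : ∀ x ∈ s, HasDerivAt f (f' x) x) (h : ∀ x ∈ s, f' x ≠ 0) : InjOn f s := by
  intro x hx y hy hxy
  by_contra! hne
  wlog hlt : x < y generalizing x y
  · exact this hy hx hxy.symm hne.symm (hne.lt_or_gt.resolve_left hlt)
  have hsub := hs.out hx hy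
  obtain ⟨t, ht, ht0⟩ := exists_hasDerivAt_eq_zero hlt
    (fun t ht => (hf t (hsub ht)).continuousAt.continuousWithinAt) hxy
    fun t ht => hf t (hsub (Ioo_subset_Icc_self ht))
  exact h t (hsub (Ioo_subset_Icc_self ht)) ht0

/-- The `k`-th derivative of `g : E × ℝ → ℝ` in the last variable. -/
noncomputable def fiberDeriv (k : ℕ) (g : E × ℝ → ℝ) (z : E × ℝ) : ℝ :=
  iteratedDeriv k (fun y => g (z.1, y)) z.2

variable {M : ℕ → ℝ} {g : E × ℝ → ℝ}

theorem contDiffAt_fiber {x : E} {y : ℝ} (h : CMAt M g (x, y)) :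
    ContDiffAt ℝ ∞ (fun y => g (x, y)) y :=
  ContDiffAt.comp (g := g) (f := fun y => (x, y)) y h.contDiffAt (by fun_prop)

theorem hasDerivAt_fiberDeriv (k : ℕ) {x : E} {y : ℝ} (h : CMAt M g (x, y)) :
    HasDerivAt (fun y => fiberDeriv k g (x, y)) (fiberDeriv (k + 1) g (x, y)) y :=
  hasDerivAt_iteratedDeriv (contDiffAt_fiber h) k

theorem fiberDeriv_succ_eq {k : ℕ} {z : E × ℝ} (hg : CMAt M g z)
    (h : DifferentiableAt ℝ (fiberDeriv k g) z) :
    fiberDeriv (k + 1) g z = fderiv ℝ (fiberDeriv k g) z (0, 1) := by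
  have hline : HasDerivAt (fun y : ℝ => (z.1, y)) ((0 : E), (1 : ℝ)) z.2 :=
    (hasDerivAt_const z.2 z.1).prodMk (hasDerivAt_id z.2)
  exact (hasDerivAt_fiberDeriv k hg).unique
    (h.hasFDerivAt.comp_hasDerivAt (f := fun y => (z.1, y)) z.2 hline)

theorem CMAt.fiberDeriv [IsDerivationClosed M] {z : E × ℝ} (h : CMAt M g z) (k : ℕ) :
    CMAt M (fiberDeriv k g) z := by
  induction k generalizing z with
  | zero => exact h
  | succ k ih =>
    refine ((ih h).fderiv.clm_comp (ContinuousLinearMap.apply ℝ ℝ ((0, 1) : E × ℝ))).congr ?_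
    filter_upwards [h.eventually] with z hz using fiberDeriv_succ_eq hz (ih hz).differentiableAt

end FiberDeriv

section Taylor
variable {E : Type} [NormedAddCommGroup E] [NormedSpace ℝ E] {M : ℕ → ℝ} {g : E × ℝ → ℝ}

theorem CMAt.exists_eq_sum_add_pow_mul [IsDerivationClosed M] {a : E} (hg : CMAt M g (a, 0))
    (n : ℕ) :
    ∃ (A : ℕ → E → ℝ) (q : E × ℝ → ℝ), (∀ i, CMAt M (A i) a) ∧ CMAt M q (a, 0) ∧
      ∀ᶠ z in 𝓝 (a, (0 : ℝ)),
        g z = ∑ i ∈ Finset.range n, A i z.1 * z.2 ^ i + z.2 ^ n * q z := by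
  induction n with
  | zero => exact ⟨fun _ _ => 0, g, fun _ => const _ _, hg, by simp⟩
  | succ n ih =>
    obtain ⟨A, q, hA, hq, hgq⟩ := ih
    obtain ⟨q', hq', hqq'⟩ := hq.exists_eq_add_mul (ContinuousLinearMap.snd ℝ E ℝ) (0, 1)
    have hq0 : CMAt M (fun x => q (x, 0)) a :=
      comp (g := q) (f := fun x => (x, (0 : ℝ))) hq ((CMAt.id a).prodMk (const _ _))
    refine ⟨Function.update A n fun x => q (x, 0), q', fun i => ?_, hq', ?_⟩
    · obtain rfl | h := eq_or_ne i n
      · rwa [Function.update_self]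
      · rw [Function.update_of_ne h]
        exact hA i
    · filter_upwards [hgq, hqq'] with z hz hz'
      have hproj : z - z.2 • ((0 : E), (1 : ℝ)) = (z.1, 0) := by ext <;> simp
      simp only [ContinuousLinearMap.coe_snd', sub_zero, hproj] at hz'
      have hcoeff : ∀ i ∈ Finset.range n,
          Function.update A n (fun x => q (x, 0)) i z.1 * z.2 ^ i = A i z.1 * z.2 ^ i :=
        fun i hi => by rw [Function.update_of_ne (Finset.mem_range.1 hi).ne]
      rw [Finset.sum_range_succ, Finset.sum_congr rfl hcoeff, Function.update_self, hz, hz']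
      ring

theorem fiberDeriv_eq_factorial_mul {x : E} {n k : ℕ} (hk : k < n) {A : ℕ → E → ℝ}
    {q : E × ℝ → ℝ} (hq : CMAt M q (x, 0))
    (h : ∀ᶠ z in 𝓝 (x, (0 : ℝ)),
      g z = ∑ i ∈ Finset.range n, A i z.1 * z.2 ^ i + z.2 ^ n * q z) :
    fiberDeriv k g (x, 0) = k ! * A k x :=
  have hline : ContinuousAt (fun y : ℝ => (x, y)) 0 := by fun_prop
  iteratedDeriv_zero_eq_of_eventuallyEq_sum (c := fun i => A i x) hk (contDiffAt_fiber hq)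
    (hline.eventually h)

end Taylor

/-! ### Weighted forms and blowing up -/

section BlowUp
variable {ι : Type*}

/-- The chart `y = x j * y'` of the blow-up of `{x j = y = 0}`. -/
def blowUpX (j : ι) (z : (ι → ℝ) × ℝ) : (ι → ℝ) × ℝ :=
  (z.1, z.1 j * z.2)

theorem blowUpX_zero (j : ι) (y : ℝ) : blowUpX j (0, y) = 0 := by
  simp [blowUpX]

theorem cmAt_blowUpX [Fintype ι] {M : ℕ → ℝ} [IsWeightSequence M] (j : ι)
    (z : (ι → ℝ) × ℝ) : CMAt M (blowUpX j) z :=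
  (CMAt.id z).fst.prodMk (((CMAt.id z).fst.apply j).mul (CMAt.id z).snd)

variable [DecidableEq ι]

/-- The chart `x j = y * x' j` of the blow-up of `{x j = y = 0}`. -/
def blowUpY (j : ι) (z : (ι → ℝ) × ℝ) : (ι → ℝ) × ℝ :=
  (Function.update z.1 j (z.2 * z.1 j), z.2)

theorem blowUpY_zero (j : ι) : blowUpY j 0 = 0 := by
  ext i <;> simp [blowUpY]

variable [Fintype ι]

theorem cmAt_blowUpY {M : ℕ → ℝ} [IsWeightSequence M] (j : ι) (z : (ι → ℝ) × ℝ) :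
    CMAt M (blowUpY j) z := by
  refine .prodMk (.pi fun i => ?_) (CMAt.id z).snd
  obtain rfl | h := eq_or_ne i j
  · simpa only [Function.update_self] using (CMAt.id z).snd.mul ((CMAt.id z).fst.apply i)
  · simpa only [Function.update_of_ne h] using (CMAt.id z).fst.apply i

theorem monomialAt_blowUpY (j : ι) (α : ι → ℕ) (z : (ι → ℝ) × ℝ) :
    monomialAt 0 α (blowUpY j z).1 = z.2 ^ α j * monomialAt 0 α z.1 := by
  simp only [monomialAt, blowUpY, Pi.zero_apply, sub_zero]
  rw [← Finset.mul_prod_erase _ _ (Finset.mem_univ j), ← Finset.mul_prod_erase _ _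
    (Finset.mem_univ j), Function.update_self, mul_pow, mul_assoc]
  congr 2
  exact Finset.prod_congr rfl fun i hi => by rw [Function.update_of_ne (Finset.ne_of_mem_erase hi)]

theorem mem_image_blowUpX_or_blowUpY (j : ι) {δ ε : ℝ} (hε : 0 < ε) {z : (ι → ℝ) × ℝ}
    (hδ : ‖z.1‖ ≤ δ) (hz : ‖z‖ ≤ ε) :
    z ∈ blowUpX j '' Metric.closedBall 0 δ ×ˢ Metric.closedBall 0 ε⁻¹ ∪
      blowUpY j '' Metric.closedBall 0 ε := by
  obtain ⟨t, y⟩ := z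
  obtain ⟨ht, hy⟩ := norm_prod_le_iff.1 hz
  rcases le_or_gt ‖y‖ (ε⁻¹ * ‖t j‖) with h | h
  · left
    obtain h0 | h0 := eq_or_ne (t j) 0
    · have hy0 : y = 0 := by simpa [h0] using h
      refine ⟨(t, 0), ⟨by simpa using hδ, by simp [hε.le]⟩, by simp [blowUpX, hy0]⟩
    · refine ⟨(t, y / t j), ⟨by simpa using hδ, ?_⟩, by simp [blowUpX, mul_div_cancel₀ _ h0]⟩
      rwa [mem_closedBall_zero_iff, norm_div, div_le_iff₀ (norm_pos_iff.2 h0)]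
  · right
    have hy0 : 0 < ‖y‖ := (by positivity : 0 ≤ ε⁻¹ * ‖t j‖).trans_lt h
    refine ⟨(Function.update t j (t j / y), y), ?_, ?_⟩
    · rw [mem_closedBall_zero_iff, norm_prod_le_iff]
      refine ⟨(pi_norm_le_iff_of_nonneg hε.le).2 fun i => ?_, hy⟩
      dsimp only
      obtain rfl | hi := eq_or_ne i j
      · rw [Function.update_self, norm_div, div_le_iff₀ hy0]
        exact ((inv_mul_lt_iff₀ hε).1 h).le
      · rw [Function.update_of_ne hi]
        exact (norm_le_pi_norm t i).trans ht
    · simp [blowUpY, mul_div_cancel₀ _ (norm_pos_iff.1 hy0)]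

end BlowUp

section WeightedForm
variable {ι : Type*} [Fintype ι]

/-- The function `∑ i < e, x ^ ((e + 1 - i) β) b i x y ^ i + y ^ (e + 1) v (x, y)` of `(x, y)`. When
`v` is a unit and some `b i` is a unit, blowing up decreases `β`, and for `β = 0` the function has
order at most `e` in `y`. -/
def weightedForm (e : ℕ) (β : ι → ℕ) (b : ℕ → (ι → ℝ) → ℝ) (v : (ι → ℝ) × ℝ → ℝ)
    (z : (ι → ℝ) × ℝ) : ℝ :=
  ∑ i ∈ Finset.range e, monomialAt 0 ((e + 1 - i) • β) z.1 * b i z.1 * z.2 ^ i +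
    z.2 ^ (e + 1) * v z

theorem CMAt.weightedForm {M : ℕ → ℝ} [IsWeightSequence M] {e : ℕ} {β : ι → ℕ}
    {b : ℕ → (ι → ℝ) → ℝ} {v : (ι → ℝ) × ℝ → ℝ} {z : (ι → ℝ) × ℝ}
    (hb : ∀ i, CMAt M (b i) z.1) (hv : CMAt M v z) : CMAt M (weightedForm e β b v) z :=
  have hfst := (CMAt.id (M := M) z).fst
  have hsnd := (CMAt.id (M := M) z).snd
  add (sum fun i _ => (((CMAt.monomialAt 0 _ z.1).comp hfst).mul ((hb i).comp hfst)).mul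
    (hsnd.pow i)) ((hsnd.pow _).mul hv)

theorem fiberDeriv_weightedForm_of_const {e : ℕ} {β : ι → ℕ} {b : ℕ → (ι → ℝ) → ℝ}
    {v : (ι → ℝ) × ℝ → ℝ} {x : ι → ℝ} {C : ℝ} (hv : ∀ y, v (x, y) = C) (y : ℝ) :
    fiberDeriv e (weightedForm e β b v) (x, y) = C * (e + 1)! * y := by
  rw [← iteratedDeriv_sum_add_mul_pow e fun i => monomialAt 0 ((e + 1 - i) • β) x * b i x]
  simp only [fiberDeriv, weightedForm, hv, mul_comm C]

theorem fiberDeriv_weightedForm_zero {M : ℕ → ℝ} [IsWeightSequence M] {e i : ℕ} (hi : i < e)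
    {b : ℕ → (ι → ℝ) → ℝ} {v : (ι → ℝ) × ℝ → ℝ} {x : ι → ℝ} (hv : CMAt M v (x, 0)) :
    fiberDeriv i (weightedForm e 0 b v) (x, 0) = i ! * b i x := by
  refine iteratedDeriv_zero_eq_of_eventuallyEq_sum (c := fun i => b i x)
    (G := fun y => y * v (x, y)) hi (contDiffAt_id.mul (contDiffAt_fiber hv))
    (.of_forall fun y => ?_)
  simp only [weightedForm, smul_zero, monomialAt_zero, one_mul]
  ring

variable [DecidableEq ι]

theorem weightedForm_blowUpX (e : ℕ) (β : ι → ℕ) (b : ℕ → (ι → ℝ) → ℝ) (v : (ι → ℝ) × ℝ → ℝ)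
    (j : ι) (z : (ι → ℝ) × ℝ) :
    weightedForm e (Pi.single j 1 + β) b v (blowUpX j z) =
      z.1 j ^ (e + 1) * weightedForm e β b (fun z => v (blowUpX j z)) z := by
  simp only [weightedForm, blowUpX, mul_add, Finset.mul_sum]
  congr 1
  · refine Finset.sum_congr rfl fun i hi => ?_
    have hpow : z.1 j ^ (e + 1) = z.1 j ^ (e + 1 - i) * z.1 j ^ i :=
      (pow_sub_mul_pow _ ((Finset.mem_range.1 hi).le.trans e.le_succ)).symm
    rw [monomialAt_smul, monomialAt_smul, monomialAt_single_add, Pi.zero_apply, sub_zero, hpow]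
    ring
  · ring

/-- The unit left when `y ^ (e + 1)` is divided out of a weighted form of exponent
`Pi.single j 1 + β` pulled back along `blowUpY j`. -/
def blowUpYUnit (e : ℕ) (β : ι → ℕ) (b : ℕ → (ι → ℝ) → ℝ) (v : (ι → ℝ) × ℝ → ℝ) (j : ι)
    (z : (ι → ℝ) × ℝ) : ℝ :=
  ∑ i ∈ Finset.range e, z.2 ^ ((e + 1 - i) * β j) *
    monomialAt 0 ((e + 1 - i) • (Pi.single j 1 + β)) z.1 * b i (blowUpY j z).1 + v (blowUpY j z)

theorem weightedForm_blowUpY (e : ℕ) (β : ι → ℕ) (b : ℕ → (ι → ℝ) → ℝ) (v : (ι → ℝ) × ℝ → ℝ)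
    (j : ι) (z : (ι → ℝ) × ℝ) :
    weightedForm e (Pi.single j 1 + β) b v (blowUpY j z) =
      z.2 ^ (e + 1) * blowUpYUnit e β b v j z := by
  simp only [weightedForm, blowUpYUnit, monomialAt_blowUpY, mul_add, Finset.mul_sum]
  congr 1
  refine Finset.sum_congr rfl fun i hi => ?_
  have hpow : z.2 ^ (e + 1) = z.2 ^ (e + 1 - i) * z.2 ^ i :=
    (pow_sub_mul_pow _ ((Finset.mem_range.1 hi).le.trans e.le_succ)).symm
  have hexp : ((e + 1 - i) • (Pi.single j 1 + β) : ι → ℕ) j = (e + 1 - i) + (e + 1 - i) * β j := by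
    simp [mul_add]
  rw [hexp, pow_add, hpow, blowUpY]
  ring

theorem blowUpYUnit_zero (e : ℕ) (β : ι → ℕ) (b : ℕ → (ι → ℝ) → ℝ) (v : (ι → ℝ) × ℝ → ℝ) (j : ι) :
    blowUpYUnit e β b v j 0 = v 0 := by
  rw [blowUpYUnit, blowUpY_zero, Finset.sum_eq_zero, zero_add]
  intro i hi
  have hne : (e + 1 - i) • (Pi.single j 1 + β) ≠ 0 := by
    have := Finset.mem_range.1 hi
    intro h
    have := congrFun h j
    simp at this
    omega
  rw [Prod.fst_zero, monomialAt_self 0 hne, mul_zero, zero_mul]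

theorem cmAt_blowUpYUnit {M : ℕ → ℝ} [IsWeightSequence M] {e : ℕ} {β : ι → ℕ}
    {b : ℕ → (ι → ℝ) → ℝ} {v : (ι → ℝ) × ℝ → ℝ} (hb : ∀ i, CMAt M (b i) 0) (hv : CMAt M v 0)
    (j : ι) : CMAt M (blowUpYUnit e β b v j) 0 := by
  have hψ := cmAt_blowUpY (M := M) j 0
  refine .add (.sum fun i _ => .mul (.mul (.pow (CMAt.id _).snd _) ?_) ?_) ?_
  · exact (CMAt.monomialAt 0 _ _).comp (CMAt.id _).fst
  · exact (hb i).comp_of_eq hψ.fst (by rw [blowUpY_zero, Prod.fst_zero])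
  · exact hv.comp_of_eq hψ (blowUpY_zero j)

end WeightedForm

section Resolution
variable {M : ℕ → ℝ} {m : ℕ}

/-- The inductive statement of the resolution argument: a product `p x * g (x, y)`, with `p` not
identically zero near `a` and `g` of order at most `d` in `y` at `(a, b)`, is resolvable there. -/
def ResolvesFiberOrder (M : ℕ → ℝ) (m d : ℕ) : Prop :=
  ∀ (a : Fin m → ℝ) (b : ℝ) (p : (Fin m → ℝ) → ℝ) (g : (Fin m → ℝ) × ℝ → ℝ),
    CMAt M p a → ¬ p =ᶠ[𝓝 a] 0 → CMAt M g (a, b) → fiberDeriv d g (a, b) ≠ 0 →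
    ResolvableAt M (m + 1) (fun z => p z.1 * g z) (a, b)

variable [IsWeightSequence M]

namespace ResolvableAt

theorem of_blowUp {F : (Fin m → ℝ) × ℝ → ℝ} (j : Fin m)
    (hX : ∀ y, ResolvableAt M (m + 1) (fun z => F (blowUpX j z)) (0, y))
    (hY : ResolvableAt M (m + 1) (fun z => F (blowUpY j z)) 0) : ResolvableAt M (m + 1) F 0 := by
  obtain ⟨ε, hε, hballY⟩ := Metric.nhds_basis_closedBall.mem_iff.1 hY.eventually
  obtain ⟨δ, hδ, hballX⟩ := Metric.nhds_basis_closedBall.mem_iff.1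
    ((isCompact_closedBall (0 : ℝ) ε⁻¹).eventually_forall_of_forall_eventually
      (x₀ := (0 : Fin m → ℝ))
      (P := fun x y => ResolvableAt M (m + 1) (fun z => F (blowUpX j z)) (x, y))
      fun y _ => (hX y).eventually)
  have hcovX := ChartCovered.image_of_isCompact (g := F) (ψ := blowUpX j)
    ((isCompact_closedBall (0 : Fin m → ℝ) δ).prod (isCompact_closedBall (0 : ℝ) ε⁻¹))
    fun z hz => ⟨cmAt_blowUpX j z, hballX hz.1 z.2 hz.2⟩
  have hcovY := ChartCovered.image_of_isCompact (g := F) (ψ := blowUpY j)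
    (isCompact_closedBall 0 ε) fun z hz => ⟨cmAt_blowUpY j z, hballY hz⟩
  refine ⟨_, ?_, .union _ _ hcovX hcovY⟩
  filter_upwards [Metric.closedBall_mem_nhds _ (lt_min hδ hε)] with z hz
  have hz' := mem_closedBall_zero_iff.1 hz
  exact mem_image_blowUpX_or_blowUpY j hε ((norm_fst_le z).trans (hz'.trans (min_le_left _ _)))
    (hz'.trans (min_le_right _ _))

theorem weightedForm_blowUpY {e : ℕ} {β : Fin m → ℕ} {p : (Fin m → ℝ) → ℝ}
    {b : ℕ → (Fin m → ℝ) → ℝ} {v : (Fin m → ℝ) × ℝ → ℝ} (hp : NormalCrossingAt M p 0)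
    (hb : ∀ i, CMAt M (b i) 0) (hv : CMAt M v 0) (hv0 : v 0 ≠ 0) (j : Fin m) :
    ResolvableAt M (m + 1) (fun z => p (blowUpY j z).1 *
      weightedForm e (Pi.single j 1 + β) b v (blowUpY j z)) 0 := by
  obtain ⟨α, u, hu, hu0, hpu⟩ := hp
  have hψ := (cmAt_blowUpY (M := M) j 0).fst
  have hψ0 : (blowUpY j (0 : (Fin m → ℝ) × ℝ)).1 = 0 := by rw [blowUpY_zero, Prod.fst_zero]
  refine of_monomialAt_mul_pow_mul (c := 0) (y := 0) (α := α) (k := α j + (e + 1))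
    (u := fun z => u (blowUpY j z).1 * blowUpYUnit e β b v j z)
    ((hu.comp_of_eq hψ hψ0).mul (cmAt_blowUpYUnit hb hv j)) ?_ ?_
  · exact mul_ne_zero ((congrArg u hψ0).trans_ne hu0) ((blowUpYUnit_zero e β b v j).trans_ne hv0)
  · have htendsto : Tendsto (fun z => (blowUpY j z).1) (𝓝 0) (𝓝 0) := by
      simpa only [hψ0] using hψ.continuousAt.tendsto
    filter_upwards [htendsto.eventually hpu] with z hz
    rw [hz, DenjoyCarleman.weightedForm_blowUpY, monomialAt_blowUpY, sub_zero, pow_add]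
    ring

end ResolvableAt

theorem ResolvesFiberOrder.resolvableAt_weightedForm {e : ℕ}
    (H : ∀ d ≤ e, ResolvesFiberOrder M m d) {b : ℕ → (Fin m → ℝ) → ℝ} (hb : ∀ i, CMAt M (b i) 0)
    {i₀ : ℕ} (hi₀ : i₀ < e) (hb0 : b i₀ 0 ≠ 0) (β : Fin m → ℕ) {p : (Fin m → ℝ) → ℝ}
    (hp : NormalCrossingAt M p 0) {v : (Fin m → ℝ) × ℝ → ℝ} (hv : CMAt M v 0) (hv0 : v 0 ≠ 0) :
    ResolvableAt M (m + 1) (fun z => p z.1 * weightedForm e β b v z) 0 := by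
  induction β using multiIndex_induction generalizing p v with
  | zero =>
    refine H i₀ hi₀.le 0 0 p _ hp.cmAt hp.not_eventuallyEq_zero (.weightedForm hb hv) ?_
    rw [fiberDeriv_weightedForm_zero hi₀ hv]
    exact mul_ne_zero (mod_cast i₀.factorial_ne_zero) hb0
  | single_add j β ih =>
    refine .of_blowUp j (fun y => ?_) (.weightedForm_blowUpY hp hb hv hv0 j)
    have hp' : NormalCrossingAt M (fun x => p x * monomialAt 0 (Pi.single j (e + 1)) x) 0 :=
      hp.mul (.monomialAt 0 _)
    have hv' (y : ℝ) : CMAt M (fun z => v (blowUpX j z)) (0, y) :=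
      hv.comp_of_eq (cmAt_blowUpX j _) (blowUpX_zero j y)
    have hpull : (fun z : (Fin m → ℝ) × ℝ => p (blowUpX j z).1 *
        weightedForm e (Pi.single j 1 + β) b v (blowUpX j z)) =
        fun z => (p z.1 * monomialAt 0 (Pi.single j (e + 1)) z.1) *
          weightedForm e β b (fun z => v (blowUpX j z)) z := by
      funext z
      rw [weightedForm_blowUpX, monomialAt_single, Pi.zero_apply, sub_zero, mul_assoc]
      rfl
    rw [hpull]
    obtain rfl | hy := eq_or_ne y 0
    · exact ih hp' (hv' 0) ((congrArg v (blowUpX_zero j 0)).trans_ne hv0)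
    · refine H e le_rfl 0 y _ _ hp'.cmAt hp'.not_eventuallyEq_zero (.weightedForm hb (hv' y)) ?_
      rw [fiberDeriv_weightedForm_of_const fun y => by rw [blowUpX_zero]]
      exact mul_ne_zero (mul_ne_zero hv0 (mod_cast (e + 1).factorial_ne_zero)) hy

end Resolution

/-! ### Power substitutions -/

theorem ChartCovered.iUnion {M : ℕ → ℝ} {N : ℕ} {Y ι : Type*} [NormedAddCommGroup Y]
    [NormedSpace ℝ Y] [Finite ι] {g : Y → ℝ} {S : ι → Set Y} (h : ∀ i, ChartCovered M N g (S i)) :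
    ChartCovered M N g (⋃ i, S i) := by
  rw [← biUnion_univ]
  refine Set.Finite.induction_on (motive := fun t _ => ChartCovered M N g (⋃ i ∈ t, S i)) _
    finite_univ ?_ fun {i t} _ _ ht => ?_
  · simpa only [biUnion_empty] using ChartCovered.empty
  · rw [biUnion_insert]
    exact .union _ _ (h i) ht

theorem ResolvableAt.of_maps {M : ℕ → ℝ} [IsWeightSequence M] {N : ℕ} {Y Z ι : Type*}
    [NormedAddCommGroup Y] [NormedSpace ℝ Y] [NormedAddCommGroup Z] [NormedSpace ℝ Z] [Finite ι]
    {g : Y → ℝ} {ψ : ι → Z → Y} {c : Z} {a : Y} (hψ : ∀ i, CMAt M (ψ i) c)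
    (hr : ∀ i, ResolvableAt M N (fun z => g (ψ i z)) c) {τ : Y → Z} (hτ : Tendsto τ (𝓝 a) (𝓝 c))
    (hs : ∀ y, ∃ i, ψ i (τ y) = y) : ResolvableAt M N g a := by
  choose S hS hcov using fun i => ChartCovered.exists_image_mem (hψ i) .rfl (hr i)
  refine ⟨_, ?_, .iUnion hcov⟩
  filter_upwards [hτ.eventually (eventually_all.2 hS)] with y hy
  obtain ⟨i, hi⟩ := hs y
  exact mem_iUnion.2 ⟨i, τ y, hy i, hi⟩

section PowMap
variable {ι : Type*}

/-- The substitution `x i = c i ± t i ^ D`, with one choice of signs `s`; as `s` varies the images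
cover a neighbourhood of `c`. It turns a monomial with real exponents in `D⁻¹ ℕ` into a monomial. -/
def powMap (c : ι → ℝ) (D : ℕ) (s : ι → ℤˣ) (t : ι → ℝ) : ι → ℝ :=
  fun i => c i + (s i : ℤ) * t i ^ D

theorem powMap_zero (c : ι → ℝ) {D : ℕ} (hD : D ≠ 0) (s : ι → ℤˣ) : powMap c D s 0 = c := by
  ext i
  simp [powMap, hD]

theorem tendsto_powMap (c : ι → ℝ) {D : ℕ} (hD : D ≠ 0) (s : ι → ℤˣ) :
    Tendsto (powMap c D s) (𝓝 0) (𝓝 c) := by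
  have hcont : Continuous (powMap c D s) := by unfold powMap; fun_prop
  simpa only [powMap_zero c hD s] using hcont.tendsto 0

theorem exists_powMap_rpow_inv_eq (c : ι → ℝ) {D : ℕ} (hD : D ≠ 0) (x : ι → ℝ) :
    ∃ s, powMap c D s (fun i => |x i - c i| ^ (D : ℝ)⁻¹) = x := by
  have hsign (r : ℝ) : ∃ s : ℤˣ, (s : ℤ) * |r| = r := by
    obtain h | h := abs_choice r
    · exact ⟨1, by simp [h]⟩
    · exact ⟨-1, by simp [h]⟩
  choose s hs using fun i => hsign (x i - c i)
  refine ⟨s, funext fun i => ?_⟩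
  rw [powMap, Real.rpow_inv_natCast_pow (abs_nonneg _) hD, hs, add_sub_cancel]

variable [Fintype ι]

theorem monomialAt_powMap (c : ι → ℝ) (D : ℕ) (s : ι → ℤˣ) (α : ι → ℕ) (t : ι → ℝ) :
    monomialAt c α (powMap c D s t) =
      (∏ i, ((s i : ℤ) : ℝ) ^ α i) * monomialAt 0 (D • α) t := by
  simp only [monomialAt, powMap, add_sub_cancel_left, mul_pow, Finset.prod_mul_distrib,
    Pi.zero_apply, sub_zero, Pi.smul_apply, smul_eq_mul, pow_mul]

theorem prod_sign_pow_ne_zero (s : ι → ℤˣ) (α : ι → ℕ) : ∏ i, ((s i : ℤ) : ℝ) ^ α i ≠ 0 :=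
  Finset.prod_ne_zero_iff.2 fun i _ => pow_ne_zero _ (mod_cast (s i).ne_zero)

variable {M : ℕ → ℝ} [IsWeightSequence M]

theorem cmAt_powMap (c : ι → ℝ) (D : ℕ) (s : ι → ℤˣ) (t : ι → ℝ) : CMAt M (powMap c D s) t :=
  .pi fun i => (CMAt.const _ t).add ((CMAt.const _ t).mul ((CMAt.coord i t).pow D))

theorem CMAt.comp_powMap {F : Type*} [NormedAddCommGroup F] [NormedSpace ℝ F] {f : (ι → ℝ) → F}
    {c : ι → ℝ} (hf : CMAt M f c) {D : ℕ} (hD : D ≠ 0) (s : ι → ℤˣ) :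
    CMAt M (fun t => f (powMap c D s t)) 0 :=
  hf.comp_of_eq (cmAt_powMap c D s 0) (powMap_zero c hD s)

theorem NormalCrossingAt.comp_powMap {h : (ι → ℝ) → ℝ} {c : ι → ℝ} (H : NormalCrossingAt M h c)
    {D : ℕ} (hD : D ≠ 0) (s : ι → ℤˣ) : NormalCrossingAt M (fun t => h (powMap c D s t)) 0 := by
  obtain ⟨α, u, hu, hu0, he⟩ := H
  refine ⟨D • α, fun t => (∏ i, ((s i : ℤ) : ℝ) ^ α i) * u (powMap c D s t),
    (CMAt.const _ _).mul (hu.comp_powMap hD s), ?_, ?_⟩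
  · simpa only [powMap_zero c hD s] using mul_ne_zero (prod_sign_pow_ne_zero s α) hu0
  · filter_upwards [(tendsto_powMap c hD s).eventually he] with t ht
    rw [ht, monomialAt_powMap]
    ring

theorem exists_monomialAt_mul_comp_powMap {c : ι → ℝ} {w : (ι → ℝ) → ℝ} (hw : CMAt M w c)
    (hw0 : w c ≠ 0) {D k : ℕ} (hD : D ≠ 0) {α β γ : ι → ℕ} (hγ : k • γ = D • α) (hβ : β ≤ γ)
    (s : ι → ℤˣ) :
    ∃ b : (ι → ℝ) → ℝ, CMAt M b 0 ∧
      (∀ t, monomialAt c α (powMap c D s t) * w (powMap c D s t) = monomialAt 0 (k • β) t * b t) ∧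
      (γ = β → b 0 ≠ 0) := by
  refine ⟨fun t => (∏ i, ((s i : ℤ) : ℝ) ^ α i) * monomialAt 0 (k • (γ - β)) t *
    w (powMap c D s t),
    ((CMAt.const _ _).mul (.monomialAt _ _ _)).mul (hw.comp_powMap hD s), fun t => ?_, ?_⟩
  · have hexp : D • α = k • β + k • (γ - β) := by rw [← smul_add, add_tsub_cancel_of_le hβ, hγ]
    rw [monomialAt_powMap, hexp, monomialAt_add]
    ring
  · rintro rfl
    dsimp only
    rw [tsub_self, smul_zero, monomialAt_zero, mul_one, powMap_zero c hD s]
    exact mul_ne_zero (prod_sign_pow_ne_zero s α) hw0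

theorem ResolvableAt.of_powMap {N : ℕ} {G : (ι → ℝ) × ℝ → ℝ} {c : ι → ℝ} {D : ℕ} (hD : D ≠ 0)
    (h : ∀ s, ResolvableAt M N (fun z : (ι → ℝ) × ℝ => G (powMap c D s z.1, z.2)) 0) :
    ResolvableAt M N G (c, 0) := by
  refine .of_maps (ψ := fun s (z : (ι → ℝ) × ℝ) => (powMap c D s z.1, z.2))
    (τ := fun z => (fun i => |z.1 i - c i| ^ (D : ℝ)⁻¹, z.2)) (fun s => ?_) h ?_ ?_
  · exact ((cmAt_powMap c D s _).comp (CMAt.id _).fst).prodMk (CMAt.id _).snd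
  · have hτ : Continuous fun z : (ι → ℝ) × ℝ =>
        ((fun i => |z.1 i - c i| ^ (D : ℝ)⁻¹ : ι → ℝ), z.2) := by
      refine (continuous_pi fun i => ?_).prodMk continuous_snd
      exact Continuous.rpow_const (by fun_prop) fun _ => Or.inr (by positivity)
    have hτ0 : ((fun i => |c i - c i| ^ (D : ℝ)⁻¹, 0) : (ι → ℝ) × ℝ) = 0 :=
      Prod.ext (funext fun i => by simp [hD]) rfl
    simpa only [hτ0] using hτ.tendsto (c, 0)
  · rintro ⟨x, y⟩
    obtain ⟨s, hs⟩ := exists_powMap_rpow_inv_eq c hD x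
    exact ⟨s, Prod.ext hs rfl⟩

end PowMap

section WeightedForm
variable {M : ℕ → ℝ} [IsQuasianalytic M] [IsDerivationClosed M] {m e : ℕ}
  {c : Fin m → ℝ} {p : (Fin m → ℝ) → ℝ} {a : ℕ → (Fin m → ℝ) → ℝ}
  {u : (Fin m → ℝ) × ℝ → ℝ} {I : Finset ℕ}

/-- The common denominator `(e + 1)!` makes the powers `a i ^ ((e + 1)! / (e + 1 - i))` comparable:
when their sum of squares has normal crossings, one of the exponents is the smallest. -/
theorem exists_common_exponent_comp_powMap (hI : I ⊆ Finset.range e) (hne : I.Nonempty)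
    (ha : ∀ i ∈ I, NormalCrossingAt M (a i) c) (hz : ∀ i ∈ Finset.range e, i ∉ I → a i =ᶠ[𝓝 c] 0)
    (hS : NormalCrossingAt M (fun x => ∑ i ∈ I, (a i x ^ ((e + 1)! / (e + 1 - i))) ^ 2) c) :
    ∃ i₀ < e, ∃ β : Fin m → ℕ, ∀ s, ∃ b : ℕ → (Fin m → ℝ) → ℝ, (∀ i, CMAt M (b i) 0) ∧
      b i₀ 0 ≠ 0 ∧ ∀ i ∈ Finset.range e, ∀ᶠ t in 𝓝 0,
        a i (powMap c (e + 1)! s t) = monomialAt 0 ((e + 1 - i) • β) t * b i t := by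
  choose! α w hw hw0 he using ha
  let q (i : ℕ) : ℕ := (e + 1)! / (e + 1 - i)
  have hq : ∀ i ∈ I, (e + 1 - i) * q i = (e + 1)! := fun i hi =>
    Nat.mul_div_cancel' <| Nat.dvd_factorial
      (Nat.sub_pos_of_lt ((Finset.mem_range.1 (hI hi)).trans e.lt_succ_self)) (Nat.sub_le _ _)
  have hmon : NormalCrossingAt M
      (fun x => ∑ i ∈ I, (monomialAt c (q i • α i) x * w i x ^ q i) ^ 2) c := by
    refine hS.congr ?_
    filter_upwards [(Finset.eventually_all _).2 he] with x hx
    refine Finset.sum_congr rfl fun i hi => ?_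
    rw [hx i hi, mul_pow _ _ (_ / _), monomialAt_smul]
  obtain ⟨i₀, hi₀, hmin⟩ := NormalCrossingAt.exists_forall_le_of_sum_sq hne
    (fun i hi => (hw i hi).pow _) (fun i hi => pow_ne_zero _ (hw0 i hi)) hmon
  refine ⟨i₀, Finset.mem_range.1 (hI hi₀), q i₀ • α i₀, fun s => ?_⟩
  have hD : (e + 1)! ≠ 0 := (e + 1).factorial_ne_zero
  have hcoeff (i : ℕ) : ∃ b : (Fin m → ℝ) → ℝ, CMAt M b 0 ∧ (i = i₀ → b 0 ≠ 0) ∧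
      (i ∈ Finset.range e → ∀ᶠ t in 𝓝 0,
        a i (powMap c (e + 1)! s t) = monomialAt 0 ((e + 1 - i) • q i₀ • α i₀) t * b t) := by
    by_cases hi : i ∈ I
    · have hqα : (e + 1 - i) • q i • α i = (e + 1)! • α i := by rw [smul_smul, hq i hi]
      obtain ⟨b, hb, hab, hb0⟩ :=
        exists_monomialAt_mul_comp_powMap (hw i hi) (hw0 i hi) hD hqα (hmin i hi) s
      refine ⟨b, hb, fun h => hb0 (by rw [h]), fun _ => ?_⟩
      filter_upwards [(tendsto_powMap c hD s).eventually (he i hi)] with t ht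
      rw [ht, hab]
    · refine ⟨0, CMAt.const 0 0, fun h => absurd (h ▸ hi₀) hi, fun hie => ?_⟩
      filter_upwards [(tendsto_powMap c hD s).eventually (hz i hie hi)] with t ht
      rw [ht, Pi.zero_apply, Pi.zero_apply, mul_zero]
  choose b hb hb0 hab using hcoeff
  exact ⟨b, hb, hb0 i₀ rfl, hab⟩

theorem ResolvesFiberOrder.resolvableAt_of_normalCrossingAt (H : ∀ d ≤ e, ResolvesFiberOrder M m d)
    (hI : I ⊆ Finset.range e) (hp : NormalCrossingAt M p c)
    (ha : ∀ i ∈ I, NormalCrossingAt M (a i) c) (hz : ∀ i ∈ Finset.range e, i ∉ I → a i =ᶠ[𝓝 c] 0)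
    (hS : I.Nonempty →
      NormalCrossingAt M (fun x => ∑ i ∈ I, (a i x ^ ((e + 1)! / (e + 1 - i))) ^ 2) c)
    (hu : CMAt M u (c, 0)) (hu0 : u (c, 0) ≠ 0) :
    ResolvableAt M (m + 1) (fun z => p z.1 * weightedForm e 0 a u z) (c, 0) := by
  have hfst (x : Fin m → ℝ) : Tendsto (fun z : (Fin m → ℝ) × ℝ => z.1) (𝓝 (x, 0)) (𝓝 x) :=
    continuous_fst.tendsto (x, (0 : ℝ))
  rcases I.eq_empty_or_nonempty with rfl | hne
  · obtain ⟨α, w, hw, hw0, he⟩ := hp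
    refine .of_monomialAt_mul_pow_mul (α := α) (k := e + 1) (u := fun z => w z.1 * u z)
      ((hw.comp (f := fun z : (Fin m → ℝ) × ℝ => z.1) (CMAt.id _).fst).mul hu)
      (mul_ne_zero hw0 hu0) ?_
    have hall := (Finset.eventually_all _).2 fun i hi => hz i hi (Finset.notMem_empty i)
    filter_upwards [(hfst c).eventually he, (hfst c).eventually hall] with z h1 h2
    rw [h1, weightedForm, Finset.sum_eq_zero fun i hi => by simp [h2 i hi], sub_zero]
    ring
  · obtain ⟨i₀, hi₀, β, hβ⟩ := exists_common_exponent_comp_powMap hI hne ha hz (hS hne)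
    have hD : (e + 1)! ≠ 0 := (e + 1).factorial_ne_zero
    refine .of_powMap hD fun s => ?_
    obtain ⟨b, hb, hb0, hab⟩ := hβ s
    have hψ0 : (powMap c (e + 1)! s (0 : (Fin m → ℝ) × ℝ).1, (0 : (Fin m → ℝ) × ℝ).2) = (c, 0) :=
      Prod.ext (powMap_zero c hD s) rfl
    have hv : CMAt M (fun z : (Fin m → ℝ) × ℝ => u (powMap c (e + 1)! s z.1, z.2)) 0 :=
      hu.comp_of_eq (((cmAt_powMap c _ s _).comp (CMAt.id _).fst).prodMk (CMAt.id _).snd) hψ0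
    refine (resolvableAt_weightedForm H hb hi₀ hb0 β (hp.comp_powMap hD s) hv
      ((congrArg u hψ0).trans_ne hu0)).congr ?_
    filter_upwards [(hfst 0).eventually ((Finset.eventually_all _).2 hab)] with z hz
    simp only [weightedForm, smul_zero, monomialAt_zero, one_mul]
    rw [Finset.sum_congr rfl fun i hi => by rw [hz i hi]]

end WeightedForm

/-! ### Local resolution in every dimension -/

theorem exists_forall_mem_Icc_of_eventually_nhds {X : Type*} [SeminormedAddCommGroup X] {a : X}
    {b : ℝ} {Q : X × ℝ → Prop} (h : ∀ᶠ z in 𝓝 (a, b), Q z) :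
    ∃ ε > 0, ∀ x ∈ Metric.closedBall a ε, ∀ y ∈ Icc (b - ε) (b + ε), Q (x, y) := by
  obtain ⟨ε, hε, hs⟩ := Metric.nhds_basis_closedBall.mem_iff.1 h
  rw [← closedBall_prod_same, Real.closedBall_eq_Icc] at hs
  exact ⟨ε, hε, fun x hx y hy => hs ⟨hx, hy⟩⟩

section Nonzero

theorem not_eventuallyEq_zero_one {X : Type*} [TopologicalSpace X] {c : X} :
    ¬ (fun _ : X => (1 : ℝ)) =ᶠ[𝓝 c] 0 :=
  fun h => one_ne_zero h.self_of_nhds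

theorem not_eventuallyEq_zero_sum_sq_pow {X κ : Type*} [TopologicalSpace X] {c : X}
    {f : κ → X → ℝ} {s : Finset κ} (hs : s.Nonempty) (q : κ → ℕ) (hf0 : ∀ i ∈ s, ¬ f i =ᶠ[𝓝 c] 0) :
    ¬ (fun x => ∑ i ∈ s, (f i x ^ q i) ^ 2) =ᶠ[𝓝 c] 0 := by
  obtain ⟨i, hi⟩ := hs
  refine fun hz => hf0 i hi ?_
  filter_upwards [hz] with x hx
  exact eq_zero_of_pow_eq_zero (eq_zero_of_pow_eq_zero
    ((Finset.sum_eq_zero_iff_of_nonneg fun i _ => sq_nonneg _).1 hx i hi))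

variable {M : ℕ → ℝ} [IsQuasianalytic M] {E : Type*} [NormedAddCommGroup E] [NormedSpace ℝ E]
  {c : E}

theorem not_eventuallyEq_zero_mul {f h : E → ℝ} (hf : CMAt M f c) (hh : CMAt M h c)
    (hf0 : ¬ f =ᶠ[𝓝 c] 0) (hh0 : ¬ h =ᶠ[𝓝 c] 0) : ¬ (fun x => f x * h x) =ᶠ[𝓝 c] 0 :=
  fun hz => (CMAt.eventuallyEq_zero_or_of_mul hf hh hz).elim hf0 hh0

theorem not_eventuallyEq_zero_prod {κ : Type*} {f : κ → E → ℝ} (s : Finset κ)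
    (hf : ∀ i ∈ s, CMAt M (f i) c) (hf0 : ∀ i ∈ s, ¬ f i =ᶠ[𝓝 c] 0) :
    ¬ (fun x => ∏ i ∈ s, f i x) =ᶠ[𝓝 c] 0 := by
  classical
  induction s using Finset.induction_on with
  | empty => simpa only [Finset.prod_empty] using not_eventuallyEq_zero_one
  | insert i s hi ih =>
    rw [Finset.forall_mem_insert] at hf hf0
    simp only [Finset.prod_insert hi]
    exact not_eventuallyEq_zero_mul hf.1 (.prod hf.2) hf0.1 (ih hf.2 hf0.2)

end Nonzero

section Resolution
variable {M : ℕ → ℝ} {m : ℕ}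

/-- Every germ of class `C_M` on `ℝᵐ` that is not identically zero is resolvable. -/
def ResolvesDim (M : ℕ → ℝ) (m : ℕ) : Prop :=
  ∀ (a : Fin m → ℝ) (g : (Fin m → ℝ) → ℝ), CMAt M g a → ¬ g =ᶠ[𝓝 a] 0 → ResolvableAt M m g a

variable [IsWeightSequence M]

theorem resolvesDim_zero : ResolvesDim M 0 := by
  intro a g hg hg0
  refine .of_normalCrossingAt (.of_ne_zero hg fun h => hg0 (.of_forall fun y => ?_))
  rwa [Subsingleton.elim y a]

theorem cmAt_prodMap_id {f : (Fin m → ℝ) → Fin m → ℝ} {c : Fin m → ℝ} (hf : CMAt M f c) (y : ℝ) :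
    CMAt M (fun z : (Fin m → ℝ) × ℝ => (f z.1, z.2)) (c, y) :=
  (hf.comp (f := fun z : (Fin m → ℝ) × ℝ => z.1) (CMAt.id _).fst).prodMk (CMAt.id _).snd

theorem ResolvableAt.of_shear {F : (Fin m → ℝ) × ℝ → ℝ} {r : (Fin m → ℝ) → ℝ} {a : Fin m → ℝ}
    (hr : CMAt M r a) {N : ℕ} (h : ResolvableAt M N (fun z => F (z.1, r z.1 + z.2)) (a, 0)) :
    ResolvableAt M N F (a, r a) := by
  let ψ (z : (Fin m → ℝ) × ℝ) : (Fin m → ℝ) × ℝ := (z.1, r z.1 + z.2)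
  have hψ : CMAt M ψ (a, 0) := (CMAt.id _).fst.prodMk
    ((hr.comp (f := fun z : (Fin m → ℝ) × ℝ => z.1) (CMAt.id _).fst).add (CMAt.id _).snd)
  have hψ0 : ψ (a, 0) = (a, r a) := by simp only [ψ, add_zero]
  rw [← hψ0]
  refine .of_map hψ .rfl h ?_
  have hinv : Tendsto (fun z : (Fin m → ℝ) × ℝ => (z.1, z.2 - r z.1)) (𝓝 (a, r a))
      (𝓝 (a, 0)) := by
    have hcont : ContinuousAt (fun z : (Fin m → ℝ) × ℝ => (z.1, z.2 - r z.1)) (a, r a) :=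
      continuousAt_fst.prodMk (continuousAt_snd.sub
        (hr.continuousAt.comp (f := fun z : (Fin m → ℝ) × ℝ => z.1) continuousAt_fst))
    simpa only [sub_self] using hcont.tendsto
  intro s hs
  filter_upwards [(hψ0 ▸ hinv) (mem_map.1 hs)] with z hz
  simpa only [mem_preimage, ψ, add_sub_cancel] using hz

theorem ResolvesDim.resolvesFiberOrder_zero (N : ResolvesDim M m) : ResolvesFiberOrder M m 0 := by
  intro a b p g hp hp0 hg hg0
  obtain ⟨ε, hε, hbox⟩ := exists_forall_mem_Icc_of_eventually_nhds
    (hg.eventually.and (hg.continuousAt.eventually_ne hg0))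
  refine .lift (N a p hp hp0) (Metric.closedBall_mem_nhds a hε) hε ?_
  rintro f c hf hfc ⟨α, w, hw, hw0, he⟩ y hy
  obtain ⟨hgy, hgy0⟩ := hbox _ hfc y hy
  have hfst : Tendsto (fun z : (Fin m → ℝ) × ℝ => z.1) (𝓝 (c, y)) (𝓝 c) :=
    continuous_fst.tendsto (c, y)
  refine .of_monomialAt_mul_pow_mul (α := α) (k := 0) (u := fun z => w z.1 * g (f z.1, z.2))
    ((hw.comp (f := fun z : (Fin m → ℝ) × ℝ => z.1) (CMAt.id _).fst).mul
      (hgy.comp (f := fun z : (Fin m → ℝ) × ℝ => (f z.1, z.2)) (cmAt_prodMap_id hf y)))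
    (mul_ne_zero hw0 hgy0) ?_
  filter_upwards [hfst.eventually he] with z hz
  rw [hz]
  ring

end Resolution

section Resolution
variable {M : ℕ → ℝ} {m : ℕ}

theorem exists_continuousLinearEquiv_apply_eq {v : Fin (m + 1) → ℝ} (hv : v ≠ 0) :
    ∃ L : ((Fin m → ℝ) × ℝ) ≃L[ℝ] (Fin (m + 1) → ℝ), L (0, 1) = v := by
  let L₀ : ((Fin m → ℝ) × ℝ) ≃L[ℝ] (Fin (m + 1) → ℝ) :=
    (ContinuousLinearEquiv.prodComm ℝ (Fin m → ℝ) ℝ).trans (Fin.consEquivL ℝ fun _ => ℝ)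
  have h₀ : L₀ (0, 1) ≠ 0 := by simp
  obtain ⟨A, hA⟩ := SeparatingDual.exists_continuousLinearEquiv_apply_eq (R := ℝ) h₀ hv
  exact ⟨L₀.trans A, hA⟩

theorem CMAt.exists_eventuallyEq_weightedForm [IsDerivationClosed M]
    {g : (Fin m → ℝ) × ℝ → ℝ} {a : Fin m → ℝ} (hg : CMAt M g (a, 0)) {e : ℕ}
    (hne : DenjoyCarleman.fiberDeriv (e + 1) g (a, 0) ≠ 0)
    (h0 : ∀ᶠ x in 𝓝 a, DenjoyCarleman.fiberDeriv e g (x, 0) = 0) :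
    ∃ (A : ℕ → (Fin m → ℝ) → ℝ) (u : (Fin m → ℝ) × ℝ → ℝ), (∀ i, CMAt M (A i) a) ∧
      CMAt M u (a, 0) ∧ u (a, 0) ≠ 0 ∧
      g =ᶠ[𝓝 (a, 0)] DenjoyCarleman.weightedForm e 0 A u := by
  obtain ⟨A, q, hA, hq, hgq⟩ := hg.exists_eq_sum_add_pow_mul (e + 2)
  have hin : Tendsto (fun x : Fin m → ℝ => (x, (0 : ℝ))) (𝓝 a) (𝓝 (a, 0)) :=
    (by fun_prop : Continuous fun x : Fin m → ℝ => (x, (0 : ℝ))).tendsto a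
  have hfst : Tendsto (fun z : (Fin m → ℝ) × ℝ => z.1) (𝓝 (a, 0)) (𝓝 a) :=
    continuous_fst.tendsto (a, (0 : ℝ))
  have hAe : ∀ᶠ x in 𝓝 a, A e x = 0 := by
    filter_upwards [h0, hin.eventually hq.eventually, hin.eventually hgq.eventually_nhds]
      with x hx hqx hgx
    rw [fiberDeriv_eq_factorial_mul (by omega) hqx hgx] at hx
    exact (mul_eq_zero.1 hx).resolve_left (mod_cast e.factorial_ne_zero)
  refine ⟨A, fun z => A (e + 1) z.1 + z.2 * q z, hA, ?_, ?_, ?_⟩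
  · exact ((hA _).comp (f := fun z : (Fin m → ℝ) × ℝ => z.1) (CMAt.id _).fst).add
      ((CMAt.id _).snd.mul hq)
  · rw [fiberDeriv_eq_factorial_mul (by omega) hq hgq] at hne
    simpa only [zero_mul, add_zero] using right_ne_zero_of_mul hne
  · filter_upwards [hgq, hfst.eventually hAe] with z hz hAz
    rw [hz, Finset.sum_range_succ, Finset.sum_range_succ, hAz]
    simp only [DenjoyCarleman.weightedForm, smul_zero, monomialAt_zero, one_mul]
    ring

variable [IsQuasianalytic M] [IsDerivationClosed M]

-- A germ that divides a monomial is a monomial times a unit, so it suffices to resolve the product.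
theorem exists_forall_normalCrossingAt_comp {a : Fin m → ℝ} {p : (Fin m → ℝ) → ℝ}
    {A : ℕ → (Fin m → ℝ) → ℝ} {I : Finset ℕ} (hp : CMAt M p a) (hp0 : ¬ p =ᶠ[𝓝 a] 0)
    (hA : ∀ i ∈ I, CMAt M (A i) a) (hA0 : ∀ i ∈ I, ¬ A i =ᶠ[𝓝 a] 0) (q : ℕ → ℕ) :
    ∃ P : (Fin m → ℝ) → ℝ, CMAt M P a ∧ ¬ P =ᶠ[𝓝 a] 0 ∧ ∀ᶠ x in 𝓝 a, ∀ f c, CMAt M f c →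
      f c = x → NormalCrossingAt M (fun t : Fin m → ℝ => P (f t)) c →
        NormalCrossingAt M (fun t => p (f t)) c ∧
        (∀ i ∈ I, NormalCrossingAt M (fun t => A i (f t)) c) ∧
        (I.Nonempty → NormalCrossingAt M (fun t => ∑ i ∈ I, (A i (f t) ^ q i) ^ 2) c) := by
  obtain ⟨S, hS, hS0, hSI⟩ : ∃ S : (Fin m → ℝ) → ℝ, CMAt M S a ∧ ¬ S =ᶠ[𝓝 a] 0 ∧
      (I.Nonempty → S = fun x => ∑ i ∈ I, (A i x ^ q i) ^ 2) := by
    by_cases hI : I.Nonempty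
    · exact ⟨_, .sum fun i hi => ((hA i hi).pow _).pow 2,
        not_eventuallyEq_zero_sum_sq_pow hI q hA0, fun _ => rfl⟩
    · exact ⟨_, .const 1 a, not_eventuallyEq_zero_one, fun h => absurd h hI⟩
  refine ⟨fun x => p x * ((∏ i ∈ I, A i x) * S x), hp.mul ((CMAt.prod hA).mul hS),
    not_eventuallyEq_zero_mul hp ((CMAt.prod hA).mul hS) hp0
      (not_eventuallyEq_zero_mul (.prod hA) hS (not_eventuallyEq_zero_prod I hA hA0) hS0), ?_⟩
  filter_upwards [hp.eventually, hS.eventually,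
    (Finset.eventually_all I).2 fun i hi => (hA i hi).eventually] with _ hpx hSx hAx f c hf rfl hP
  have hpf : CMAt M (fun t => p (f t)) c := hpx.comp hf
  have hSf : CMAt M (fun t => S (f t)) c := hSx.comp hf
  have hAf (i) (hi : i ∈ I) : CMAt M (fun t => A i (f t)) c := (hAx i hi).comp hf
  have hAS := NormalCrossingAt.of_mul_right hpf ((CMAt.prod hAf).mul hSf) hP
  refine ⟨.of_mul hpf ((CMAt.prod hAf).mul hSf) hP,
    fun i hi => .of_prod hAf (.of_mul (.prod hAf) hSf hAS) hi, fun hI => ?_⟩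
  have hSnc := NormalCrossingAt.of_mul_right (.prod hAf) hSf hAS
  rwa [hSI hI] at hSnc

theorem ResolvesDim.resolvableAt_of_fiberDeriv_eq_zero (N : ResolvesDim M m) {e : ℕ}
    (H : ∀ d ≤ e, ResolvesFiberOrder M m d) {a : Fin m → ℝ}
    {p : (Fin m → ℝ) → ℝ} {g : (Fin m → ℝ) × ℝ → ℝ} (hp : CMAt M p a) (hp0 : ¬ p =ᶠ[𝓝 a] 0)
    (hg : CMAt M g (a, 0)) (hne : fiberDeriv (e + 1) g (a, 0) ≠ 0)
    (h0 : ∀ᶠ x in 𝓝 a, fiberDeriv e g (x, 0) = 0) :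
    ResolvableAt M (m + 1) (fun z => p z.1 * g z) (a, 0) := by
  classical
  obtain ⟨A, u, hA, hu, hu0, hgA⟩ := hg.exists_eventuallyEq_weightedForm hne h0
  let I : Finset ℕ := {i ∈ Finset.range e | ¬ A i =ᶠ[𝓝 a] 0}
  have hI : I ⊆ Finset.range e := Finset.filter_subset _ _
  have hAz : ∀ᶠ x in 𝓝 a, ∀ i ∈ Finset.range e, i ∉ I → A i =ᶠ[𝓝 x] 0 := by
    refine (Finset.eventually_all _).2 fun i hi => ?_
    by_cases hAi : A i =ᶠ[𝓝 a] 0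
    · exact hAi.eventuallyEq_nhds.mono fun x hx _ => hx
    · exact .of_forall fun x hiI => absurd (Finset.mem_filter.2 ⟨hi, hAi⟩) hiI
  obtain ⟨P, hP, hP0, hPnc⟩ := exists_forall_normalCrossingAt_comp hp hp0 (I := I)
    (fun i _ => hA i) (fun i hi => (Finset.mem_filter.1 hi).2) fun i => (e + 1)! / (e + 1 - i)
  obtain ⟨ε, hε, hbox⟩ := exists_forall_mem_Icc_of_eventually_nhds (hg.eventually.and
    (((hg.fiberDeriv (e + 1)).continuousAt.eventually_ne hne).and (hu.eventually.and
      ((hu.continuousAt.eventually_ne hu0).and hgA.eventually_nhds))))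
  refine .lift (N a P hP hP0) (inter_mem (hp.eventually.and (hPnc.and (hAz.and h0)))
    (Metric.closedBall_mem_nhds a hε)) hε ?_
  rintro f c hf ⟨⟨hpx, hncx, hAzx, h0x⟩, hfc⟩ hnc y hy
  obtain ⟨hpnc, hAnc, hSnc⟩ := hncx f c hf rfl hnc
  have hbox := hbox (f c) hfc
  obtain rfl | hy0 := eq_or_ne y 0
  · obtain ⟨-, -, huy, huy0, hgy⟩ := hbox 0 hy
    refine (ResolvesFiberOrder.resolvableAt_of_normalCrossingAt H hI hpnc hAnc
      (fun i hi hiI => hf.continuousAt.eventually (hAzx i hi hiI)) hSnc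
      (huy.comp (f := fun z : (Fin m → ℝ) × ℝ => (f z.1, z.2)) (cmAt_prodMap_id hf 0))
      huy0).congr ?_
    filter_upwards [(cmAt_prodMap_id (M := M) hf 0).continuousAt.eventually hgy] with z hz
    rw [hz]
    simp only [weightedForm, smul_zero, monomialAt_zero]
  · refine H e le_rfl c y _ _ (hpx.comp hf) hpnc.not_eventuallyEq_zero ((hbox y hy).1.comp
      (f := fun z : (Fin m → ℝ) × ℝ => (f z.1, z.2)) (cmAt_prodMap_id hf y)) ?_
    have hinj := injOn_of_hasDerivAt_ne_zero ordConnected_Icc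
      (fun y hy => hasDerivAt_fiberDeriv e (hbox y hy).1) fun y hy => (hbox y hy).2.1
    exact fun h => hy0 (hinj hy ⟨by linarith, by linarith⟩ (h.trans h0x.symm))

theorem ResolvesDim.resolvesFiberOrder (N : ResolvesDim M m) (d : ℕ) :
    ResolvesFiberOrder M m d := by
  induction d using Nat.strong_induction_on with | _ d ih
  obtain _ | e := d
  · exact N.resolvesFiberOrder_zero
  intro a b p g hp hp0 hg hne
  by_cases h0 : fiberDeriv e g (a, b) = 0
  swap
  · exact ih e e.lt_succ_self a b p g hp hp0 hg h0
  obtain ⟨r, hr, rfl, hre⟩ := (hg.fiberDeriv e).exists_implicitFunction h0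
    (by
    rwa [← fiberDeriv_succ_eq hg (hg.fiberDeriv e).differentiableAt])
  have htranslate (k : ℕ) (x : Fin m → ℝ) :
      fiberDeriv k (fun z => g (z.1, r z.1 + z.2)) (x, 0) = fiberDeriv k g (x, r x) := by
    simp only [fiberDeriv, iteratedDeriv_comp_const_add k (fun y => g (x, y)), add_zero]
  refine .of_shear hr (N.resolvableAt_of_fiberDeriv_eq_zero
    (fun d hd => ih d (Nat.lt_succ_of_le hd)) hp hp0 (hg.comp_of_eq ?_ ?_) ?_ ?_)
  · exact (CMAt.id _).fst.prodMk
      ((hr.comp (f := fun z : (Fin m → ℝ) × ℝ => z.1) (CMAt.id _).fst).add (CMAt.id _).snd)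
  · rw [add_zero]
  · rwa [htranslate]
  · simpa only [htranslate] using hre

theorem ResolvesDim.succ (N : ResolvesDim M m) : ResolvesDim M (m + 1) := by
  intro a g hg hg0
  by_cases hga : g a = 0
  swap
  · exact .of_normalCrossingAt (.of_ne_zero hg hga)
  obtain ⟨v, d, hd⟩ := hg.exists_iteratedDeriv_ne_zero hg0
  have hv : v ≠ 0 := by
    rintro rfl
    simp [hga] at hd
  obtain ⟨L, hL⟩ := exists_continuousLinearEquiv_apply_eq hv
  obtain ⟨⟨x, y⟩, rfl⟩ := L.surjective a
  refine .of_equiv L ?_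
  have hfiber : fiberDeriv d (fun z => g (L z)) (x, y) ≠ 0 := by
    have hline (t : ℝ) : g (L (x, y) + t • v) = g (L (x, y + t)) := by
      rw [← hL, ← map_smul, ← map_add]
      simp
    simpa only [hline, iteratedDeriv_comp_const_add d fun y => g (L (x, y)), add_zero,
      fiberDeriv] using hd
  have hgL : CMAt M (fun z => g (L z)) (x, y) :=
    hg.comp (.of_clm (L : (Fin m → ℝ) × ℝ →L[ℝ] (Fin (m + 1) → ℝ)) (x, y))
  simpa only [one_mul] using N.resolvesFiberOrder d x y (fun _ => 1) _ (.const 1 x)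
    not_eventuallyEq_zero_one hgL hfiber

theorem resolvesDim : ∀ m, ResolvesDim M m
  | 0 => resolvesDim_zero
  | m + 1 => (resolvesDim m).succ

end Resolution

/-! ### Stabilization of zero sets -/

section EventuallyConst
variable {X Y α ι : Type*} {l : Filter α} {Z : α → Set X} {S T : Set X}

theorem eventuallyConst_inter_mono (h : EventuallyConst (fun j => S ∩ Z j) l) (hT : T ⊆ S) :
    EventuallyConst (fun j => T ∩ Z j) l := by
  simpa only [Function.comp_def, ← inter_assoc, inter_eq_self_of_subset_left hT] using
    h.comp (T ∩ ·)

theorem eventuallyConst_union_inter (hS : EventuallyConst (fun j => S ∩ Z j) l)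
    (hT : EventuallyConst (fun j => T ∩ Z j) l) :
    EventuallyConst (fun j => (S ∪ T) ∩ Z j) l := by
  simpa only [union_inter_distrib_right] using hS.comp₂ (· ∪ ·) hT

theorem eventuallyConst_iUnion_inter [Finite ι] {S : ι → Set X}
    (h : ∀ i, EventuallyConst (fun j => S i ∩ Z j) l) :
    EventuallyConst (fun j => (⋃ i, S i) ∩ Z j) l := by
  choose c hc using fun i => (h i).eventuallyEq_const
  refine eventuallyConst_iff_exists_eventuallyEq.2 ⟨⋃ i, c i, ?_⟩
  filter_upwards [eventually_all.2 hc] with j hj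
  rw [iUnion_inter]
  exact iUnion_congr hj

theorem eventuallyConst_image_inter {f : Y → X} {S : Set Y}
    (h : EventuallyConst (fun j => S ∩ f ⁻¹' Z j) l) :
    EventuallyConst (fun j => f '' S ∩ Z j) l := by
  simpa only [Function.comp_def, image_inter_preimage] using h.comp (f '' ·)

theorem exists_mem_nhdsSet_eventuallyConst [TopologicalSpace X] {K : Set X} (hK : IsCompact K)
    (h : ∀ x ∈ K, ∃ S ∈ 𝓝 x, EventuallyConst (fun j => S ∩ Z j) l) :
    ∃ W ∈ 𝓝ˢ K, EventuallyConst (fun j => W ∩ Z j) l := by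
  refine hK.induction_on (p := fun K => ∃ W ∈ 𝓝ˢ K, EventuallyConst (fun j => W ∩ Z j) l)
    ⟨∅, by simp, by simpa only [empty_inter] using .const ∅⟩ ?_ ?_ ?_
  · exact fun s t hst ⟨W, hW, hc⟩ => ⟨W, nhdsSet_mono hst hW, hc⟩
  · exact fun s t ⟨W, hW, hc⟩ ⟨W', hW', hc'⟩ =>
      ⟨W ∪ W', union_mem_nhdsSet hW hW', eventuallyConst_union_inter hc hc'⟩
  · intro x hx
    obtain ⟨S, hS, hc⟩ := h x hx
    exact ⟨interior S, mem_nhdsWithin_of_mem_nhds (interior_mem_nhds.2 hS), S,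
      subset_interior_iff_mem_nhdsSet.1 Subset.rfl, hc⟩

theorem antitone_inter_preimage [Preorder α] {U : Set X} {V : Set Y} {f : Y → X}
    (hZ : Antitone fun j => U ∩ Z j) (hf : MapsTo f V U) :
    Antitone fun j => V ∩ f ⁻¹' Z j :=
  fun _ _ hij _ hx => ⟨hx.1, (hZ hij ⟨hf hx.1, hx.2⟩).2⟩

end EventuallyConst

section Stabilization
variable {M : ℕ → ℝ} {m : ℕ}

/-- Local topological noetherianity in dimension `m`: near every point, decreasing sequences of zero
sets of functions of the class are eventually constant. -/
def StabilizesDim (M : ℕ → ℝ) (m : ℕ) : Prop :=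
  ∀ (a : Fin m → ℝ), ∀ U ∈ 𝓝 a, ∀ g : ℕ → (Fin m → ℝ) → ℝ, (∀ j, ∀ x ∈ U, CMAt M (g j) x) →
    (Antitone fun j => U ∩ {x | g j x = 0}) →
    ∃ S ∈ 𝓝 a, EventuallyConst (fun j => S ∩ {x | g j x = 0}) atTop

theorem stabilizesDim_zero : StabilizesDim M 0 := by
  intro a U hU g _ hZ
  obtain ⟨k, hk⟩ := WellFoundedLT.antitone_chain_condition hZ
  exact ⟨U, hU, eventuallyConst_atTop.2 ⟨k, fun j hj => (hk j hj).symm⟩⟩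

variable [IsWeightSequence M]

theorem cmAt_insertNth (i : Fin (m + 1)) (c : ℝ) (t : Fin m → ℝ) :
    CMAt M (fun t : Fin m → ℝ => (i.insertNth c t : Fin (m + 1) → ℝ)) t := by
  refine .pi fun k => ?_
  induction k using Fin.succAboveCases i with
  | x => simpa only [Fin.insertNth_apply_same] using .const c t
  | p l => simpa only [Fin.insertNth_apply_succAbove] using .coord l t

theorem StabilizesDim.of_normalCrossingAt (T : StabilizesDim M m) {c : Fin (m + 1) → ℝ}
    {U : Set (Fin (m + 1) → ℝ)} (hU : U ∈ 𝓝 c) {g : ℕ → (Fin (m + 1) → ℝ) → ℝ}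
    (hg : ∀ j, ∀ x ∈ U, CMAt M (g j) x) (hZ : Antitone fun j => U ∩ {x | g j x = 0}) {j₀ : ℕ}
    (hnc : NormalCrossingAt M (g j₀) c) :
    ∃ S ∈ 𝓝 c, EventuallyConst (fun j => S ∩ {x | g j x = 0}) atTop := by
  let s (i : Fin (m + 1)) (t : Fin m → ℝ) : Fin (m + 1) → ℝ := i.insertNth (c i) t
  have hs (i) : s i (i.removeNth c) = c := Fin.insertNth_self_removeNth i c
  have hslice (i : Fin (m + 1)) : ∃ S ∈ 𝓝 (i.removeNth c),
      EventuallyConst (fun j => S ∩ {t | g j (s i t) = 0}) atTop := by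
    refine T _ (s i ⁻¹' U) ?_ _ (fun j t ht => (hg j _ ht).comp (cmAt_insertNth i (c i) t))
      (antitone_inter_preimage hZ (mapsTo_preimage (s i) U))
    have hcont : ContinuousAt (s i) (i.removeNth c) :=
      (cmAt_insertNth (M := M) i (c i) _).continuousAt
    exact hcont.preimage_mem_nhds (by rwa [hs i])
  choose S hS hc using hslice
  let W : Set (Fin (m + 1) → ℝ) :=
    {x | x ∈ U ∧ (∀ i, i.removeNth x ∈ S i) ∧ (g j₀ x = 0 → ∃ i, x i = c i)}
  have hW : W ∈ 𝓝 c := by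
    refine (show ∀ᶠ x in 𝓝 c, x ∈ U from hU).and ((eventually_all.2 fun i => ?_).and
      hnc.eventually_exists_eq)
    have hcont : Continuous fun x : Fin (m + 1) → ℝ => i.removeNth x :=
      continuous_pi fun l => continuous_apply (i.succAbove l)
    exact hcont.tendsto c (hS i)
  have hWZ (j) (hj : j₀ ≤ j) : W ∩ ((⋃ i, s i '' S i) ∩ {x | g j x = 0}) =
      W ∩ {x | g j x = 0} := by
    refine Subset.antisymm (inter_subset_inter_right _ inter_subset_right) ?_
    rintro x ⟨hxW, hx⟩
    obtain ⟨i, hi⟩ := hxW.2.2 (hZ hj ⟨hxW.1, hx⟩).2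
    refine ⟨hxW, mem_iUnion.2 ⟨i, i.removeNth x, hxW.2.1 i, ?_⟩, hx⟩
    rw [← Fin.insertNth_self_removeNth i x, hi]
    simp only [s, Fin.removeNth_insertNth]
  exact ⟨W, hW, ((eventuallyConst_iUnion_inter fun i =>
    eventuallyConst_image_inter (hc i)).comp (W ∩ ·)).congr
      ((eventually_ge_atTop j₀).mono hWZ)⟩

end Stabilization

section Stabilization
variable {M : ℕ → ℝ} [IsQuasianalytic M] [IsDerivationClosed M] {m : ℕ}

theorem StabilizesDim.succ (T : StabilizesDim M m) : StabilizesDim M (m + 1) := by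
  intro a U hU g hg hZ
  by_cases hall : ∀ j, g j =ᶠ[𝓝 a] 0
  · obtain ⟨r, hr, hsub⟩ := Metric.mem_nhds_iff.1 hU
    refine ⟨Metric.ball a r, Metric.ball_mem_nhds a hr, ?_⟩
    have hball (j) : Metric.ball a r ∩ {x | g j x = 0} = Metric.ball a r :=
      inter_eq_self_of_subset_left fun x hx => CMAt.eq_zero_of_eventuallyEq_zero
        (convex_ball a r) (fun z hz => hg j z (hsub hz)) (Metric.mem_ball_self hr) (hall j) hx
    simpa only [hball] using .const _
  push Not at hall
  obtain ⟨j₀, hj₀⟩ := hall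
  obtain ⟨S, hS, hcov⟩ := resolvesDim (m + 1) a (g j₀) (hg j₀ a (mem_of_mem_nhds hU)) hj₀
  obtain ⟨C, hC, hCU, hcpt⟩ := local_compact_nhds (interior_mem_nhds.2 hU)
  refine ⟨S ∩ C, inter_mem hS hC, hcov.induction_inter
    (P := fun S => EventuallyConst (fun j => S ∩ {x | g j x = 0}) atTop) hcpt.isClosed ?_
    (by simpa only [empty_inter] using .const _) (fun _ _ _ _ => eventuallyConst_union_inter)
    fun _ _ hST hT => eventuallyConst_inter_mono hT hST⟩
  intro f K hK hf
  obtain ⟨W, hW, hc⟩ := exists_mem_nhdsSet_eventuallyConst (l := atTop)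
    (Z := fun j => {x | g j (f x) = 0}) hK fun c hcK => by
      obtain ⟨hcC, hfc, hnc⟩ := hf c hcK
      exact T.of_normalCrossingAt
        (hfc.eventually.and (hfc.continuousAt.eventually (mem_interior_iff_mem_nhds.1 (hCU hcC))))
        (fun j x hx => (hg j _ hx.2).comp hx.1)
        (antitone_inter_preimage hZ fun x hx => hx.2) hnc
  exact eventuallyConst_image_inter (eventuallyConst_inter_mono hc (subset_of_mem_nhdsSet hW))

theorem stabilizesDim : ∀ m, StabilizesDim M m
  | 0 => stabilizesDim_zero
  | m + 1 => (stabilizesDim m).succ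

theorem exists_isOpen_eventuallyConst {E : Type*} [NormedAddCommGroup E] [NormedSpace ℝ E]
    [FiniteDimensional ℝ E] {U K : Set E} (hU : IsOpen U) (hK : IsCompact K) (hKU : K ⊆ U)
    {g : ℕ → E → ℝ} (hg : ∀ j, ∀ x ∈ U, CMAt M (g j) x)
    (hZ : Antitone fun j => U ∩ {x | g j x = 0}) :
    ∃ W, IsOpen W ∧ K ⊆ W ∧ W ⊆ U ∧ EventuallyConst (fun j => W ∩ {x | g j x = 0}) atTop := by
  let e : E ≃L[ℝ] (Fin (Module.finrank ℝ E) → ℝ) := (Module.finBasis ℝ E).equivFunL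
  obtain ⟨W, hW, hc⟩ := exists_mem_nhdsSet_eventuallyConst (l := atTop)
    (Z := fun j => {x | g j x = 0}) hK fun x hx => by
      obtain ⟨S, hS, hc⟩ := stabilizesDim _ (e x) (e.symm ⁻¹' U)
        (e.symm.continuous.continuousAt.preimage_mem_nhds
          (by simpa only [e.symm_apply_apply] using hU.mem_nhds (hKU hx)))
        (fun j t => g j (e.symm t))
        (fun j t ht => (hg j _ ht).comp (.of_clm (e.symm : _ →L[ℝ] E) t))
        (antitone_inter_preimage hZ (mapsTo_preimage e.symm U))
      refine ⟨e.symm '' S, ?_, eventuallyConst_image_inter hc⟩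
      simpa only [e.symm_apply_apply] using e.symm.isOpenMap.image_mem_nhds hS
  refine ⟨interior W ∩ U, isOpen_interior.inter hU,
    subset_inter (subset_interior_iff_mem_nhdsSet.2 hW) hKU, inter_subset_right,
    eventuallyConst_inter_mono hc (inter_subset_left.trans interior_subset)⟩

end Stabilization

/-! ### Partial derivatives on Euclidean space -/

section PartialDerivatives
variable {ι W : Type} [Fintype ι] [DecidableEq ι] [NormedAddCommGroup W] [NormedSpace ℝ W]
  {U : Set (EuclideanSpace ℝ ι)} {f g : EuclideanSpace ℝ ι → W}

theorem foldr_replicate_pd (i : ι) (n : ℕ) (f : EuclideanSpace ℝ ι → W) :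
    (List.replicate n i).foldr pd f = (pd i)^[n] f := by
  induction n with
  | zero => rfl
  | succ n ih => rw [List.replicate_succ, List.foldr_cons, ih, Function.iterate_succ_apply']

theorem mderiv_eq_foldr (α : ι → ℕ) (f : EuclideanSpace ℝ ι → W) :
    mderiv α f =
      ((Finset.univ : Finset ι).toList.flatMap fun i => List.replicate (α i) i).foldr pd f := by
  simp only [List.foldr_flatMap, foldr_replicate_pd, mderiv]

theorem contDiffOn_pd (hU : IsOpen U) (hf : ContDiffOn ℝ ∞ f U) (i : ι) :
    ContDiffOn ℝ ∞ (pd i f) U :=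
  (hf.fderiv_of_isOpen hU (by simp)).clm_apply contDiffOn_const

theorem contDiffOn_foldr_pd (hU : IsOpen U) (hf : ContDiffOn ℝ ∞ f U) (l : List ι) :
    ContDiffOn ℝ ∞ (l.foldr pd f) U := by
  induction l with
  | nil => exact hf
  | cons i t ih => exact contDiffOn_pd hU ih i

theorem eqOn_pd (hU : IsOpen U) (h : EqOn f g U) (i : ι) : EqOn (pd i f) (pd i g) U := by
  intro x hx
  simp only [pd, (h.eventuallyEq_of_mem (hU.mem_nhds hx)).fderiv_eq]

theorem pd_pd_eq {x : EuclideanSpace ℝ ι} (hf : ContDiffAt ℝ ∞ f x) (i j : ι) :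
    pd i (pd j f) x =
      fderiv ℝ (fderiv ℝ f) x (EuclideanSpace.single i 1) (EuclideanSpace.single j 1) := by
  have hd : DifferentiableAt ℝ (fderiv ℝ f) x :=
    (hf.fderiv_right (m := ∞) (by simp)).differentiableAt (by simp)
  change fderiv ℝ (fun y => fderiv ℝ f y (EuclideanSpace.single j 1)) x _ = _
  rw [fderiv_clm_apply hd (differentiableAt_const _)]
  simp

theorem pd_comm {x : EuclideanSpace ℝ ι} (hf : ContDiffAt ℝ ∞ f x) (i j : ι) :
    pd i (pd j f) x = pd j (pd i f) x := by
  rw [pd_pd_eq hf, pd_pd_eq hf]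
  refine hf.isSymmSndFDerivAt ?_ _ _
  rw [minSmoothness_of_isRCLikeNormedField]
  exact WithTop.coe_le_coe.2 (le_top : (2 : ℕ∞) ≤ ⊤)

theorem eqOn_foldr_pd_of_perm (hU : IsOpen U) (hf : ContDiffOn ℝ ∞ f U) {l l' : List ι}
    (h : l.Perm l') : EqOn (l.foldr pd f) (l'.foldr pd f) U := by
  induction h with
  | nil => exact fun _ _ => rfl
  | cons i _ ih => exact eqOn_pd hU ih i
  | swap i j t =>
    exact fun x hx => pd_comm ((contDiffOn_foldr_pd hU hf t).contDiffAt (hU.mem_nhds hx)) j i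
  | trans _ _ h₁ h₂ => exact h₁.trans h₂

theorem foldr_pd_ofFn_eq_iteratedFDeriv (hU : IsOpen U) (hf : ContDiffOn ℝ ∞ f U) {k : ℕ}
    (v : Fin k → ι) : EqOn ((List.ofFn v).foldr pd f)
      (fun x => iteratedFDeriv ℝ k f x fun r => EuclideanSpace.single (v r) 1) U := by
  induction k with
  | zero =>
    intro x _
    simp
  | succ k ih =>
    intro x hx
    have hd : DifferentiableAt ℝ (iteratedFDeriv ℝ k f) x :=
      (hf.contDiffAt (hU.mem_nhds hx)).differentiableAt_iteratedFDeriv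
        (mod_cast WithTop.coe_lt_top k)
    rw [List.ofFn_succ, List.foldr_cons, eqOn_pd hU (ih fun r => v r.succ) _ hx]
    simp only [pd]
    rw [fderiv_continuousMultilinear_apply_const_apply hd, iteratedFDeriv_succ_apply_left]
    rfl

theorem perm_flatMap_replicate_count (l : List ι) :
    l.Perm ((Finset.univ : Finset ι).toList.flatMap fun i => List.replicate (l.count i) i) := by
  refine List.perm_iff_count.2 fun a => ?_
  have hcount : (List.count a ∘ fun i => List.replicate (l.count i) i) =
      fun i => if i = a then l.count i else 0 := by
    funext i
    simp [List.count_replicate]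
  rw [List.count_flatMap, hcount, Finset.sum_map_toList]
  simp

theorem mderiv_count_ofFn (hU : IsOpen U) (hf : ContDiffOn ℝ ∞ f U) {k : ℕ} (v : Fin k → ι) :
    EqOn (mderiv (fun i => (List.ofFn v).count i) f)
      (fun x => iteratedFDeriv ℝ k f x fun r => EuclideanSpace.single (v r) 1) U := by
  rw [mderiv_eq_foldr]
  exact (eqOn_foldr_pd_of_perm hU hf (perm_flatMap_replicate_count _).symm).trans
    (foldr_pd_ofFn_eq_iteratedFDeriv hU hf v)

theorem sum_count_ofFn {k : ℕ} (v : Fin k → ι) : ∑ i, (List.ofFn v).count i = k := by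
  simpa using Multiset.sum_count_eq_card (s := Finset.univ) (m := (List.ofFn v : Multiset ι))
    fun i _ => Finset.mem_univ i

theorem opNorm_le_card_pow_mul {k : ℕ} {C : ℝ}
    (T : ContinuousMultilinearMap ℝ (fun _ : Fin k => EuclideanSpace ℝ ι) W) (hC : 0 ≤ C)
    (h : ∀ v : Fin k → ι, ‖T fun r => EuclideanSpace.single (v r) 1‖ ≤ C) :
    ‖T‖ ≤ (Fintype.card ι : ℝ) ^ k * C := by
  refine T.opNorm_le_bound (by positivity) fun m => ?_
  have hm : m = fun r => ∑ i, m r i • (EuclideanSpace.single i 1 : EuclideanSpace ℝ ι) := by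
    funext r
    ext j
    simp [Pi.single_apply]
  have hT : T m = ∑ v : Fin k → ι, (∏ r, m r (v r)) •
      T fun r => EuclideanSpace.single (v r) 1 := by
    conv_lhs => rw [hm]
    simp only [T.map_sum, T.map_smul_univ]
  have hterm (v : Fin k → ι) : ‖(∏ r, m r (v r)) • T fun r => EuclideanSpace.single (v r) 1‖ ≤
      (∏ r, ‖m r‖) * C := by
    rw [norm_smul, norm_prod]
    gcongr with r
    · exact PiLp.norm_apply_le (m r) (v r)
    · exact h v
  rw [hT]
  calc ‖∑ v : Fin k → ι, (∏ r, m r (v r)) • T fun r => EuclideanSpace.single (v r) 1‖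
      ≤ ∑ _v : Fin k → ι, (∏ r, ‖m r‖) * C := norm_sum_le_of_le _ fun v _ => hterm v
    _ = (Fintype.card ι : ℝ) ^ k * C * ∏ r, ‖m r‖ := by
      simp only [Finset.sum_const, Finset.card_univ, Fintype.card_fun, Fintype.card_fin,
        nsmul_eq_mul, Nat.cast_pow]
      ring

theorem cmAt_of_crm {M : ℕ → ℝ} [IsWeightSequence M] {f : EuclideanSpace ℝ ι → ℝ} (hU : IsOpen U)
    (h : CRM M U f) {x : EuclideanSpace ℝ ι} (hx : x ∈ U) : CMAt M f x := by
  obtain ⟨hf, hb⟩ := h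
  obtain ⟨K, hK, hKU, hKc⟩ := local_compact_nhds (hU.mem_nhds hx)
  obtain ⟨A, B, hA, hB, hb⟩ := hb K hKU hKc
  refine .of_bound A (Fintype.card ι * B) ?_
  filter_upwards [hK] with y hy
  refine ⟨hf.contDiffAt (hU.mem_nhds (hKU hy)), fun k => ?_⟩
  have hMk : 0 < M k := IsWeightSequence.pos k
  have hbasis (v : Fin k → ι) :
      ‖iteratedFDeriv ℝ k f y fun r => EuclideanSpace.single (v r) 1‖ ≤ A * B ^ k * k ! * M k := by
    let α (i : ι) : ℕ := (List.ofFn v).count i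
    have hα : ∑ i, α i = k := sum_count_ofFn v
    have hfac : ∏ i, ((α i)! : ℝ) ≤ k ! := by
      have hdvd := Nat.prod_factorial_dvd_factorial_sum Finset.univ α
      rw [hα] at hdvd
      exact mod_cast Nat.le_of_dvd k.factorial_pos hdvd
    have hfac0 : 0 < ∏ i, ((α i)! : ℝ) := Finset.prod_pos fun i _ => by positivity
    have hbα := hb y hy α
    rw [hα, one_div, inv_mul_le_iff₀ hfac0] at hbα
    calc ‖iteratedFDeriv ℝ k f y fun r => EuclideanSpace.single (v r) 1‖
        = |mderiv α f y| := by rw [Real.norm_eq_abs, mderiv_count_ofFn hU hf v (hKU hy)]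
      _ ≤ (∏ i, ((α i)! : ℝ)) * (A * B ^ k * M k) := hbα
      _ ≤ k ! * (A * B ^ k * M k) := by gcongr
      _ = A * B ^ k * k ! * M k := by ring
  calc ‖iteratedFDeriv ℝ k f y‖
      ≤ (Fintype.card ι : ℝ) ^ k * (A * B ^ k * k ! * M k) :=
        opNorm_le_card_pow_mul _ (by positivity) hbasis
    _ = A * (Fintype.card ι * B) ^ k * k ! * M k := by ring

end PartialDerivatives

/-! ### Complex-valued classes -/

theorem cmAt_normSq_of_cmc {M : ℕ → ℝ} [IsWeightSequence M] {ι : Type} [Fintype ι] [DecidableEq ι]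
    {U : Set (EuclideanSpace ℝ ι)} {f : EuclideanSpace ℝ ι → ℂ} (hU : IsOpen U) (h : CMc M U f)
    {x : EuclideanSpace ℝ ι} (hx : x ∈ U) : CMAt M (fun x => Complex.normSq (f x)) x :=
  have hre := cmAt_of_crm hU h.1 hx
  have him := cmAt_of_crm hU h.2 hx
  (hre.mul hre).add (him.mul him)

theorem sum_normSq_eq_zero_iff {κ : Type*} [Fintype κ] {z : κ → ℂ} :
    ∑ i, Complex.normSq (z i) = 0 ↔ ∀ i, z i = 0 := by
  rw [Finset.sum_eq_zero_iff_of_nonneg fun i _ => Complex.normSq_nonneg (z i)]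
  simp only [Finset.mem_univ, true_imp_iff, Complex.normSq_eq_zero]

end DenjoyCarleman

open DenjoyCarleman Filter in
theorem stmt10_general {M : ℕ → ℝ} [IsQuasianalytic M] [IsDerivationClosed M] {ι : Type}
    [Fintype ι] [DecidableEq ι] {U K : Set (EuclideanSpace ℝ ι)} (hU : IsOpen U)
    {κ : ℕ → Type*} [∀ j, Finite (κ j)] {f : ∀ j, κ j → EuclideanSpace ℝ ι → ℂ}
    (hf : ∀ j i, CMc M U (f j i)) (hdec : Antitone fun j => {x ∈ U | ∀ i, f j i x = 0})
    (hK : IsCompact K) (hKU : K ⊆ U) :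
    ∃ W : Set (EuclideanSpace ℝ ι), IsOpen W ∧ K ⊆ W ∧ W ⊆ U ∧ ∃ k : ℕ, ∀ j : ℕ, k ≤ j →
      {x ∈ U | ∀ i, f j i x = 0} ∩ W = {x ∈ U | ∀ i, f k i x = 0} ∩ W := by
  have (j : ℕ) : Fintype (κ j) := Fintype.ofFinite _
  let g (j : ℕ) (x : EuclideanSpace ℝ ι) : ℝ := ∑ i, Complex.normSq (f j i x)
  have hg (j x) : g j x = 0 ↔ ∀ i, f j i x = 0 := sum_normSq_eq_zero_iff
  have hZ (j) : {x ∈ U | ∀ i, f j i x = 0} = U ∩ {x | g j x = 0} := by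
    simp only [hg]
    rfl
  simp only [hZ] at hdec ⊢
  obtain ⟨W, hW, hKW, hWU, hc⟩ := exists_isOpen_eventuallyConst hU hK hKU (g := g)
    (fun j x hx => .sum fun i _ => cmAt_normSq_of_cmc hU (hf j i) hx) hdec
  refine ⟨W, hW, hKW, hWU, ?_⟩
  simpa only [Set.inter_right_comm U, Set.inter_eq_self_of_subset_right hWU] using
    eventuallyConst_atTop.1 hc

/-- Topological Noetherianity: a decreasing sequence of zero sets of
finitely generated ideals of `C_M(U)` stabilizes in a neighborhood of any compact set. -/
theorem stmt10 {n : ℕ} (M : ℕ → ℝ)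
    (hpos : ∀ j, 0 < M j) (hmono : Monotone M) (hM0 : M 0 = 1)
    (hlog : ∀ j : ℕ, M (j+1) / M j ≤ M (j+2) / M (j+1))
    (hqa : ∑' k : ℕ, ENNReal.ofReal (M k / (((k : ℝ) + 1) * M (k+1))) = ⊤)
    (hder : ∃ C : ℝ, ∀ j : ℕ, 1 ≤ j → (M (j+1) / M j) ^ ((1 : ℝ) / j) ≤ C)
    (U : Set (EuclideanSpace ℝ (Fin n ⊕ Fin n))) (hUopen : IsOpen U) (hUconn : IsConnected U)
    (p : ℕ → ℕ)
    (f : (j : ℕ) → Fin (p j) → (EuclideanSpace ℝ (Fin n ⊕ Fin n) → ℂ))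
    (hf : ∀ j i, CMc M U (f j i))
    (hdec : ∀ j : ℕ, {x ∈ U | ∀ i, f (j+1) i x = 0} ⊆ {x ∈ U | ∀ i, f j i x = 0})
    (K : Set (EuclideanSpace ℝ (Fin n ⊕ Fin n))) (hKcpt : IsCompact K) (hKU : K ⊆ U) :
    ∃ W : Set (EuclideanSpace ℝ (Fin n ⊕ Fin n)), IsOpen W ∧ K ⊆ W ∧ W ⊆ U ∧
      ∃ k : ℕ, ∀ j : ℕ, k ≤ j →
        {x ∈ U | ∀ i, f j i x = 0} ∩ W = {x ∈ U | ∀ i, f k i x = 0} ∩ W := by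
  have hM : DenjoyCarleman.IsWeightSequence M := ⟨hM0, hmono, hlog⟩
  have : DenjoyCarleman.IsQuasianalytic M := { hM with tsum_eq_top := hqa }
  have : DenjoyCarleman.IsDerivationClosed M := { hM with exists_root_ratio_le := hder }
  exact stmt10_general hUopen hf (antitone_nat_of_succ_le hdec) hKcpt hKU
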